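/- Let m and d be integers with 0 ≤ m ≤ d−1, let p be a prime, for each 0 ≤ ℓ ≤ m let r_ℓ = p^{e_ℓ} be a power of p with integer e_ℓ ≥ 0, and let c_0, …, c_m ≥ 0 be integers. Set N_ℓ = (r_ℓ−1)(d+1+c_ℓ−m). For each 0 ≤ ℓ ≤ m and 0 ≤ j ≤ c_ℓ let Σ_{ℓ,j} be a subcomplex of Δ_{N_ℓ} that is Tverberg unavoidable (with respect to r_ℓ-partitions) with respect to every continuous map Δ_{N_ℓ} → ℝ^d, where Σ_{ℓ,0} = Δ_{N_ℓ}. Assume that p(d−m) is even, or m = 0. Then for every collection of continuous maps f_0: Δ_{N_0} → ℝ^d, …, f_m: Δ_{N_m} → ℝ^d there exist an m-dimensional affine subspace L of ℝ^d and, for each 0 ≤ ℓ ≤ m, r_ℓ pairwise disjoint faces σ_1^ℓ, …, σ_{r_ℓ}^ℓ, all belonging to the subcomplex Σ_{ℓ,0} ∩ ⋯ ∩ Σ_{ℓ,c_ℓ}, such that f_ℓ(σ_j^ℓ) ∩ L ≠ ∅ for all 1 ≤ j ≤ r_ℓ. (A constraint topological transversal Tverberg theorem.) -/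

import Mathlib

/-!
The theorem is reduced to the existence of a common zero of a system of equivariant functions, which
is supplied by a Borsuk–Ulam theorem for elementary abelian `p`-groups on products of joins of `ℤ/p`.

*The system.* Put `q = 1` if `p = 2` and `q = 2` otherwise, and suppose first that `m > 0`, so that
`d - m = q k`. A configuration consists of `k` complex functionals `z i` on `ℝ^d` (real ones if
`p = 2`), parametrized by joins of `ℤ/p`, and for each `ℓ` of `p ^ e ℓ` points `X ℓ g` of the simplex with
pairwise disjoint supports, indexed by `g : (ℤ/p)^{e ℓ}` and parametrized by a product of `e ℓ` joins of
total dimension at most `N ℓ` (`stair`, a staircase subdivision of the product). The functionals are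
required to be orthogonal and, for odd `p`, isotropic, so that their real and imaginary parts are `d - m`
linearly independent real functionals. The values of `z i ∘ f ℓ` on the points `X ℓ g` are required not to
depend on `g`, which is the vanishing of nontrivial Fourier coefficients over `(ℤ/p)^{e ℓ}`, nor on `ℓ`. Then
all points `f ℓ (X ℓ g)` lie on one `m`-dimensional affine subspace. Each constraint complex `Σ` contributes
one more real function, which is nonnegative and vanishes exactly on `Σ` (`consF`) and is required to be
constant on each configuration. If this constant were positive, the supports of the points would be
a Tverberg partition of a constant map with no face in `Σ`; so the constant is zero and all the supports
are faces of `Σ`. For `m = 0` there are no functionals, and the coordinates of `f` are treated as real functions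
instead, which is why no parity condition is needed. See `core`.

*The zero.* Each equation is equivariant with a character of the group, and the characters are triangular:
each has a leading coordinate. The numbers of equations and of levels match (`system_zero`), which leaves
`borsuk_ulam`. If the functions had no common zero, one could label the points by the sectors of the plane
containing the function values. Labels yield invariant cocycles (`eps`; a coboundary in degree one for
`p = 2`, its Bockstein in degree two for odd `p`) representing Euler classes, and the product of these cocycles
would vanish on all sufficiently small simplices. In the cohomology of the classifying space this product is
a product of linear forms, in which the monomial of the leading terms has a nonzero coefficient.
Instead of computing cohomology, this coefficient is extracted by explicit operators on cochains (`opD`), which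
are made of prism operators along cones from one join to the next one and of the elements `g - 1` and
`1 + g + ⋯ + g ^ (p - 1)` of the group ring. They are compatible with invariant coboundaries (`opD_d`), strip off
one Euler cocycle each (`opD_hit`, `opD_pass`), and only see small simplices when the cones are subdivided
finely (`Tr_opV`). So the coefficient is both zero and a product of nonzero elements of `ℤ/p`.
-/

open scoped BigOperators

noncomputable section

/-- The standard `N`-dimensional simplex, realized in Euclidean space `ℝ^{N+1}`. -/
def stdSimp (N : ℕ) : Set (EuclideanSpace ℝ (Fin (N + 1))) :=
  {x | (∀ i, 0 ≤ x i) ∧ ∑ i, x i = 1}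

/-- The face of the standard simplex spanned by the vertex set `S`. -/
def simpFace (N : ℕ) (S : Finset (Fin (N + 1))) : Set (EuclideanSpace ℝ (Fin (N + 1))) :=
  {x ∈ stdSimp N | ∀ i, x i ≠ 0 → i ∈ S}

/-- A subcomplex of the simplex `Δ_N`: a collection of nonempty vertex sets closed
under passing to nonempty subsets. -/
def IsSubcomplex (N : ℕ) (K : Set (Finset (Fin (N + 1)))) : Prop :=
  (∀ T ∈ K, T.Nonempty) ∧ ∀ T ∈ K, ∀ S : Finset (Fin (N + 1)), S ⊆ T → S.Nonempty → S ∈ K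

/-- A Tverberg `r`-partition of a map `f : Δ_N → ℝ^d`: a family of `r` pairwise disjoint
faces whose images under `f` have a common point. -/
def IsTverbergPartition {N d : ℕ}
    (f : EuclideanSpace ℝ (Fin (N + 1)) → EuclideanSpace ℝ (Fin d))
    (r : ℕ) (σ : Fin r → Finset (Fin (N + 1))) : Prop :=
  (∀ j, (σ j).Nonempty) ∧ (∀ j j', j ≠ j' → Disjoint (σ j) (σ j')) ∧
    (⋂ j, f '' simpFace N (σ j)).Nonempty

/-- A subcomplex `K` of `Δ_N` is Tverberg unavoidable with respect to `r`-partitions of `f`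
if every Tverberg `r`-partition of `f` has at least one face lying in `K`. -/
def TverbergUnavoidable {N d : ℕ}
    (f : EuclideanSpace ℝ (Fin (N + 1)) → EuclideanSpace ℝ (Fin d))
    (r : ℕ) (K : Set (Finset (Fin (N + 1)))) : Prop :=
  ∀ σ : Fin r → Finset (Fin (N + 1)), IsTverbergPartition f r σ → ∃ j, σ j ∈ K

namespace TT

/-! ### Cochains on ordered simplices -/

section Cochains
variable {V : Type*} {R : Type*} [CommRing R]

/-- The simplicial coboundary. Cochains are functions on lists of vertices, a list of length `n + 1`
being an ordered (possibly degenerate) `n`-simplex of the full simplex on `V`. Unfolding the recursion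
gives the alternating sum over the faces. -/
def coD : (List V → R) → List V → R
  | _, [] => 0
  | ω, x :: l => ω l - coD (fun t => ω (x :: t)) l

/-- The prism operator of two vertex maps: the alternating sum over `j` of the values on
`φ x₀, …, φ xⱼ, ψ xⱼ, …, ψ xₙ`. -/
def prism (φ ψ : V → V) : (List V → R) → List V → R
  | _, [] => 0
  | ω, x :: l => ω (φ x :: ψ x :: l.map ψ) - prism φ ψ (fun t => ω (φ x :: t)) l

/-- The cup product `a ⌣ b`, where `a` is used in degree `k` only: `a` on the first `k + 1` vertices
times `b` on the remaining ones, the vertex number `k` being shared. -/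
def cup : ℕ → (List V → R) → (List V → R) → List V → R
  | _, _, _, [] => 0
  | 0, a, b, x :: l => a [x] * b (x :: l)
  | k + 1, a, b, x :: l => cup k (fun t => a (x :: t)) b l

/-- The unit cochain: constantly `1` on vertices. -/
def unitC : List V → R := fun l => if l.length = 1 then 1 else 0

theorem coD_lin (c : R) (ω ω' : List V → R) (l : List V) :
    coD (fun t => c * ω t + ω' t) l = c * coD ω l + coD ω' l := by
  induction l generalizing ω ω' with
  | nil => simp [coD]
  | cons x l ih => simp only [coD]; rw [ih]; ring

theorem prism_lin (φ ψ : V → V) (c : R) (ω ω' : List V → R) (l : List V) :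
    prism φ ψ (fun t => c * ω t + ω' t) l = c * prism φ ψ ω l + prism φ ψ ω' l := by
  induction l generalizing ω ω' with
  | nil => simp [prism]
  | cons x l ih => simp only [prism]; rw [ih]; ring

theorem cup_lin_left (k : ℕ) (c : R) (a a' b : List V → R) (l : List V) :
    cup k (fun t => c * a t + a' t) b l = c * cup k a b l + cup k a' b l := by
  induction k generalizing a a' l with
  | zero => cases l <;> simp [cup]; ring
  | succ k ih => cases l with
    | nil => simp [cup]
    | cons x l => simp only [cup]; rw [ih]

theorem cup_lin_right (k : ℕ) (c : R) (a b b' : List V → R) (l : List V) :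
    cup k a (fun t => c * b t + b' t) l = c * cup k a b l + cup k a b' l := by
  induction k generalizing a l with
  | zero => cases l <;> simp [cup]; ring
  | succ k ih => cases l with
    | nil => simp [cup]
    | cons x l => simp only [cup]; rw [ih]

theorem cup_congr_left (k : ℕ) (a a' b : List V → R) (h : ∀ t, t.length = k + 1 → a t = a' t)
    (l : List V) : cup k a b l = cup k a' b l := by
  induction k generalizing a a' l with
  | zero => cases l <;> simp [cup]; rw [h _ (by simp)]
  | succ k ih => cases l with
    | nil => simp [cup]
    | cons x l => simp only [cup]; exact ih _ _ (fun t ht => h _ (by simp [ht])) l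

theorem coD_congr {ω ω' : List V → R} {l : List V} (h : ∀ t, t.length + 1 = l.length → ω t = ω' t) :
    coD ω l = coD ω' l := by
  induction l generalizing ω ω' with
  | nil => rfl
  | cons x l ih =>
    simp only [coD]
    rw [h l (by simp)]
    congr 1
    exact ih (fun t ht => h _ (by simp [ht]))

theorem coD_map (φ : V → V) (ω : List V → R) (l : List V) :
    coD (fun t => ω (t.map φ)) l = coD ω (l.map φ) := by
  induction l generalizing ω with
  | nil => rfl
  | cons x l ih => simp only [coD, List.map_cons]; rw [← ih]

theorem cup_map (φ : V → V) (k : ℕ) (a b : List V → R) (l : List V) :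
    cup k (fun t => a (t.map φ)) (fun t => b (t.map φ)) l = cup k a b (l.map φ) := by
  induction k generalizing a l with
  | zero => cases l <;> simp [cup]
  | succ k ih => cases l with
    | nil => simp [cup]
    | cons x l => simp only [cup, List.map_cons]; rw [← ih]

theorem prism_map (g φ ψ : V → V) (h1 : ∀ x, φ (g x) = g (φ x)) (h2 : ∀ x, ψ (g x) = g (ψ x))
    (ω : List V → R) (l : List V) :
    prism φ ψ (fun t => ω (t.map g)) l = prism φ ψ ω (l.map g) := by
  induction l generalizing ω with
  | nil => rfl
  | cons x l ih =>
    simp only [prism, List.map_cons, List.map_map, h1, h2]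
    rw [← ih]
    congr 4
    exact List.map_congr_left (fun y _ => by simp [h2])

/-- The prism operator is a chain homotopy between the pullbacks along `φ` and `ψ`. -/
theorem prism_homotopy (φ ψ : V → V) (ω : List V → R) (l : List V) :
    prism φ ψ (coD ω) l + coD (prism φ ψ ω) l = ω (l.map ψ) - ω (l.map φ) := by
  induction l generalizing ω with
  | nil => simp [prism, coD]
  | cons x l ih =>
    have h1 : (fun t => coD ω (φ x :: t)) =
        fun t => (-1 : R) * coD (fun s => ω (φ x :: s)) t + ω t := by
      funext t; simp only [coD]; ring
    have h2 : (fun t => prism φ ψ ω (x :: t)) =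
        fun t => (-1 : R) * prism φ ψ (fun s => ω (φ x :: s)) t
          + (fun s => ω (φ x :: ψ x :: s)) (t.map ψ) := by
      funext t; simp only [prism]; ring
    have e1 : prism φ ψ (coD ω) (x :: l) = coD ω (φ x :: ψ x :: l.map ψ)
        - prism φ ψ (fun t => coD ω (φ x :: t)) l := rfl
    have e2 : coD (prism φ ψ ω) (x :: l) = prism φ ψ ω l -
        coD (fun t => prism φ ψ ω (x :: t)) l := rfl
    have e3 : coD ω (φ x :: ψ x :: l.map ψ) = ω (ψ x :: l.map ψ) - (ω (φ x :: l.map ψ) -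
      coD (fun s => ω (φ x :: ψ x :: s)) (l.map ψ)) := rfl
    have e4 := ih (fun s => ω (φ x :: s))
    rw [e1, e2, h1, h2, prism_lin, coD_lin, coD_map ψ (fun s => ω (φ x :: ψ x :: s)), e3]
    simp only [List.map_cons]
    linear_combination e4

/-- The Leibniz rule. The hypothesis on `b []` is needed since lists may be empty. -/
theorem cup_leibniz (k : ℕ) (a b : List V → R) (hb : b [] = 0) (l : List V) :
    coD (cup k a b) l = cup (k + 1) (coD a) b l + (-1) ^ k * cup k a (coD b) l := by
  induction k generalizing a l with
  | zero =>
    cases l with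
    | nil => simp [cup, coD]
    | cons x l =>
      have h2 : (fun t => cup 0 a b (x :: t)) =
          fun t => a [x] * (fun s => b (x :: s)) t + (fun _ => (0 : R)) t := by
        funext t; simp [cup]
      have h0 : coD (fun _ => (0 : R)) l = 0 := by
        induction l with
        | nil => rfl
        | cons y l ih => simp only [coD]; rw [ih]; simp
      have e1 : coD (cup 0 a b) (x :: l) = cup 0 a b l - coD (fun t => cup 0 a b (x :: t)) l := rfl
      rw [e1, h2, coD_lin, h0]
      cases l with
      | nil => simp [cup, coD, hb]
      | cons y l => simp [cup, coD]; ring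
  | succ k ih =>
    cases l with
    | nil => simp [cup, coD]
    | cons x l =>
      have e1 : coD (cup (k+1) a b) (x :: l) = cup (k+1) a b l
        - coD (cup k (fun t => a (x :: t)) b) l := rfl
      have e2 : cup (k+1+1) (coD a) b (x :: l) = cup (k+1) (fun t => coD a (x :: t)) b l := rfl
      have e3 : cup (k+1) a (coD b) (x :: l) = cup k (fun t => a (x :: t)) (coD b) l := rfl
      have h1 : (fun t => coD a (x :: t)) =
          fun t => (-1 : R) * coD (fun s => a (x :: s)) t + a t := by
        funext t; simp only [coD]; ring
      rw [e1, e2, e3, ih, h1, cup_lin_left]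
      ring
end Cochains

/-! ### Slant operators on cochains -/

section Ops
variable {V : Type*} {p : ℕ}

/-- Linear operators on the mod `p` cochains of the full simplex on `V`. -/
abbrev Op (p : ℕ) (V : Type*) := Module.End (ZMod p) (List V → ZMod p)

/-- Pullback of cochains along a vertex map. -/
def pullL (g : V → V) : Op p V where
  toFun ω l := ω (l.map g)
  map_add' _ _ := rfl
  map_smul' _ _ := rfl

/-- The coboundary as a linear operator. -/
def dL : Op p V where
  toFun ω := coD ω
  map_add' a b := by funext l; have h := coD_lin 1 a b l; simp only [one_mul] at h; exact h
  map_smul' c a := by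
    funext l
    have h := coD_lin c a (fun _ => 0) l
    have h0 := coD_lin (-1) a a l
    simp only [add_zero, neg_one_mul, neg_add_cancel] at h h0
    rw [h0, add_zero] at h
    exact h

/-- The prism operator as a linear operator. -/
def prL (φ ψ : V → V) : Op p V where
  toFun ω := prism φ ψ ω
  map_add' a b := by funext l; have h := prism_lin φ ψ 1 a b l; simp only [one_mul] at h; exact h
  map_smul' c a := by
    funext l
    have h := prism_lin φ ψ c a (fun _ => 0) l
    have h0 := prism_lin φ ψ (-1) a a l
    simp only [add_zero, neg_one_mul, neg_add_cancel] at h h0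
    rw [h0, add_zero] at h
    exact h

/-- The cup product as a bilinear map. -/
def cupL (k : ℕ) : (List V → ZMod p) →ₗ[ZMod p] Op p V :=
  LinearMap.mk₂ (ZMod p) (cup k)
    (fun a a' b => by funext l; have h := cup_lin_left k 1 a a' b l; simp only [one_mul] at h; exact h)
    (fun c a b => by
      funext l
      have h := cup_lin_left k c a (fun _ => 0) b l
      have h0 := cup_lin_left k (-1) a a b l
      simp only [add_zero, neg_one_mul, neg_add_cancel] at h h0
      rw [h0, add_zero] at h
      exact h)
    (fun a b b' => by funext l; have h := cup_lin_right k 1 a b b' l; simp only [one_mul] at h; exact h)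
    (fun c a b => by
      funext l
      have h := cup_lin_right k c a b (fun _ => 0) l
      have h0 := cup_lin_right k (-1) a b b l
      simp only [add_zero, neg_one_mul, neg_add_cancel] at h h0
      rw [h0, add_zero] at h
      exact h)

@[simp] theorem pullL_apply (g : V → V) (ω : List V → ZMod p) (l) :
    pullL g ω l = ω (l.map g) := rfl
@[simp] theorem dL_apply (ω : List V → ZMod p) : dL ω = coD ω := rfl
@[simp] theorem prL_apply (φ ψ : V → V) (ω : List V → ZMod p) : prL φ ψ ω = prism φ ψ ω := rfl
@[simp] theorem cupL_apply (k : ℕ) (a b : List V → ZMod p) : cupL k a b = cup k a b := rfl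

theorem pullL_mul (g h : V → V) : (pullL g * pullL h : Op p V) = pullL (h ∘ g) := by
  ext ω l; simp

theorem pullL_d (g : V → V) : Commute (pullL g : Op p V) dL := by
  ext ω l; exact (coD_map g ω l).symm

theorem pullL_pr (g φ ψ : V → V) (h1 : ∀ x, φ (g x) = g (φ x)) (h2 : ∀ x, ψ (g x) = g (ψ x)) :
    Commute (pullL g : Op p V) (prL φ ψ) := by
  ext ω l; exact (prism_map g φ ψ h1 h2 ω l).symm

theorem pr_d (φ ψ : V → V) : (prL φ ψ * dL + dL * prL φ ψ : Op p V) = pullL ψ - pullL φ := by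
  ext ω l; simpa using prism_homotopy φ ψ ω l

theorem pullL_pow (g : V → V) (k : ℕ) : (pullL g ^ k : Op p V) = pullL (g^[k]) := by
  induction k with
  | zero => ext ω l; simp
  | succ k ih => rw [pow_succ, ih, pullL_mul, Function.iterate_succ']

theorem pullL_cup (g : V → V) (k : ℕ) (a b : List V → ZMod p) :
    pullL g (cup k a b) = cup k (pullL g a) (pullL g b) := by
  ext l; exact (cup_map g k a b l).symm

/-- The operator `g - 1`, for `g` acting by pullback. -/
def opA (g : V → V) : Op p V := pullL g - 1
/-- The norm `1 + g + ⋯ + g ^ (p - 1)`, for `g` acting by pullback. -/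
def opN (p : ℕ) (g : V → V) : Op p V := ∑ k ∈ Finset.range p, pullL g ^ k
/-- The sum of the prism operators of consecutive maps `φ₀, φ₁, …, φₙ`, a homotopy between the pullbacks
along `φ₀` and `φₙ`. -/
def opQ (p : ℕ) (φ : ℕ → V → V) (n : ℕ) : Op p V :=
  ∑ s ∈ Finset.range n, prL (φ (s + 1)) (φ s)

theorem opQ_d (φ : ℕ → V → V) (h0 : φ 0 = id) (n : ℕ) :
    (opQ p φ n * dL : Op p V) = 1 - pullL (φ n) - dL * opQ p φ n := by
  have h : (opQ p φ n * dL + dL * opQ p φ n : Op p V) = 1 - pullL (φ n) := by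
    rw [opQ, Finset.sum_mul, Finset.mul_sum, ← Finset.sum_add_distrib]
    simp only [pr_d]
    rw [Finset.sum_range_sub', h0]
    congr 1
    ext ω l; simp
  rw [← h]; abel

theorem opA_N (g : V → V) (hg : g^[p] = id) : (opA g * opN p g : Op p V) = 0 := by
  rw [opA, opN, mul_geom_sum, pullL_pow, hg, sub_eq_zero]
  ext ω l; simp

theorem opN_A (g : V → V) (hg : g^[p] = id) : (opN p g * opA g : Op p V) = 0 := by
  rw [opA, opN, geom_sum_mul, pullL_pow, hg, sub_eq_zero]
  ext ω l; simp

theorem opA_pull (g φ : V → V) (h : ∀ x, φ (g x) = φ x) : (opA g * pullL φ : Op p V) = 0 := by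
  have : φ ∘ g = φ := funext h
  rw [opA, sub_mul, pullL_mul, this]; simp

theorem opN_of_inv (g : V → V) (ω : List V → ZMod p) (h : pullL g ω = ω) : opN p g ω = 0 := by
  have h2 : ∀ k : ℕ, (pullL g ^ k : Op p V) ω = ω := by
    intro k
    induction k with
    | zero => simp
    | succ k ih => rw [pow_succ, Module.End.mul_apply, h, ih]
  rw [opN, LinearMap.sum_apply]
  simp only [h2]
  ext l; simp

theorem opN_pull (g φ : V → V) (h : ∀ x, φ (g x) = φ x) : (opN p g * pullL φ : Op p V) = 0 := by
  have : φ ∘ g = φ := funext h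
  apply LinearMap.ext
  intro ω
  rw [Module.End.mul_apply]
  apply opN_of_inv
  rw [← Module.End.mul_apply, pullL_mul, this]

theorem opA_d (g : V → V) : Commute (opA g : Op p V) dL := (pullL_d g).sub_left (Commute.one_left _)
theorem opN_d (g : V → V) : Commute (opN p g : Op p V) dL :=
  Commute.sum_left _ _ _ (fun _ _ => (pullL_d g).pow_left _)

/-- The slant operator of a free `ℤ/p`-generator `g`, built from `Q = opQ φ` and `Q' = opQ φ'` as
`(g - 1) Q` for `p = 2` and `(g - 1) Q N Q'` for odd `p`. When `φ` and `φ'` are discretized cones over the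
complex, it amounts to evaluation on the next one or two cells of the standard resolution, and it
lowers the degree by one or two respectively. -/
def opD (p : ℕ) (g : V → V) (φ φ' : ℕ → V → V) (n : ℕ) : Op p V :=
  if p = 2 then opA g * opQ p φ n else opA g * opQ p φ n * (opN p g * opQ p φ' n)

theorem opN_opD (g : V → V) (hg : g^[p] = id) (φ φ' : ℕ → V → V) (n : ℕ) :
    opN p g * opD p g φ φ' n = 0 := by
  unfold opD
  split_ifs
  · rw [← mul_assoc, opN_A g hg, zero_mul]
  · rw [← mul_assoc, ← mul_assoc (opN p g) (opA g), opN_A g hg, zero_mul, zero_mul]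

/-- On cochains of norm zero, such as `g`-invariant ones, `opD` commutes with the coboundary up to a
scalar: `Q` anticommutes with `d` up to `1 - φₙ`; the terms `1` are killed by `N η = 0` and
`(g - 1) N = 0` (for `p = 2` one has `N = g - 1`), and the terms `φₙ` by their `g`-invariance. -/
theorem opD_d (g : V → V) (hg : g^[p] = id) (φ φ' : ℕ → V → V) (n : ℕ)
    (h0 : φ 0 = id) (h0' : φ' 0 = id) (hn : ∀ x, φ n (g x) = φ n x) (hn' : ∀ x, φ' n (g x) = φ' n x)
    (η : List V → ZMod p) (hη : opN p g η = 0) :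
    ∃ σ : ZMod p, opD p g φ φ' n (dL η) = σ • dL (opD p g φ φ' n η) := by
  by_cases h2 : p = 2
  · refine ⟨-1, ?_⟩
    have hA : (opA g : Op p V) = opN p g := by
      subst h2
      rw [opA, opN, Finset.sum_range_succ, Finset.sum_range_one, pow_zero, pow_one, add_comm,
        sub_eq_add_neg]
      congr 1
      ext ω l; simp
    have key : opD p g φ φ' n * dL = opN p g - dL * opD p g φ φ' n := by
      rw [opD, if_pos h2, mul_assoc, opQ_d φ h0, mul_sub, mul_sub, opA_pull g _ hn, mul_one,
        ← mul_assoc, (opA_d g).eq, mul_assoc, sub_zero, ← hA]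
    have := congrArg (fun T : Op p V => T η) key
    simp only [Module.End.mul_apply, LinearMap.sub_apply, hη, zero_sub] at this
    rw [this]; simp
  · refine ⟨1, ?_⟩
    have key : opD p g φ φ' n * dL = opA g * opQ p φ n * opN p g + dL * opD p g φ φ' n := by
      rw [opD, if_neg h2]
      have e1 : opA g * opQ p φ n * (opN p g * opQ p φ' n) * dL =
          opA g * opQ p φ n * (opN p g * (opQ p φ' n * dL)) := by simp only [mul_assoc]
      have e2 : opN p g * (opQ p φ' n * dL) = opN p g - dL * (opN p g * opQ p φ' n) := by
        rw [opQ_d φ' h0', mul_sub, mul_sub, opN_pull g _ hn', mul_one, sub_zero, ← mul_assoc,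
          (opN_d g).eq, mul_assoc]
      have e3 : opA g * opQ p φ n * (dL * (opN p g * opQ p φ' n)) =
          opA g * (opQ p φ n * dL) * (opN p g * opQ p φ' n) := by simp only [mul_assoc]
      have e4 : opA g * (opQ p φ n * dL) = opA g - dL * (opA g * opQ p φ n) := by
        rw [opQ_d φ h0, mul_sub, mul_sub, opA_pull g _ hn, mul_one, sub_zero, ← mul_assoc,
          (opA_d g).eq, mul_assoc]
      rw [e1, e2, mul_sub, e3, e4, sub_mul, ← mul_assoc (opA g) (opN p g), opA_N g hg, zero_mul,
        zero_sub, sub_neg_eq_add, mul_assoc dL]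
    have := congrArg (fun T : Op p V => T η) key
    simp only [Module.End.mul_apply, LinearMap.add_apply, hη, map_zero, zero_add] at this
    rw [this]; simp

theorem opD_nil (g : V → V) (φ φ' : ℕ → V → V) (n : ℕ) (η : List V → ZMod p) :
    opD p g φ φ' n η [] = 0 := by
  unfold opD
  split_ifs <;> simp [Module.End.mul_apply, opA]

theorem opD_comm (g h : V → V) (φ φ' : ℕ → V → V) (n : ℕ)
    (hgh : ∀ x, g (h x) = h (g x)) (h1 : ∀ s x, φ s (h x) = h (φ s x))
    (h2 : ∀ s x, φ' s (h x) = h (φ' s x)) :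
    Commute (pullL h : Op p V) (opD p g φ φ' n) := by
  have hc : Commute (pullL h : Op p V) (pullL g) := by
    unfold Commute SemiconjBy
    rw [pullL_mul, pullL_mul]; congr 1; funext x; simp [hgh]
  have hA : Commute (pullL h : Op p V) (opA g) := hc.sub_right (Commute.one_right _)
  have hN : Commute (pullL h : Op p V) (opN p g) :=
    Commute.sum_right _ _ _ (fun _ _ => hc.pow_right _)
  have hQ : Commute (pullL h : Op p V) (opQ p φ n) :=
    Commute.sum_right _ _ _ (fun s _ => pullL_pr h _ _ (h1 _) (h1 _))
  have hQ' : Commute (pullL h : Op p V) (opQ p φ' n) :=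
    Commute.sum_right _ _ _ (fun s _ => pullL_pr h _ _ (h2 _) (h2 _))
  unfold opD
  split_ifs
  · exact hA.mul_right hQ
  · exact (hA.mul_right hQ).mul_right (hN.mul_right hQ')
end Ops

/-! ### Euler cocycles of labels -/

section Eps
variable {V : Type*} {p : ℕ}

/-- The failure of symmetric integer representatives to be additive; a multiple of `p`. -/
def bockZ (a b c : ZMod p) : ℤ := (b - a).valMinAbs + (c - b).valMinAbs - (c - a).valMinAbs

/-- The Bockstein cocycle: `bockZ` divided by `p`, then reduced modulo `p`. -/
def bock (a b c : ZMod p) : ZMod p := ((bockZ a b c / (p : ℤ) : ℤ) : ZMod p)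

theorem bockZ_dvd (a b c : ZMod p) : (p : ℤ) ∣ bockZ a b c := by
  rw [← ZMod.intCast_zmod_eq_zero_iff_dvd]
  simp [bockZ]

@[simp] theorem bock_left (a b : ZMod p) : bock a a b = 0 := by simp [bock, bockZ]
@[simp] theorem bock_right (a b : ZMod p) : bock a b b = 0 := by simp [bock, bockZ]

theorem bock_add (a b c t : ZMod p) : bock (a + t) (b + t) (c + t) = bock a b c := by
  simp [bock, bockZ]

theorem sum_range_zmod [NeZero p] {M : Type*} [AddCommMonoid M] (F : ZMod p → M) :
    ∑ k ∈ Finset.range p, F (k : ZMod p) = ∑ z, F z := by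
  refine Finset.sum_nbij' (fun k => (k : ZMod p)) ZMod.val ?_ ?_ ?_ ?_ ?_
  · simp
  · intro z _; simpa using ZMod.val_lt z
  · intro k hk; exact ZMod.val_cast_of_lt (by simpa using hk)
  · intro z _; simp
  · simp

/-- Averaging the Bockstein cocycle over the group recovers the degree-one class. -/
theorem sum_bock [NeZero p] (a b : ZMod p) :
    ∑ k ∈ Finset.range p, bock 0 (a + (k : ZMod p)) (b + (k : ZMod p)) = b - a := by
  have hp : (p : ℤ) ≠ 0 := by exact_mod_cast NeZero.ne p
  have h1 : ∀ a : ZMod p, ∑ k ∈ Finset.range p, (a + (k : ZMod p)).valMinAbs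
      = ∑ z : ZMod p, z.valMinAbs := by
    intro a
    rw [sum_range_zmod (fun z : ZMod p => (a + z).valMinAbs)]
    exact Equiv.sum_comp (Equiv.addLeft a) (fun z : ZMod p => z.valMinAbs)
  have h2 : (p : ℤ) * ∑ k ∈ Finset.range p, bockZ (0 : ZMod p) (a + (k : ZMod p)) (b + (k : ZMod p)) / (p : ℤ)
      = p * (b - a).valMinAbs := by
    rw [Finset.mul_sum]
    simp only [Int.mul_ediv_cancel' (bockZ_dvd _ _ _)]
    simp only [bockZ, sub_zero, add_sub_add_right_eq_sub]
    rw [Finset.sum_sub_distrib, Finset.sum_add_distrib, h1, h1]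
    simp
  have h3 := mul_left_cancel₀ hp h2
  have h4 := congrArg (Int.cast : ℤ → ZMod p) h3
  rw [ZMod.coe_valMinAbs, Int.cast_sum] at h4
  exact h4

/-- The two cochains attached to a label function `s : V → ℤ/p`, gathered in one function since their
degrees differ: the coboundary of `s` in degree one (used for `p = 2`) and its Bockstein in degree two
(used for odd `p`). If `s` is shifted by constants under a group action, both are invariant; they are
pullbacks of the generators of the cohomology of `ℤ/p`. -/
def eps (s : V → ZMod p) : List V → ZMod p
  | [x, y] => s y - s x
  | [x, y, z] => bock (s x) (s y) (s z)
  | _ => 0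

theorem eps_pull (s : V → ZMod p) (g : V → V) (t : ZMod p) (h : ∀ x, s (g x) = s x + t) :
    pullL g (eps s) = eps s := by
  ext l
  rcases l with _ | ⟨x, _ | ⟨y, _ | ⟨z, _ | ⟨w, l⟩⟩⟩⟩ <;> simp [eps, h, bock_add]

theorem eps_cocycle1 (s : V → ZMod p) (l : List V) (hl : l.length = 3) : coD (eps s) l = 0 := by
  rcases l with _ | ⟨x, _ | ⟨y, _ | ⟨z, _ | ⟨w, l⟩⟩⟩⟩ <;> simp [coD, eps] at hl ⊢

theorem eps_cocycle2 [NeZero p] (s : V → ZMod p) (l : List V) (hl : l.length = 4) :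
    coD (eps s) l = 0 := by
  have hp : (p : ℤ) ≠ 0 := by exact_mod_cast NeZero.ne p
  rcases l with _ | ⟨x, _ | ⟨y, _ | ⟨z, _ | ⟨w, _ | ⟨v, l⟩⟩⟩⟩⟩ <;> simp [coD, eps] at hl ⊢
  have h : ∀ a b c d : ZMod p, bockZ b c d / (p : ℤ) - (bockZ a c d / (p : ℤ) -
      (bockZ a b d / (p : ℤ) - bockZ a b c / (p : ℤ))) = 0 := by
    intro a b c d
    apply mul_left_cancel₀ hp
    simp only [mul_sub, Int.mul_ediv_cancel' (bockZ_dvd _ _ _)]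
    simp only [bockZ]; ring
  have := congrArg (Int.cast : ℤ → ZMod p) (h (s x) (s y) (s z) (s w))
  simpa [bock] using this

theorem prism_zero (φ ψ : V → V) (ω : List V → ZMod p) (h : ∀ y t, ω (φ y :: t) = 0)
    (l : List V) : prism φ ψ ω l = 0 := by
  induction l generalizing ω with
  | nil => rfl
  | cons x l ih => simp only [prism]; rw [h, ih (fun t => ω (φ x :: t)) (fun y t => h _ _), sub_zero]

theorem prism_zero_two (φ ψ : V → V) (ω : List V → ZMod p) (h : ∀ y z t, ω (y :: z :: t) = 0)
    (l : List V) : prism φ ψ ω l = 0 := by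
  induction l generalizing ω with
  | nil => rfl
  | cons x l ih => simp only [prism]; rw [h, ih (fun t => ω (φ x :: t)) (fun y z t => h _ _ _), sub_zero]

theorem prism_hit1 (φ ψ : V → V) (u : V → ZMod p) (hφ : ∀ x, u (φ x) = 0)
    (ω : List V → ZMod p) (l : List V) :
    prism φ ψ (cup 1 (eps u) ω) l = cup 0 (fun t => match t with | [x] => u x | _ => 0) ω (l.map ψ) := by
  cases l with
  | nil => rfl
  | cons x l =>
    simp only [prism]
    rw [prism_zero]
    · simp [cup, eps, hφ]
    · intro y t; simp [cup, eps, hφ]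

theorem prism_hit2 (φ ψ : V → V) (u : V → ZMod p) (hφ : ∀ x, u (φ x) = 0)
    (ω : List V → ZMod p) (l : List V) :
    prism φ ψ (cup 2 (eps u) ω) l =
      cup 1 (fun t => match t with | [x, y] => bock 0 (u x) (u y) | _ => 0) ω (l.map ψ) := by
  cases l with
  | nil => rfl
  | cons x l =>
    simp only [prism]
    rw [prism_zero]
    · cases l <;> simp [cup, eps, hφ]
    · intro y t; cases t <;> simp [cup, eps, hφ]

/-- If `φ₁, φ₂, …` have label `0`, only the first step contributes, and there only the
first term of the prism. -/
theorem opQ_hit1 (φ : ℕ → V → V) (n : ℕ) (hn : 1 ≤ n) (h0 : φ 0 = id) (u : V → ZMod p)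
    (hφ : ∀ s x, 1 ≤ s → u (φ s x) = 0) (ω : List V → ZMod p) :
    opQ p φ n (cup 1 (eps u) ω) = cup 0 (fun t => match t with | [x] => u x | _ => 0) ω := by
  obtain ⟨n, rfl⟩ : ∃ k, n = k + 1 := ⟨n - 1, by omega⟩
  ext l
  rw [opQ, LinearMap.sum_apply, Finset.sum_apply, Finset.sum_range_succ']
  simp only [prL_apply]
  rw [prism_hit1 _ _ u (fun x => hφ _ x (by omega)), h0, List.map_id, Finset.sum_eq_zero, zero_add]
  intro s _
  rw [prism_hit1 _ _ u (fun x => hφ _ x (by omega))]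
  cases l <;> simp [cup, hφ]

theorem opQ_hit2 (φ : ℕ → V → V) (n : ℕ) (hn : 1 ≤ n) (h0 : φ 0 = id) (u : V → ZMod p)
    (hφ : ∀ s x, 1 ≤ s → u (φ s x) = 0) (ω : List V → ZMod p) :
    opQ p φ n (cup 2 (eps u) ω) =
      cup 1 (fun t => match t with | [x, y] => bock 0 (u x) (u y) | _ => 0) ω := by
  obtain ⟨n, rfl⟩ : ∃ k, n = k + 1 := ⟨n - 1, by omega⟩
  ext l
  rw [opQ, LinearMap.sum_apply, Finset.sum_apply, Finset.sum_range_succ']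
  simp only [prL_apply]
  rw [prism_hit2 _ _ u (fun x => hφ _ x (by omega)), h0, List.map_id, Finset.sum_eq_zero, zero_add]
  intro s _
  rw [prism_hit2 _ _ u (fun x => hφ _ x (by omega))]
  rcases l with _ | ⟨x, _ | ⟨y, l⟩⟩ <;> simp [cup, hφ]

theorem opA_hit (g : V → V) (u : V → ZMod p) (hu : ∀ x, u (g x) = u x + 1)
    (ω : List V → ZMod p) (h : pullL g ω = ω) (h0 : ω [] = 0) :
    opA g (cup 0 (fun t => match t with | [x] => u x | _ => 0) ω) = ω := by
  ext l
  simp only [opA, LinearMap.sub_apply, Pi.sub_apply, pullL_apply, Module.End.one_apply]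
  cases l with
  | nil => simp [cup, h0]
  | cons x l =>
    have := congrFun h (x :: l)
    simp only [pullL_apply, List.map_cons] at this
    simp only [List.map_cons, cup, hu, this]
    ring

theorem iter_label (g : V → V) (u : V → ZMod p) (hu : ∀ x, u (g x) = u x + 1) (k : ℕ) (x : V) :
    u (g^[k] x) = u x + k := by
  induction k with
  | zero => simp
  | succ k ih => rw [Function.iterate_succ_apply', hu, ih]; push_cast; ring

theorem opN_hit [NeZero p] (g : V → V) (u : V → ZMod p) (hu : ∀ x, u (g x) = u x + 1)
    (ω : List V → ZMod p) (h : pullL g ω = ω) :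
    opN p g (cup 1 (fun t => match t with | [x, y] => bock 0 (u x) (u y) | _ => 0) ω)
      = cup 1 (eps u) ω := by
  have h2 : ∀ k : ℕ, (pullL g ^ k : Op p V) ω = ω := by
    intro k
    induction k with
    | zero => simp
    | succ k ih => rw [pow_succ, Module.End.mul_apply, h, ih]
  rw [opN, LinearMap.sum_apply]
  set γ : List V → ZMod p := fun t => match t with | [x, y] => bock 0 (u x) (u y) | _ => 0 with hγ
  have h3 : ∀ k : ℕ, (pullL g ^ k : Op p V) (cup 1 γ ω) = cupL 1 (pullL (g^[k]) γ) ω := by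
    intro k
    have := h2 k
    rw [pullL_pow] at this ⊢
    rw [pullL_cup, this]; rfl
  simp only [h3]
  rw [← LinearMap.sum_apply, ← map_sum]
  ext l
  rw [cupL_apply]
  apply cup_congr_left
  intro t ht
  rcases t with _ | ⟨x, _ | ⟨y, _ | ⟨z, t⟩⟩⟩ <;> simp at ht
  simp only [Finset.sum_apply, pullL_apply, List.map_cons, List.map_nil, hγ, iter_label g u hu]
  rw [sum_bock]; rfl

/-- `opD` undoes the cup product with the class of its own label. -/
theorem opD_hit [NeZero p] (g : V → V) (φ φ' : ℕ → V → V) (n : ℕ) (hn : 1 ≤ n)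
    (h0 : φ 0 = id) (h0' : φ' 0 = id) (u : V → ZMod p)
    (hφ : ∀ s x, 1 ≤ s → u (φ s x) = 0) (hφ' : ∀ s x, 1 ≤ s → u (φ' s x) = 0)
    (hu : ∀ x, u (g x) = u x + 1)
    (ω : List V → ZMod p) (h : pullL g ω = ω) (hnil : ω [] = 0) :
    opD p g φ φ' n (cup (if p = 2 then 1 else 2) (eps u) ω) = ω := by
  unfold opD
  split_ifs
  · rw [Module.End.mul_apply, opQ_hit1 φ n hn h0 u hφ, opA_hit g u hu ω h hnil]
  · rw [Module.End.mul_apply, Module.End.mul_apply, Module.End.mul_apply,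
      opQ_hit2 φ' n hn h0' u hφ', opN_hit g u hu ω h, opQ_hit1 φ n hn h0 u hφ, opA_hit g u hu ω h hnil]

theorem prism_pass0 (φ ψ : V → V) (a ω : List V → ZMod p) (ha : ∀ x, a [φ x] = a [x])
    (l : List V) : prism φ ψ (cup 0 a ω) l = cup 0 a (prism φ ψ ω) l := by
  cases l with
  | nil => rfl
  | cons x l =>
    have h := (prL φ ψ : Op p V).map_smul (a [x]) (fun t => ω (φ x :: t))
    have h' := congrFun h l
    simp only [cup, prism, ha, mul_sub]
    congr 1

theorem prism_pass1 (φ ψ : V → V) (a ω : List V → ZMod p) (ha : ∀ x, a [φ x, ψ x] = 0)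
    (hb : ∀ x y, a [φ x, φ y] = a [x, y]) (hc : ∀ x y, a [φ x, y] = a [x, y])
    (l : List V) : prism φ ψ (cup 1 a ω) l = - cup 1 a (prism φ ψ ω) l := by
  cases l with
  | nil => simp [prism, cup]
  | cons x l =>
    simp only [prism, cup]
    rw [prism_pass0 φ ψ (fun t => a (φ x :: t)) ω (fun y => by rw [hb, hc]), ha, zero_mul, zero_sub]
    congr 1
    apply cup_congr_left
    intro t ht
    obtain ⟨y, rfl⟩ := List.length_eq_one_iff.1 ht
    exact hc _ _

theorem prism_pass2 (φ ψ : V → V) (a ω : List V → ZMod p) (ha : ∀ x y, a [φ x, ψ x, y] = 0)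
    (ha' : ∀ x y, a [φ x, φ y, ψ y] = 0)
    (hb : ∀ x y z, a [φ x, φ y, z] = a [φ x, y, z]) (hc : ∀ x y z, a [φ x, y, z] = a [x, y, z])
    (hd : ∀ x y z, a [x, y, φ z] = a [x, y, z])
    (l : List V) : prism φ ψ (cup 2 a ω) l = cup 2 a (prism φ ψ ω) l := by
  cases l with
  | nil => simp [prism, cup]
  | cons x l =>
    simp only [prism, cup]
    rw [prism_pass1 φ ψ (fun t => a (φ x :: t)) ω (fun y => ha' _ _) (fun y z => by rw [hb, hd])
      (fun y z => by rw [hb])]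
    have : cup 0 (fun t => a (φ x :: ψ x :: t)) ω (List.map ψ l) = 0 := by
      cases l <;> simp [cup, ha]
    rw [this, zero_sub, neg_neg]
    apply cup_congr_left
    intro t ht
    obtain ⟨y, z, rfl⟩ := List.length_eq_two.1 ht
    exact hc _ _ _

theorem opQ_pass (φ : ℕ → V → V) (n : ℕ) (u : V → ZMod p) (hu : ∀ s x, u (φ s x) = u x)
    (ω : List V → ZMod p) :
    opQ p φ n (cup 1 (eps u) ω) = - cup 1 (eps u) (opQ p φ n ω) ∧
    opQ p φ n (cup 2 (eps u) ω) = cup 2 (eps u) (opQ p φ n ω) := by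
  constructor
  · have : - cup 1 (eps u) (opQ p φ n ω) = - cupL 1 (eps u) (opQ p φ n ω) := rfl
    rw [this, opQ, LinearMap.sum_apply, LinearMap.sum_apply, map_sum, ← Finset.sum_neg_distrib]
    refine Finset.sum_congr rfl (fun s _ => ?_)
    ext l
    exact prism_pass1 _ _ _ ω (by simp [eps, hu]) (by simp [eps, hu]) (by simp [eps, hu]) l
  · have : cup 2 (eps u) (opQ p φ n ω) = cupL 2 (eps u) (opQ p φ n ω) := rfl
    rw [this, opQ, LinearMap.sum_apply, LinearMap.sum_apply, map_sum]
    refine Finset.sum_congr rfl (fun s _ => ?_)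
    ext l
    exact prism_pass2 _ _ _ ω (by simp [eps, hu]) (by simp [eps, hu]) (by simp [eps, hu])
      (by simp [eps, hu]) (by simp [eps, hu]) l

theorem pullL_pass (g : V → V) (k : ℕ) (a : List V → ZMod p) (ha : pullL g a = a) :
    Commute (pullL g : Op p V) (cupL k a) := by
  apply LinearMap.ext; intro ω
  simp only [Module.End.mul_apply, cupL_apply]
  rw [pullL_cup, ha]

/-- `opD` commutes with the cup product by the class of a label that is constant along the cones and
invariant under `g`. The signs cancel: for odd `p` the class has even degree, and for `p = 2` they are
irrelevant. -/
theorem opD_pass (g : V → V) (φ φ' : ℕ → V → V) (n : ℕ) (u : V → ZMod p)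
    (hφ : ∀ s x, u (φ s x) = u x) (hφ' : ∀ s x, u (φ' s x) = u x) (hu : ∀ x, u (g x) = u x)
    (ω : List V → ZMod p) :
    opD p g φ φ' n (cup (if p = 2 then 1 else 2) (eps u) ω) =
      cup (if p = 2 then 1 else 2) (eps u) (opD p g φ φ' n ω) := by
  have hg : pullL g (eps u) = eps u := eps_pull u g 0 (by simp [hu])
  have hA : ∀ k, Commute (opA g : Op p V) (cupL k (eps u)) := fun k =>
    (pullL_pass g k _ hg).sub_left (Commute.one_left _)
  have hN : ∀ k, Commute (opN p g : Op p V) (cupL k (eps u)) := fun k =>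
    Commute.sum_left _ _ _ (fun _ _ => (pullL_pass g k _ hg).pow_left _)
  have hA' : ∀ k (ω : List V → ZMod p), opA g (cup k (eps u) ω) = cup k (eps u) (opA g ω) :=
    fun k ω => congrArg (fun T : Op p V => T ω) (hA k).eq
  have hN' : ∀ k (ω : List V → ZMod p), opN p g (cup k (eps u) ω) = cup k (eps u) (opN p g ω) :=
    fun k ω => congrArg (fun T : Op p V => T ω) (hN k).eq
  unfold opD
  split_ifs with h2
  · subst h2
    rw [Module.End.mul_apply, Module.End.mul_apply, (opQ_pass φ n u hφ ω).1, map_neg, hA']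
    ext l
    simp only [Pi.neg_apply]
    exact ZMod.neg_eq_self_mod_two _
  · simp only [Module.End.mul_apply]
    rw [(opQ_pass φ' n u hφ' _).2, hN', (opQ_pass φ n u hφ _).2, hA']

theorem opD_unit (g : V → V) (φ φ' : ℕ → V → V) (n : ℕ) : opD p g φ φ' n unitC = 0 := by
  have hQ : ∀ φ : ℕ → V → V, opQ p φ n unitC = 0 := by
    intro φ
    rw [opQ, LinearMap.sum_apply]
    refine Finset.sum_eq_zero (fun s _ => ?_)
    ext l
    exact prism_zero_two _ _ _ (by simp [unitC]) l
  unfold opD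
  split_ifs <;> simp [Module.End.mul_apply, hQ]

end Eps

/-! ### Evaluation of products of Euler cocycles -/

section Block
variable {V : Type*} {p : ℕ} {I J : Type*} [Fintype I] [DecidableEq I]

/-- The degree of the Euler class used: `1` for `p = 2` (real characters) and `2` for odd `p`. -/
def qq (p : ℕ) : ℕ := if p = 2 then 1 else 2

/-- The properties of `opD` for the `i`-th coordinate of a `(ℤ/p)^I`-action that are used in the
evaluation of products of Euler classes. -/
structure GoodOp (g : I → V → V) (u : I → V → ZMod p) (i : I) (D : Op p V) : Prop where
  comm : ∀ j, j ≠ i → Commute (pullL (g j)) D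
  bdry : ∀ η, opN p (g i) η = 0 → ∃ σ : ZMod p, D (dL η) = σ • dL (D η)
  norm : opN p (g i) * D = 0
  nil : ∀ η, D η [] = 0
  hit : ∀ ω, pullL (g i) ω = ω → ω [] = 0 → D (cup (qq p) (eps (u i)) ω) = ω
  pass : ∀ j, j ≠ i → ∀ ω, D (cup (qq p) (eps (u j)) ω) = cup (qq p) (eps (u j)) (D ω)
  unit : D unitC = 0

/-- A discretized cone in direction `i`: a path of maps from the identity to a `g i`-invariant map,
of `i`-th label zero after the first step, and compatible with all other coordinates. -/
structure IsCone (g : I → V → V) (u : I → V → ZMod p) (i : I) (φ : ℕ → V → V) (n : ℕ) : Prop where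
  zero : φ 0 = id
  label : ∀ s x, 1 ≤ s → u i (φ s x) = 0
  label' : ∀ j, j ≠ i → ∀ s x, u j (φ s x) = u j x
  comm : ∀ j, j ≠ i → ∀ s x, φ s (g j x) = g j (φ s x)
  fin : ∀ x, φ n (g i x) = φ n x

/-- Commuting maps `g i` of order dividing `p`, with labels `u i` shifted by `1` under `g i` and fixed under
the other generators. -/
structure IsAct (g : I → V → V) (u : I → V → ZMod p) : Prop where
  iter : ∀ i, (g i)^[p] = id
  comm : ∀ i j x, g i (g j x) = g j (g i x)
  self : ∀ i x, u i (g i x) = u i x + 1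
  other : ∀ i j x, i ≠ j → u j (g i x) = u j x

theorem goodOp_opD [NeZero p] {g : I → V → V} {u : I → V → ZMod p} (h : IsAct g u) {i : I}
    {φ φ' : ℕ → V → V} {n : ℕ} (hn : 1 ≤ n) (hφ : IsCone g u i φ n) (hφ' : IsCone g u i φ' n) :
    GoodOp g u i (opD p (g i) φ φ' n) where
  comm j hj := opD_comm _ _ _ _ _ (h.comm i j) (hφ.comm j hj) (hφ'.comm j hj)
  bdry := opD_d _ (h.iter i) _ _ _ hφ.zero hφ'.zero hφ.fin hφ'.fin
  norm := opN_opD _ (h.iter i) _ _ _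
  nil := opD_nil _ _ _ _
  hit := opD_hit _ _ _ _ hn hφ.zero hφ'.zero _ hφ.label hφ'.label (h.self i)
  pass j hj := opD_pass _ _ _ _ _ (hφ.label' j hj) (hφ'.label' j hj)
    (fun x => h.other i j x (Ne.symm hj))
  unit := opD_unit _ _ _ _

/-- The standard cocycle of the character `a`, a combination of the classes of the coordinates. -/
def stdE (u : I → V → ZMod p) (a : I → ZMod p) : List V → ZMod p := ∑ i, a i • eps (u i)

/-- The iterated cup product of the cochains `e j`, for `j` in the list `js`, applied to `ω`. -/
def pc (e : J → List V → ZMod p) (js : List J) (ω : List V → ZMod p) : List V → ZMod p :=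
  js.foldr (fun j ω => cup (qq p) (e j) ω) ω

theorem pc_cons (e : J → List V → ZMod p) (j : J) (js : List J) (ω : List V → ZMod p) :
    pc e (j :: js) ω = cup (qq p) (e j) (pc e js ω) := rfl

theorem pc_append (e : J → List V → ZMod p) (js js' : List J) (ω : List V → ZMod p) :
    pc e (js ++ js') ω = pc e js (pc e js' ω) := List.foldr_append ..

theorem cup_nil (k : ℕ) (a b : List V → ZMod p) : cup k a b [] = 0 := by cases k <;> rfl

theorem pc_nil (e : J → List V → ZMod p) (js : List J) (ω : List V → ZMod p) (h : ω [] = 0) :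
    pc e js ω [] = 0 := by
  cases js with
  | nil => exact h
  | cons j js => exact cup_nil _ _ _

theorem pc_inv (g : V → V) (e : J → List V → ZMod p) (js : List J) (ω : List V → ZMod p)
    (he : ∀ j, pullL g (e j) = e j) (h : pullL g ω = ω) : pullL g (pc e js ω) = pc e js ω := by
  induction js with
  | nil => exact h
  | cons j js ih => rw [pc_cons, pullL_cup, he, ih]

theorem unit_inv (g : V → V) : pullL g (unitC : List V → ZMod p) = unitC := by
  ext l; simp [unitC]

theorem stdE_inv {g : I → V → V} {u : I → V → ZMod p} (h : IsAct g u) (a : I → ZMod p) (i : I) :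
    pullL (g i) (stdE u a) = stdE u a := by
  rw [stdE, map_sum]
  refine Finset.sum_congr rfl (fun j _ => ?_)
  rw [map_smul]
  congr 1
  by_cases hj : i = j
  · subst hj; exact eps_pull _ _ 1 (h.self i)
  · exact eps_pull _ _ 0 (fun x => by rw [h.other i j x hj, add_zero])

theorem GoodOp.pass_std {g : I → V → V} {u : I → V → ZMod p} {i : I} {D : Op p V}
    (hD : GoodOp g u i D) (a : I → ZMod p) (ha : a i = 0) (ω : List V → ZMod p) :
    D (cup (qq p) (stdE u a) ω) = cup (qq p) (stdE u a) (D ω) := by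
  simp only [← cupL_apply, stdE, map_sum, map_smul, LinearMap.sum_apply, LinearMap.smul_apply]
  refine Finset.sum_congr rfl (fun j _ => ?_)
  by_cases hj : j = i
  · subst hj; simp [ha]
  · congr 1; exact hD.pass j hj ω

/-- The operator extracts the `i`-th coefficient of the first factor and commutes with the rest of it. -/
theorem GoodOp.apply_std {g : I → V → V} {u : I → V → ZMod p} {i : I} {D : Op p V}
    (hD : GoodOp g u i D) (a : I → ZMod p) (ω : List V → ZMod p)
    (h : pullL (g i) ω = ω) (h0 : ω [] = 0) :
    D (cup (qq p) (stdE u a) ω) = a i • ω + cup (qq p) (stdE u (Function.update a i 0)) (D ω) := by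
  have h1 : stdE u a = a i • eps (u i) + stdE u (Function.update a i 0) := by
    rw [stdE, stdE, ← Finset.add_sum_erase _ _ (Finset.mem_univ i),
      ← Finset.add_sum_erase _ (fun j => Function.update a i 0 j • eps (u j)) (Finset.mem_univ i)]
    simp only [Function.update_self, zero_smul, zero_add]
    congr 1
    refine Finset.sum_congr rfl (fun j hj => ?_)
    rw [Function.update_of_ne (Finset.ne_of_mem_erase hj)]
  rw [h1, ← cupL_apply, map_add, map_smul, LinearMap.add_apply, map_add, LinearMap.smul_apply,
    map_smul, cupL_apply, cupL_apply, hD.hit ω h h0, hD.pass_std _ (by simp)]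

theorem prod_pass_std {g : I → V → V} {u : I → V → ZMod p} {i : I} (Ds : List (Op p V))
    (hD : ∀ D ∈ Ds, GoodOp g u i D) (a : I → ZMod p) (ha : a i = 0) (ω : List V → ZMod p) :
    Ds.prod (cup (qq p) (stdE u a) ω) = cup (qq p) (stdE u a) (Ds.prod ω) := by
  induction Ds with
  | nil => rfl
  | cons D Ds ih =>
    rw [List.prod_cons, Module.End.mul_apply, Module.End.mul_apply,
      ih (fun D' h => hD D' (List.mem_cons_of_mem _ h)), (hD D (by simp)).pass_std a ha]

/-- As many operators of coordinate `i` as there are factors extract the product of the `i`-th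
coefficients, provided the operators kill `ω₀`. -/
theorem block {g : I → V → V} {u : I → V → ZMod p} (hg : IsAct g u) {i : I}
    (α : J → I → ZMod p) (ω₀ : List V → ZMod p) (h : pullL (g i) ω₀ = ω₀) (h0 : ω₀ [] = 0)
    (js : List J) : ∀ (Ds : List (Op p V)) (_ : ∀ D ∈ Ds, GoodOp g u i D)
    (_ : ∀ D ∈ Ds, D ω₀ = 0) (_ : js.length ≤ Ds.length),
    Ds.prod (pc (fun j => stdE u (α j)) js ω₀) =
      if js.length = Ds.length then (js.map (fun j => α j i)).prod • ω₀ else 0 := by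
  induction js with
  | nil =>
    intro Ds hD h1 hl
    rcases Ds.eq_nil_or_concat with rfl | ⟨Ds, D, rfl⟩
    · simp [pc]
    · rw [List.prod_concat, Module.End.mul_apply]
      have : D ω₀ = 0 := h1 D (by simp)
      simp [pc, this]
  | cons j js ih =>
    intro Ds hD h1 hl
    rcases Ds.eq_nil_or_concat with rfl | ⟨Ds, D, rfl⟩
    · simp at hl
    · have hD' : ∀ D ∈ Ds, GoodOp g u i D := fun D' h => hD D' (by simp [h])
      have h1' : ∀ D ∈ Ds, D ω₀ = 0 := fun D' h => h1 D' (by simp [h])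
      have e1 := ih (Ds.concat D) hD h1 (by simp at hl ⊢; omega)
      rw [if_neg (by simp at hl ⊢; omega), List.prod_concat, Module.End.mul_apply] at e1
      rw [List.prod_concat, Module.End.mul_apply, pc_cons, (hD D (by simp)).apply_std _ _
        (pc_inv _ _ _ _ (fun j => stdE_inv hg _ i) h) (pc_nil _ _ _ h0), map_add, map_smul,
        prod_pass_std Ds hD' _ (by simp), e1, ih Ds hD' h1' (by simp at hl; omega)]
      have : cup (qq p) (stdE u (Function.update (α j) i 0)) 0 = 0 :=
        (cupL (qq p) (stdE u (Function.update (α j) i 0))).map_zero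
      rw [this, add_zero]
      simp only [List.length_cons, List.length_concat, add_left_inj, List.map_cons, List.prod_cons,
        smul_ite, smul_zero, smul_smul]

/-- The composite of the operators of all coordinates in the given list, those of the head acting
first. -/
def opDD (Ds : I → List (Op p V)) : List I → Op p V
  | [] => 1
  | i :: is => opDD Ds is * (Ds i).prod

/-- The total operator evaluates a product of standard cocycles of triangular characters to the product
of their leading coefficients. -/
theorem opDD_std {g : I → V → V} {u : I → V → ZMod p} (hg : IsAct g u)
    (α : J → I → ZMod p) (Ds : I → List (Op p V)) (hD : ∀ i, ∀ D ∈ Ds i, GoodOp g u i D)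
    (js : I → List J) (hlen : ∀ i, (js i).length = (Ds i).length) (is : List I)
    (his : is.Pairwise (fun i i' => ∀ j ∈ js i', α j i = 0)) :
    opDD Ds is (pc (fun j => stdE u (α j)) (is.flatMap js) unitC) =
      (is.map (fun i => ((js i).map (fun j => α j i)).prod)).prod • unitC := by
  induction is with
  | nil => simp [opDD, pc]
  | cons i is ih =>
    rw [List.pairwise_cons] at his
    have hz : ∀ D ∈ Ds i, ∀ js' : List J, (∀ j ∈ js', α j i = 0) →
        D (pc (fun j => stdE u (α j)) js' unitC) = 0 := by
      intro D h js' hjs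
      induction js' with
      | nil => exact (hD i D h).unit
      | cons j js' ih' =>
        rw [pc_cons, (hD i D h).pass_std _ (hjs j (by simp)),
          ih' (fun j hj => hjs j (by simp [hj]))]
        exact (cupL (qq p) (stdE u (α j))).map_zero
    rw [List.flatMap_cons, pc_append, opDD, Module.End.mul_apply,
      block hg α _ (pc_inv _ _ _ _ (fun j => stdE_inv hg _ i) (unit_inv _))
        (pc_nil _ _ _ (by simp [unitC])) (js i) (Ds i) (hD i) ?_ (hlen i).le, if_pos (hlen i),
      map_smul, ih his.2, smul_smul, List.map_cons, List.prod_cons]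
    intro D h
    apply hz D h
    intro j hj
    rw [List.mem_flatMap] at hj
    obtain ⟨i', hi', hj⟩ := hj
    exact his.1 i' hi' j hj

theorem opN_comm_of {g : V → V} {D : Op p V} (h : Commute (pullL g) D) :
    Commute (opN p g) D := Commute.sum_left _ _ _ (fun _ _ => h.pow_left _)

theorem prod_bdry {g : I → V → V} {u : I → V → ZMod p} {i : I} (Ds : List (Op p V))
    (hD : ∀ D ∈ Ds, GoodOp g u i D) (η : List V → ZMod p) (hη : opN p (g i) η = 0) :
    opN p (g i) (Ds.prod η) = 0 ∧ ∃ σ : ZMod p, Ds.prod (dL η) = σ • dL (Ds.prod η) := by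
  induction Ds with
  | nil => exact ⟨by simpa using hη, 1, by simp⟩
  | cons D Ds ih =>
    obtain ⟨h1, σ, h2⟩ := ih (fun D' h => hD D' (by simp [h]))
    have hd := hD D (by simp)
    obtain ⟨σ', h3⟩ := hd.bdry _ h1
    constructor
    · rw [List.prod_cons, Module.End.mul_apply, ← Module.End.mul_apply, hd.norm]; rfl
    · refine ⟨σ * σ', ?_⟩
      rw [List.prod_cons, Module.End.mul_apply, Module.End.mul_apply, h2, map_smul, h3, smul_smul]

/-- The total operator maps coboundaries of cochains of norm zero to coboundaries. -/
theorem opDD_bdry {g : I → V → V} {u : I → V → ZMod p}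
    (Ds : I → List (Op p V)) (hD : ∀ i, ∀ D ∈ Ds i, GoodOp g u i D)
    (is : List I) (his : is.Nodup) (η : List V → ZMod p) (hη : ∀ i ∈ is, opN p (g i) η = 0)
    (h0 : η [] = 0) :
    opDD Ds is η [] = 0 ∧ ∃ σ : ZMod p, opDD Ds is (dL η) = σ • dL (opDD Ds is η) := by
  induction is generalizing η with
  | nil => exact ⟨h0, 1, by simp [opDD]⟩
  | cons i is ih =>
    rw [List.nodup_cons] at his
    obtain ⟨h1, σ, h2⟩ := prod_bdry (Ds i) (hD i) η (hη i (by simp))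
    have hnil : ((Ds i).prod η) [] = 0 := by
      rcases hds : Ds i with _ | ⟨D, L⟩
      · exact h0
      · rw [List.prod_cons, Module.End.mul_apply]
        exact (hD i D (by simp [hds])).nil _
    have hN : ∀ j ∈ is, opN p (g j) ((Ds i).prod η) = 0 := by
      intro j hj
      have hc : Commute (opN p (g j)) (Ds i).prod := by
        apply Commute.list_prod_right
        intro D hd
        exact opN_comm_of ((hD i D hd).comm j (fun h => his.1 (h ▸ hj)))
      rw [← Module.End.mul_apply, hc.eq, Module.End.mul_apply, hη j (by simp [hj]), map_zero]
    obtain ⟨h3, σ', h4⟩ := ih his.2 _ hN hnil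
    refine ⟨h3, σ * σ', ?_⟩
    rw [opDD, Module.End.mul_apply, Module.End.mul_apply, h2, map_smul, h4, smul_smul]

/-- For a label `s` shifted by the character `a`, an invariant cochain whose coboundary is the difference
of `eps s` and the standard cocycle of `a`. As in `eps`, the degree-zero part serves `p = 2` and the
degree-one part serves odd `p`. -/
def etaC (s : V → ZMod p) (u : I → V → ZMod p) (a : I → ZMod p) : List V → ZMod p
  | [x] => s x - ∑ i, a i * u i x
  | [x, y] => ((((s y - s x).valMinAbs - ∑ i, (a i).valMinAbs * (u i y - u i x).valMinAbs
      - ((s y - ∑ i, a i * u i y).valMinAbs - (s x - ∑ i, a i * u i x).valMinAbs)) / (p : ℤ) : ℤ) :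
        ZMod p)
  | _ => 0

theorem etaC_inv {g : I → V → V} {u : I → V → ZMod p} (hg : IsAct g u) (s : V → ZMod p)
    (a : I → ZMod p) (hs : ∀ i x, s (g i x) = s x + a i) (i : I) :
    pullL (g i) (etaC s u a) = etaC s u a := by
  have hu : ∀ j x, u j (g i x) = u j x + if j = i then 1 else 0 := by
    intro j x
    split_ifs with h
    · subst h; exact hg.self _ x
    · rw [hg.other i j x (Ne.symm h), add_zero]
  ext l
  rcases l with _ | ⟨x, _ | ⟨y, _ | ⟨z, l⟩⟩⟩ <;>
    simp [etaC, hs, hu, mul_add, Finset.sum_add_distrib]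

theorem etaC_bdry [NeZero p] (u : I → V → ZMod p) (s : V → ZMod p)
    (a : I → ZMod p) (l : List V) (hl : l.length = qq p + 1) :
    coD (etaC s u a) l = eps s l - stdE u a l := by
  have hp : (p : ℤ) ≠ 0 := by exact_mod_cast NeZero.ne p
  unfold qq at hl
  split_ifs at hl
  · obtain ⟨x, y, rfl⟩ := List.length_eq_two.1 hl
    simp only [coD, etaC, stdE, Finset.sum_apply, Pi.smul_apply, eps, smul_eq_mul, mul_sub,
      Finset.sum_sub_distrib]
    ring
  · obtain ⟨x, y, z, rfl⟩ := List.length_eq_three.1 hl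
    set w : V → ℤ := fun x => (s x - ∑ i, a i * u i x).valMinAbs with hw
    set X : V → V → ℤ := fun x y => (s y - s x).valMinAbs - ∑ i, (a i).valMinAbs *
      (u i y - u i x).valMinAbs - (w y - w x) with hX
    have hdvd : ∀ x y, (p : ℤ) ∣ X x y := by
      intro x y
      rw [← ZMod.intCast_zmod_eq_zero_iff_dvd]
      simp only [hX, hw]
      push_cast
      simp only [mul_sub, Finset.sum_sub_distrib]
      ring
    have key : X y z / (p : ℤ) - (X x z / (p : ℤ) - X x y / (p : ℤ)) =
        bockZ (s x) (s y) (s z) / (p : ℤ) -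
          ∑ i, (a i).valMinAbs * (bockZ (u i x) (u i y) (u i z) / (p : ℤ)) := by
      apply mul_left_cancel₀ hp
      simp only [mul_sub, Int.mul_ediv_cancel' (hdvd _ _), Int.mul_ediv_cancel' (bockZ_dvd _ _ _),
        Finset.mul_sum]
      have : ∀ i, (p : ℤ) * ((a i).valMinAbs * (bockZ (u i x) (u i y) (u i z) / (p : ℤ))) =
          (a i).valMinAbs * bockZ (u i x) (u i y) (u i z) := by
        intro i
        rw [mul_left_comm, Int.mul_ediv_cancel' (bockZ_dvd _ _ _)]
      simp only [this]
      simp only [hX, bockZ, mul_add, mul_sub, Finset.sum_add_distrib, Finset.sum_sub_distrib]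
      ring
    have key' := congrArg (Int.cast : ℤ → ZMod p) key
    push_cast at key'
    have e1 : ∀ x y, etaC s u a [x, y] = ((X x y / (p : ℤ) : ℤ) : ZMod p) := fun x y => rfl
    simp only [coD, e1, stdE, Finset.sum_apply, Pi.smul_apply, eps, smul_eq_mul, sub_zero]
    exact key'

theorem eps_cocycle [NeZero p] (s : V → ZMod p) (l : List V) (hl : l.length = qq p + 2) :
    coD (eps s) l = 0 := by
  unfold qq at hl
  split_ifs at hl
  · exact eps_cocycle1 s l hl
  · exact eps_cocycle2 s l hl

theorem unit_cocycle : coD (unitC : List V → ZMod p) = 0 := by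
  ext l
  rcases l with _ | ⟨x, _ | ⟨y, l⟩⟩
  · rfl
  · simp [coD, unitC]
  · have h : ∀ (ω : List V → ZMod p) (l : List V), ω = 0 → coD ω l = 0 := by
      rintro _ l rfl
      exact congrFun (dL : Op p V).map_zero l
    simp only [coD, unitC, List.length_cons]
    rw [h]
    · simp
    · funext t; simp

theorem cup_left_zero (k : ℕ) (a b : List V → ZMod p) (h : ∀ t, t.length = k + 1 → a t = 0) :
    cup k a b = 0 := by
  ext l
  rw [cup_congr_left k a 0 b (by simpa using h)]
  have : (cupL k (0 : List V → ZMod p)) b l = 0 := by simp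
  exact this

theorem pc_cocycle [NeZero p] (s : J → V → ZMod p) (js : List J) :
    coD (pc (fun j => eps (s j)) js unitC) = 0 := by
  induction js with
  | nil => exact unit_cocycle
  | cons j js ih =>
    ext l
    rw [pc_cons, cup_leibniz _ _ _ (pc_nil _ _ _ (by simp [unitC])), ih,
      cup_left_zero (qq p + 1) (coD (eps (s j))) _ (fun t ht => eps_cocycle _ _ ht)]
    have : cup (qq p) (eps (s j)) 0 = 0 := (cupL (qq p) (eps (s j))).map_zero
    rw [this]; simp

theorem stdE_cocycle [NeZero p] (u : I → V → ZMod p) (a : I → ZMod p) (l : List V)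
    (hl : l.length = qq p + 2) : coD (stdE u a) l = 0 := by
  have : coD (stdE u a) = ∑ i, a i • dL (eps (u i)) := by
    rw [← dL_apply, stdE, map_sum]; simp
  rw [this, Finset.sum_apply]
  refine Finset.sum_eq_zero (fun i _ => ?_)
  rw [Pi.smul_apply, dL_apply, eps_cocycle _ _ hl, smul_zero]

/-- Products of the cocycles `eps (s j)` and of the standard cocycles of the same characters differ by
the coboundary of an invariant cochain. -/
theorem compare [NeZero p] {g : I → V → V} {u : I → V → ZMod p} (hg : IsAct g u)
    (α : J → I → ZMod p) (s : J → V → ZMod p) (hs : ∀ j i x, s j (g i x) = s j x + α j i)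
    (js : List J) : ∃ ξ : List V → ZMod p, ξ [] = 0 ∧ (∀ i, pullL (g i) ξ = ξ) ∧
      pc (fun j => eps (s j)) js unitC = pc (fun j => stdE u (α j)) js unitC + dL ξ := by
  induction js with
  | nil => exact ⟨0, rfl, fun i => map_zero _, by rw [map_zero, add_zero]; rfl⟩
  | cons j js ih =>
    obtain ⟨ξ, h0, hinv, hξ⟩ := ih
    obtain ⟨k, hk⟩ : ∃ k, qq p = k + 1 := by
      unfold qq; split_ifs
      · exact ⟨0, rfl⟩
      · exact ⟨1, rfl⟩
    set R := pc (fun j => eps (s j)) js (unitC : List V → ZMod p) with hR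
    set S := pc (fun j => stdE u (α j)) js (unitC : List V → ZMod p) with hS
    have hRinv : ∀ i, pullL (g i) R = R := fun i =>
      pc_inv _ _ _ _ (fun j => eps_pull _ _ _ (hs j i)) (unit_inv _)
    have hRnil : R [] = 0 := pc_nil _ _ _ (by simp [unitC])
    refine ⟨cup k (etaC (s j) u (α j)) R + (-1 : ZMod p) ^ (k + 1) • cup (k + 1) (stdE u (α j)) ξ, ?_, ?_, ?_⟩
    · simp [cup_nil]
    · intro i
      rw [map_add, map_smul, pullL_cup, pullL_cup, etaC_inv hg _ _ (hs j), hRinv,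
        stdE_inv hg, hinv]
    · rw [map_add, map_smul, pc_cons, pc_cons]
      have e1 : dL (cup k (etaC (s j) u (α j)) R) =
          cupL (k + 1) (eps (s j)) R - cupL (k + 1) (stdE u (α j)) R := by
        ext l
        rw [dL_apply, cup_leibniz k _ _ hRnil, hR, pc_cocycle, ← hR]
        have : cup k (etaC (s j) u (α j)) 0 = 0 := (cupL k (etaC (s j) u (α j))).map_zero
        rw [this, Pi.zero_apply, mul_zero, add_zero, ← LinearMap.sub_apply, ← map_sub, cupL_apply]
        apply cup_congr_left
        intro t ht
        rw [etaC_bdry u (s j) (α j) t (by rw [ht, hk])]; rfl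
      have e2 : dL (cup (k + 1) (stdE u (α j)) ξ) =
          (-1 : ZMod p) ^ (k + 1) • cupL (k + 1) (stdE u (α j)) (dL ξ) := by
        ext l
        rw [dL_apply, cup_leibniz (k + 1) _ _ h0, cup_left_zero (k + 1 + 1) (coD (stdE u (α j))) _
          (fun t ht => stdE_cocycle _ _ _ (by rw [ht, hk]))]
        simp
      have e3 : (-1 : ZMod p) ^ (k + 1) • ((-1 : ZMod p) ^ (k + 1) • cupL (k + 1) (stdE u (α j)) (dL ξ))
          = cupL (k + 1) (stdE u (α j)) (dL ξ) := by
        rw [smul_smul, ← mul_pow]; simp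
      rw [e1, e2, e3, hk, ← hR, ← hS, ← cupL_apply, ← cupL_apply, hξ, map_add, map_add]
      abel

/-- The total operator evaluates the product of the cocycles of arbitrary equivariant labels to the
product of the leading coefficients: by `compare` the product differs from the standard one by an
invariant coboundary, which is mapped to a coboundary and so vanishes on vertices. -/
theorem opDD_real [NeZero p] {g : I → V → V} {u : I → V → ZMod p} (hg : IsAct g u)
    (α : J → I → ZMod p) (s : J → V → ZMod p) (hs : ∀ j i x, s j (g i x) = s j x + α j i)
    (Ds : I → List (Op p V)) (hD : ∀ i, ∀ D ∈ Ds i, GoodOp g u i D)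
    (js : I → List J) (hlen : ∀ i, (js i).length = (Ds i).length) (is : List I) (hnd : is.Nodup)
    (his : is.Pairwise (fun i i' => ∀ j ∈ js i', α j i = 0)) (x₀ : V) :
    opDD Ds is (pc (fun j => eps (s j)) (is.flatMap js) unitC) [x₀] =
      (is.map (fun i => ((js i).map (fun j => α j i)).prod)).prod := by
  obtain ⟨ξ, h0, hinv, hξ⟩ := compare hg α s hs (is.flatMap js)
  obtain ⟨h1, σ, h2⟩ := opDD_bdry Ds hD is hnd ξ (fun i _ => opN_of_inv _ _ (hinv i)) h0
  rw [hξ, map_add, opDD_std hg α Ds hD js hlen is his, h2]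
  simp [coD, h1, unitC]

end Block

/-! ### Joins of `ℤ/p` and the locality of the operators -/

section Geo
variable {p : ℕ} [NeZero p]

/-- The join of `M + 1` copies of the discrete set `ℤ/p`, as nonnegative weights of total mass one with
at most one nonzero weight on each level. -/
def EJset (p M : ℕ) [NeZero p] : Set (Fin (M + 1) → ZMod p → ℝ) :=
  {y | (∀ l g, 0 ≤ y l g) ∧ ∑ l, ∑ g, y l g = 1 ∧ ∀ l g g', g ≠ g' → y l g * y l g' = 0}

/-- The join of `M + 1` copies of `ℤ/p` as a space. -/
abbrev EJ (p M : ℕ) [NeZero p] := ↥(EJset p M)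

theorem EJ_le_one {M : ℕ} (y : EJ p M) (l g) : y.1 l g ≤ 1 := by
  rw [← y.2.2.1]
  exact (Finset.single_le_sum (f := fun g => y.1 l g) (fun g _ => y.2.1 l g) (Finset.mem_univ g)).trans
    (Finset.single_le_sum (f := fun l => ∑ g, y.1 l g)
      (fun l _ => Finset.sum_nonneg (fun g _ => y.2.1 l g)) (Finset.mem_univ l))

instance EJ_compact (M : ℕ) : CompactSpace (EJ p M) := by
  rw [← isCompact_iff_compactSpace]
  have h1 : IsCompact (Set.pi Set.univ (fun _ : Fin (M + 1) =>
      Set.pi Set.univ (fun _ : ZMod p => Set.Icc (0 : ℝ) 1))) :=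
    isCompact_univ_pi (fun _ => isCompact_univ_pi (fun _ => isCompact_Icc))
  refine h1.of_isClosed_subset ?_ ?_
  · have e : EJset p M = (⋂ l, ⋂ g, {y | 0 ≤ y l g}) ∩ {y | ∑ l, ∑ g, y l g = 1} ∩
        (⋂ l, ⋂ g, ⋂ g', ⋂ (_ : g ≠ g'), {y | y l g * y l g' = 0}) := by
      ext y; simp [EJset, and_assoc]
    rw [e]
    refine (IsClosed.inter ?_ ?_).inter ?_
    · exact isClosed_iInter fun l => isClosed_iInter fun g =>
        isClosed_le continuous_const (by fun_prop)
    · exact isClosed_eq (by fun_prop) continuous_const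
    · exact isClosed_iInter fun l => isClosed_iInter fun g => isClosed_iInter fun g' =>
        isClosed_iInter fun _ => isClosed_eq (by fun_prop) continuous_const
  · intro y hy l _ g _
    exact ⟨hy.1 l g, EJ_le_one ⟨y, hy⟩ l g⟩

/-- The action of the generator of `ℤ/p`, rotating all levels. -/
def shiftE {M : ℕ} (y : EJ p M) : EJ p M :=
  ⟨fun l g => y.1 l (g - 1), fun l g => y.2.1 l _, by
    rw [← y.2.2.1]
    refine Finset.sum_congr rfl (fun l _ => ?_)
    exact Equiv.sum_comp (Equiv.subRight (1 : ZMod p)) (fun g => y.1 l g),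
    fun l g g' h => y.2.2.2 l _ _ (fun h' => h (sub_left_injective h'))⟩

theorem shiftE_apply {M : ℕ} (y : EJ p M) (l g) : (shiftE y).1 l g = y.1 l (g - 1) := rfl

theorem shiftE_iter {M : ℕ} (y : EJ p M) (k : ℕ) (l g) :
    (shiftE^[k] y).1 l g = y.1 l (g - k) := by
  induction k generalizing g with
  | zero => simp
  | succ k ih => rw [Function.iterate_succ_apply', shiftE_apply, ih, show g - 1 - (k : ZMod p) = g - ((k + 1 : ℕ) : ZMod p) by push_cast; ring]

theorem shiftE_iter_p {M : ℕ} (y : EJ p M) : shiftE^[p] y = y := by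
  apply Subtype.ext; funext l g
  rw [shiftE_iter]; simp

/-- The vertex of the join given by the element `0` of level `t`. -/
def apexE {M : ℕ} (t : Fin (M + 1)) : EJ p M :=
  ⟨fun l g => if l = t ∧ g = 0 then 1 else 0, fun l g => by beta_reduce; split_ifs <;> norm_num, by
    rw [Finset.sum_eq_single t, Finset.sum_eq_single 0] <;> simp +contextual,
    fun l g g' h => by
      by_cases h1 : g = 0
      · have : g' ≠ 0 := fun h2 => h (h1.trans h2.symm)
        simp [this]
      · simp [h1]⟩

theorem exists_top {M : ℕ} (y : EJ p M) :
    ∃ l g, y.1 l g ≠ 0 ∧ ∀ l', l < l' → ∀ g', y.1 l' g' = 0 := by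
  classical
  have hne : (Finset.univ.filter (fun l => ∃ g, y.1 l g ≠ 0)).Nonempty := by
    by_contra h
    rw [Finset.not_nonempty_iff_eq_empty, Finset.filter_eq_empty_iff] at h
    push Not at h
    have := y.2.2.1
    rw [Finset.sum_eq_zero (fun l hl => Finset.sum_eq_zero (fun g _ => h hl g))] at this
    exact zero_ne_one this
  obtain ⟨l, hl, hmax⟩ := Finset.exists_max_image _ id hne
  obtain ⟨g, hg⟩ := (Finset.mem_filter.1 hl).2
  refine ⟨l, g, hg, fun l' h' g' => ?_⟩
  by_contra hc
  have := hmax l' (Finset.mem_filter.2 ⟨Finset.mem_univ _, g', hc⟩)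
  exact absurd h' (not_lt.2 this)

/-- The group element carried by the highest level of nonzero weight. -/
def labE {M : ℕ} (y : EJ p M) : ZMod p := (exists_top y).choose_spec.choose

theorem labE_eq {M : ℕ} (y : EJ p M) (l g) (h : y.1 l g ≠ 0)
    (hl : ∀ l', l < l' → ∀ g', y.1 l' g' = 0) : labE y = g := by
  obtain ⟨h1, h2⟩ := (exists_top y).choose_spec.choose_spec
  have hl' : (exists_top y).choose = l := by
    rcases lt_trichotomy (exists_top y).choose l with h3 | h3 | h3
    · exact absurd (h2 _ h3 g) h
    · exact h3
    · exact absurd (hl _ h3 _) h1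
  have h1' : y.1 (exists_top y).choose (labE y) ≠ 0 := h1
  rw [hl'] at h1'
  by_contra hc
  rcases mul_eq_zero.1 (y.2.2.2 l _ _ hc) with h4 | h4
  · exact h1' h4
  · exact h h4

theorem labE_shift {M : ℕ} (y : EJ p M) : labE (shiftE y) = labE y + 1 := by
  obtain ⟨l, g, h1, h2⟩ := exists_top y
  rw [labE_eq y l g h1 h2]
  apply labE_eq _ l
  · simpa [shiftE_apply] using h1
  · intro l' h g'; exact h2 l' h _

/-- The point dividing the segment from `y` to the apex of level `t` in the ratio `a`, for `y` supported
below level `t`. -/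
def mixE {M : ℕ} (t : Fin (M + 1)) (a : ℝ) (ha : 0 ≤ a ∧ a ≤ 1) (y : EJ p M)
    (hy : ∀ l, t ≤ l → ∀ g, y.1 l g = 0) : EJ p M :=
  ⟨fun l g => (1 - a) * y.1 l g + a * (apexE t : EJ p M).1 l g,
    fun l g => add_nonneg (mul_nonneg (by linarith) (y.2.1 l g)) (mul_nonneg ha.1 ((apexE t).2.1 l g)),
    by
      simp only [Finset.sum_add_distrib, ← Finset.mul_sum]
      rw [y.2.2.1, (apexE t).2.2.1]; ring,
    fun l g g' h => by
      by_cases hl : l = t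
      · subst hl
        beta_reduce
        rw [hy l le_rfl, hy l le_rfl]
        have := (apexE (p := p) l).2.2.2 l g g' h
        linear_combination a ^ 2 * this
      · have := y.2.2.2 l g g' h
        simp only [apexE, hl, false_and, if_false]
        linear_combination (1 - a) ^ 2 * this⟩

theorem cone_bound (n s : ℕ) : 0 ≤ min (1 : ℝ) (s / n) ∧ min (1 : ℝ) (s / n) ≤ 1 :=
  ⟨le_min zero_le_one (by positivity), min_le_left _ _⟩

open Classical in
/-- The `s`-th of `n` steps of the straight-line contraction to the apex of level `t`. For points not
supported below level `t`, where the segment need not stay in the join, every step but the zeroth is the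
constant map to the apex; on them only the label matters. -/
def coneE {M : ℕ} (t : Fin (M + 1)) (n s : ℕ) (y : EJ p M) : EJ p M :=
  if s = 0 then y else
    if hy : ∀ l, t ≤ l → ∀ g, y.1 l g = 0 then mixE t (min 1 (s / n)) (cone_bound n s) y hy
    else apexE t

theorem labE_coneE {M : ℕ} (t : Fin (M + 1)) (n s : ℕ) (hn : 1 ≤ n) (hs : 1 ≤ s) (y : EJ p M) :
    labE (coneE t n s y) = 0 := by
  have hs' : s ≠ 0 := by omega
  have hpos : (0 : ℝ) < min (1 : ℝ) ((s : ℝ) / n) := lt_min one_pos (div_pos (by exact_mod_cast hs) (by exact_mod_cast hn))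
  rw [coneE, if_neg hs']
  split_ifs with hy
  · apply labE_eq _ t
    · simp only [mixE, hy t le_rfl, apexE]
      simpa using hpos.ne'
    · intro l hl g
      simp [mixE, hy l hl.le, apexE, hl.ne']
  · apply labE_eq _ t
    · simp [apexE]
    · intro l hl g; simp [apexE, hl.ne']

theorem coneE_fin {M : ℕ} (t : Fin (M + 1)) (n : ℕ) (hn : 1 ≤ n) (y : EJ p M) :
    coneE t n n y = apexE t := by
  have hs' : n ≠ 0 := by omega
  rw [coneE, if_neg hs']
  split_ifs with hy
  · apply Subtype.ext; funext l g
    have : (n : ℝ) / n = 1 := div_self (by exact_mod_cast hs')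
    simp [mixE, this]
  · rfl

/-- Below level `t` the cone is given by linear interpolation. -/
theorem coneE_apply {M : ℕ} (t : Fin (M + 1)) (n s : ℕ) (y : EJ p M)
    (hy : ∀ l, t ≤ l → ∀ g, y.1 l g = 0) (l g) :
    (coneE t n s y).1 l g = (1 - min 1 (s / n : ℝ)) * y.1 l g
      + min 1 (s / n : ℝ) * (apexE t : EJ p M).1 l g := by
  rw [coneE]
  split_ifs with h
  · subst h; simp
  · rfl

variable {I : Type*} [DecidableEq I] {M : I → ℕ}

/-- The product of joins on which `(ℤ/p)^I` acts coordinatewise. -/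
abbrev VV (p : ℕ) [NeZero p] {I : Type*} (M : I → ℕ) := ∀ i, EJ p (M i)

/-- The generator of the `i`-th factor of `(ℤ/p)^I`. -/
def gV (i : I) (x : VV p M) : VV p M := Function.update x i (shiftE (x i))

/-- The label of the `i`-th coordinate. -/
def uV (i : I) (x : VV p M) : ZMod p := labE (x i)

/-- The cone in the `i`-th coordinate. -/
def coneV (i : I) (t : Fin (M i + 1)) (n s : ℕ) (x : VV p M) : VV p M :=
  Function.update x i (coneE t n s (x i))

theorem update_comm' {i j : I} (h : i ≠ j) (F : EJ p (M i) → EJ p (M i)) (G : EJ p (M j) → EJ p (M j))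
    (x : VV p M) : Function.update (Function.update x j (G (x j))) i (F ((Function.update x j (G (x j))) i))
      = Function.update (Function.update x i (F (x i))) j (G ((Function.update x i (F (x i))) j)) := by
  rw [Function.update_of_ne h, Function.update_of_ne h.symm, Function.update_comm h]

theorem isAct_V : IsAct (gV : I → VV p M → VV p M) uV where
  iter i := by
    have h : ∀ k (x : VV p M), (gV i)^[k] x = Function.update x i (shiftE^[k] (x i)) := by
      intro k x
      induction k with
      | zero => simp
      | succ k ih => rw [Function.iterate_succ_apply', ih, gV]; simp [Function.iterate_succ_apply']
    funext x
    rw [h, shiftE_iter_p]; simp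
  comm i j x := by
    by_cases h : i = j
    · subst h; rfl
    · exact update_comm' h shiftE shiftE x
  self i x := by simp [uV, gV, labE_shift]
  other i j x h := by simp [uV, gV, Function.update_of_ne (Ne.symm h)]

theorem isCone_V (i : I) (t : Fin (M i + 1)) (n : ℕ) (hn : 1 ≤ n) :
    IsCone (gV : I → VV p M → VV p M) uV i (coneV i t n) n where
  zero := by funext x; simp [coneV, coneE]
  label s x hs := by simp [uV, coneV, labE_coneE t n s hn hs]
  label' j hj s x := by simp [uV, coneV, Function.update_of_ne hj]
  comm j hj s x := update_comm' (Ne.symm hj) (coneE t n s) shiftE x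
  fin x := by simp [coneV, gV, coneE_fin t n hn]

/-- A list all of whose members are pairwise related, that is, a small simplex. -/
def Cl {V : Type*} (r : V → V → Prop) (l : List V) : Prop := ∀ x ∈ l, ∀ y ∈ l, r x y

/-- The value of `T ω` on `r`-small simplices depends only on `ω` on `r'`-small simplices. -/
def Tr {V : Type*} (T : Op p V) (r r' : V → V → Prop) : Prop :=
  ∀ ω : List V → ZMod p, (∀ l, Cl r' l → ω l = 0) → ∀ l, Cl r l → T ω l = 0

section
variable {V : Type*} {r r' r'' : V → V → Prop}

theorem Tr.one : Tr (1 : Op p V) r r := fun _ h l hl => h l hl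
theorem Tr.mul {T T' : Op p V} (h : Tr T r r') (h' : Tr T' r' r'') : Tr (T * T') r r'' :=
  fun ω hω l hl => h _ (h' ω hω) l hl
theorem Tr.sub {T T' : Op p V} (h : Tr T r r') (h' : Tr T' r r') : Tr (T - T') r r' :=
  fun ω hω l hl => by
    rw [LinearMap.sub_apply, Pi.sub_apply, h ω hω l hl, h' ω hω l hl, sub_zero]
theorem Tr.sum {ι : Type*} {s : Finset ι} {T : ι → Op p V} (h : ∀ i ∈ s, Tr (T i) r r') :
    Tr (∑ i ∈ s, T i) r r' :=
  fun ω hω l hl => by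
    rw [LinearMap.sum_apply, Finset.sum_apply]
    exact Finset.sum_eq_zero (fun i hi => h i hi ω hω l hl)
theorem Tr.pow {T : Op p V} (h : Tr T r r) (k : ℕ) : Tr (T ^ k) r r := by
  induction k with
  | zero => exact Tr.one
  | succ k ih => rw [pow_succ]; exact ih.mul h
theorem Tr.mono {T : Op p V} {r₁ : V → V → Prop} (h : Tr T r r') (h1 : ∀ x y, r' x y → r₁ x y) :
    Tr T r r₁ := fun ω hω l hl => h ω (fun t ht => hω t (fun x hx y hy => h1 _ _ (ht x hx y hy))) l hl
theorem Tr.pull {g : V → V} (h : ∀ x y, r x y → r' (g x) (g y)) : Tr (pullL g : Op p V) r r' := by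
  intro ω hω l hl
  apply hω
  intro x hx y hy
  obtain ⟨a, ha, rfl⟩ := List.mem_map.1 hx
  obtain ⟨b, hb, rfl⟩ := List.mem_map.1 hy
  exact h _ _ (hl a ha b hb)

/-- A prism of `ω` involves only simplices with vertices among the images of the given ones. -/
theorem prism_supp (φ ψ : V → V) (ω : List V → ZMod p) (l : List V)
    (h : ∀ t, (∀ z ∈ t, ∃ x ∈ l, z = φ x ∨ z = ψ x) → ω t = 0) : prism φ ψ ω l = 0 := by
  induction l generalizing ω with
  | nil => rfl
  | cons x l ih =>
    simp only [prism]
    rw [h, ih (fun t => ω (φ x :: t)), sub_zero]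
    · intro t ht
      apply h
      intro z hz
      rcases List.mem_cons.1 hz with rfl | hz
      · exact ⟨x, by simp, Or.inl rfl⟩
      · obtain ⟨w, hw, h3⟩ := ht z hz
        exact ⟨w, by simp [hw], h3⟩
    · intro z hz
      rcases List.mem_cons.1 hz with rfl | hz
      · exact ⟨x, by simp, Or.inl rfl⟩
      rcases List.mem_cons.1 hz with rfl | hz
      · exact ⟨x, by simp, Or.inr rfl⟩
      obtain ⟨w, hw, rfl⟩ := List.mem_map.1 hz
      exact ⟨w, by simp [hw], Or.inr rfl⟩

theorem Tr.pr {φ ψ : V → V} (h : ∀ x y, r x y → r' (φ x) (φ y) ∧ r' (φ x) (ψ y) ∧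
    r' (ψ x) (φ y) ∧ r' (ψ x) (ψ y)) : Tr (prL φ ψ : Op p V) r r' := by
  intro ω hω l hl
  apply prism_supp
  intro t ht
  apply hω
  intro z hz z' hz'
  obtain ⟨x, hx, h1⟩ := ht z hz
  obtain ⟨y, hy, h2⟩ := ht z' hz'
  obtain ⟨a1, a2, a3, a4⟩ := h x y (hl x hx y hy)
  rcases h1 with rfl | rfl <;> rcases h2 with rfl | rfl <;> assumption
end

/-- Both points are supported in levels at most `κ i` in each coordinate, and their weights differ by at
most `ρ`. -/
def relV (κ : I → ℕ) (ρ : ℝ) (x y : VV p M) : Prop :=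
  ∀ i, (∀ l : Fin (M i + 1), κ i < l → ∀ g, (x i).1 l g = 0 ∧ (y i).1 l g = 0) ∧
    ∀ l g, |(x i).1 l g - (y i).1 l g| ≤ ρ

theorem relV.mono {κ κ' : I → ℕ} {ρ ρ' : ℝ} (h : ∀ i, κ i ≤ κ' i) (h' : ρ ≤ ρ') {x y : VV p M}
    (hxy : relV κ ρ x y) : relV κ' ρ' x y :=
  fun i => ⟨fun l hl g => (hxy i).1 l ((h i).trans_lt hl) g, fun l g => ((hxy i).2 l g).trans h'⟩

theorem relV_g (κ : I → ℕ) (ρ : ℝ) (i : I) (x y : VV p M) (h : relV κ ρ x y) :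
    relV κ ρ (gV i x) (gV i y) := by
  intro j
  by_cases hj : j = i
  · subst hj
    simp only [gV, Function.update_self]
    exact ⟨fun l hl g => (h j).1 l hl _, fun l g => (h j).2 l _⟩
  · simp only [gV, Function.update_of_ne hj]; exact h j

theorem cone_close {M : ℕ} (t : Fin (M + 1)) (n s s' : ℕ) (hs : s' = s + 1 ∨ s = s' + 1 ∨ s = s')
    (ρ : ℝ) (y z : EJ p M) (hy : ∀ l, t ≤ l → ∀ g, y.1 l g = 0) (hz : ∀ l, t ≤ l → ∀ g, z.1 l g = 0)
    (h : ∀ l g, |y.1 l g - z.1 l g| ≤ ρ) (l g) :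
    |(coneE t n s y).1 l g - (coneE t n s' z).1 l g| ≤ ρ + 1 / n := by
  rw [coneE_apply t n s y hy, coneE_apply t n s' z hz]
  obtain ⟨a0, a1⟩ := cone_bound n s
  have hab : |min (1 : ℝ) (s / n) - min (1 : ℝ) ((s' : ℝ) / n)| ≤ 1 / n := by
    refine (abs_min_sub_min_le_max _ _ _ _).trans ?_
    have hn : (0 : ℝ) ≤ 1 / n := by positivity
    rw [sub_self, abs_zero, max_eq_right (abs_nonneg _), ← sub_div, abs_div, Nat.abs_cast]
    apply div_le_div_of_nonneg_right _ (Nat.cast_nonneg n)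
    rcases hs with rfl | rfl | rfl <;> simp
  set a := min (1 : ℝ) (s / n)
  set b := min (1 : ℝ) (s' / n)
  set e := (apexE t : EJ p M).1 l g with he
  have e0 : 0 ≤ e := (apexE t).2.1 l g
  have e1 : e ≤ 1 := EJ_le_one _ l g
  have z0 := z.2.1 l g
  have z1 := EJ_le_one z l g
  have hρ := h l g
  have hρ0 : 0 ≤ ρ := (abs_nonneg _).trans hρ
  have key : (1 - a) * y.1 l g + a * e - ((1 - b) * z.1 l g + b * e) =
      (1 - a) * (y.1 l g - z.1 l g) + (a - b) * (e - z.1 l g) := by ring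
  rw [key]
  refine (abs_add_le _ _).trans (add_le_add ?_ ?_)
  · rw [abs_mul, abs_of_nonneg (by linarith : 0 ≤ 1 - a)]
    nlinarith [abs_nonneg (y.1 l g - z.1 l g)]
  · rw [abs_mul]
    have : |e - z.1 l g| ≤ 1 := by rw [abs_le]; constructor <;> linarith
    nlinarith [abs_nonneg (a - b), abs_nonneg (e - z.1 l g)]

theorem relV_cone (κ : I → ℕ) (ρ : ℝ) (i : I) (t : Fin (M i + 1)) (ht : κ i < t) (n s s' : ℕ)
    (hs : s' = s + 1 ∨ s = s' + 1 ∨ s = s') (x y : VV p M) (h : relV κ ρ x y) :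
    relV (Function.update κ i t) (ρ + 1 / n) (coneV i t n s x) (coneV i t n s' y) := by
  intro j
  by_cases hj : j = i
  · subst hj
    have hx : ∀ l, t ≤ l → ∀ g, (x j).1 l g = 0 := fun l hl g =>
      ((h j).1 l (ht.trans_le (by exact_mod_cast hl)) g).1
    have hy : ∀ l, t ≤ l → ∀ g, (y j).1 l g = 0 := fun l hl g =>
      ((h j).1 l (ht.trans_le (by exact_mod_cast hl)) g).2
    simp only [coneV, Function.update_self]
    refine ⟨fun l hl g => ?_, fun l g => cone_close t n s s' hs ρ _ _ hx hy (h j).2 l g⟩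
    have hl' : t < l := by exact_mod_cast hl
    rw [coneE_apply t n s _ hx, coneE_apply t n s' _ hy, hx l hl'.le, hy l hl'.le]
    simp [apexE, hl'.ne']
  · simp only [coneV, Function.update_of_ne hj]
    have hn : (0 : ℝ) ≤ 1 / n := by positivity
    exact ⟨(h j).1, fun l g => ((h j).2 l g).trans (by linarith)⟩

theorem Tr_Q (κ : I → ℕ) (ρ : ℝ) (i : I) (t : Fin (M i + 1)) (ht : κ i < t) (n : ℕ) :
    Tr (opQ p (coneV i t n) n : Op p (VV p M)) (relV κ ρ) (relV (Function.update κ i t) (ρ + 1 / n)) := by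
  apply Tr.sum
  intro s _
  apply Tr.pr
  intro x y h
  exact ⟨relV_cone κ ρ i t ht n _ _ (by omega) x y h, relV_cone κ ρ i t ht n _ _ (by omega) x y h,
    relV_cone κ ρ i t ht n _ _ (by omega) x y h, relV_cone κ ρ i t ht n _ _ (by omega) x y h⟩

theorem Tr_A (κ : I → ℕ) (ρ : ℝ) (i : I) : Tr (opA (gV i) : Op p (VV p M)) (relV κ ρ) (relV κ ρ) :=
  (Tr.pull (relV_g κ ρ i)).sub Tr.one

theorem Tr_N (κ : I → ℕ) (ρ : ℝ) (i : I) : Tr (opN p (gV i) : Op p (VV p M)) (relV κ ρ) (relV κ ρ) :=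
  Tr.sum (fun k _ => (Tr.pull (relV_g κ ρ i)).pow k)

/-- The `k`-th operator of coordinate `i`, with cones to the one or two levels following level `q k`.
For `p = 2` the second cone is not used. -/
def opV (M : I → ℕ) (n : ℕ) (i : I) (k : ℕ) : Op p (VV p M) :=
  opD p (gV i) (coneV i (Fin.ofNat (M i + 1) (qq p * k + 1)) n)
    (coneV i (Fin.ofNat (M i + 1) (qq p * k + 2)) n) n

/-- The `k`-th operator needs only slightly larger simplices, supported in the next `qq p` levels. -/
theorem Tr_opV (κ : I → ℕ) (ρ : ℝ) (n : ℕ) (i : I) (k : ℕ) (hk : κ i ≤ qq p * k)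
    (hM : qq p * (k + 1) ≤ M i) :
    Tr (opV M n i k : Op p (VV p M)) (relV κ ρ)
      (relV (Function.update κ i (qq p * (k + 1))) (ρ + 2 / n)) := by
  have hn : (0 : ℝ) ≤ 1 / n := by positivity
  have h2n : (2 : ℝ) / n = 1 / n + 1 / n := by ring
  unfold opV opD
  by_cases h2 : p = 2
  · rw [if_pos h2]
    have hq : qq p = 1 := if_pos h2
    simp only [hq, one_mul] at hk hM ⊢
    have hv : (Fin.ofNat (M i + 1) (k + 1) : ℕ) = k + 1 := Nat.mod_eq_of_lt (by omega)
    refine ((Tr_A κ ρ i).mul (Tr_Q κ ρ i _ (by omega) n)).mono ?_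
    intro x y h
    refine h.mono (fun j => ?_) (by linarith)
    rw [hv]
  · rw [if_neg h2]
    have hq : qq p = 2 := if_neg h2
    rw [hq] at hk hM ⊢
    have hv : (Fin.ofNat (M i + 1) (2 * k + 1) : ℕ) = 2 * k + 1 := Nat.mod_eq_of_lt (by omega)
    have hv' : (Fin.ofNat (M i + 1) (2 * k + 2) : ℕ) = 2 * k + 2 := Nat.mod_eq_of_lt (by omega)
    refine (((Tr_A κ ρ i).mul (Tr_Q κ ρ i _ (by omega) n)).mul
      ((Tr_N _ _ i).mul (Tr_Q _ _ i _ ?_ n))).mono ?_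
    · rw [hv, hv', Function.update_self]; omega
    · intro x y h
      rw [hv, hv'] at h
      refine h.mono (fun j => ?_) (by linarith)
      rw [Function.update_idem, show 2 * (k + 1) = 2 * k + 2 by ring]

theorem Tr_block (κ : I → ℕ) (ρ : ℝ) (n : ℕ) (i : I) (hk : κ i = 0) (a : ℕ) (hM : qq p * a ≤ M i) :
    Tr ((List.range a).map (opV M n i)).prod (relV κ ρ : VV p M → VV p M → Prop)
      (relV (Function.update κ i (qq p * a)) (ρ + a * (2 / n))) := by
  induction a with
  | zero =>
    refine Tr.one.mono (fun x y h => h.mono (fun j => ?_) (by simp))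
    by_cases hj : j = i
    · subst hj; simp [hk]
    · simp [Function.update_of_ne hj]
  | succ a ih =>
    rw [List.range_succ, List.map_append, List.prod_append]
    simp only [List.map_cons, List.map_nil, List.prod_cons, List.prod_nil, mul_one]
    have hle : qq p * a ≤ qq p * (a + 1) := Nat.mul_le_mul_left _ (Nat.le_succ a)
    refine ((ih (hle.trans hM)).mul (Tr_opV _ _ n i a (by simp) hM)).mono
      (fun x y h => h.mono (fun j => ?_) ?_)
    · rw [Function.update_idem]
    · push_cast; linarith

theorem Tr_DD (n : ℕ) (a : I → ℕ) (hM : ∀ i, qq p * a i ≤ M i) (is : List I) (hnd : is.Nodup) :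
    Tr (opDD (fun i => (List.range (a i)).map (opV M n i)) is) (relV 0 0 : VV p M → VV p M → Prop)
      (relV (fun i => if i ∈ is then qq p * a i else 0) ((is.map a).sum * (2 / n))) := by
  induction is with
  | nil => exact Tr.one.mono (fun x y h => h.mono (fun j => by simp) (by simp))
  | cons i is ih =>
    rw [List.nodup_cons] at hnd
    rw [opDD]
    refine ((ih hnd.2).mul (Tr_block _ _ n i (by simp [hnd.1]) (a i) (hM i))).mono
      (fun x y h => h.mono (fun j => ?_) ?_)
    · by_cases hj : j = i
      · subst hj; simp
      · simp [hj]
    · push_cast [List.map_cons, List.sum_cons]; linarith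

end Geo

/-! ### A Borsuk–Ulam theorem for `(ℤ/p)^I` -/

section Lab
variable {p : ℕ}

/-- The number of the sector of angle `2π/p` containing `w`, as an element of `ℤ/p`. -/
def labC (p : ℕ) (w : ℂ) : ZMod p := ((⌊(p : ℝ) * w.arg / (2 * Real.pi)⌋ : ℤ) : ZMod p)

theorem labC_exp (w : ℂ) (hw : w ≠ 0) (φ : ℝ) :
    labC p (w * Complex.exp (φ * Complex.I)) =
      ((⌊(p : ℝ) * (w.arg + φ) / (2 * Real.pi)⌋ : ℤ) : ZMod p) := by
  have h := Complex.arg_mul_coe_angle hw (Complex.exp_ne_zero (φ * Complex.I))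
  have h2 : ((Complex.exp (φ * Complex.I)).arg : Real.Angle) = (φ : Real.Angle) := by
    rw [Complex.arg_exp_mul_I]; simp
  rw [h2, ← Real.Angle.coe_add, Real.Angle.angle_eq_iff_two_pi_dvd_sub] at h
  obtain ⟨k, hk⟩ := h
  have hpi : (2 * Real.pi) ≠ 0 := by positivity
  have : (p : ℝ) * (w * Complex.exp (φ * Complex.I)).arg / (2 * Real.pi) =
      (p : ℝ) * (w.arg + φ) / (2 * Real.pi) + ((p * k : ℤ) : ℝ) := by
    rw [sub_eq_iff_eq_add.1 hk]; push_cast; field_simp; ring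
  rw [labC, this, Int.floor_add_intCast]; push_cast; simp

theorem labC_char [NeZero p] (w : ℂ) (hw : w ≠ 0) (a : ZMod p) :
    labC p (ZMod.stdAddChar a * w) = labC p w + a := by
  have hp : (p : ℝ) ≠ 0 := by exact_mod_cast NeZero.ne p
  have hpi : (2 * Real.pi) ≠ 0 := by positivity
  have h1 : (ZMod.stdAddChar a : ℂ) =
      Complex.exp (((2 * Real.pi * a.val / p : ℝ) : ℂ) * Complex.I) := by
    rw [ZMod.stdAddChar_apply, ZMod.toCircle_apply]; congr 1; push_cast; ring
  rw [mul_comm, h1, labC_exp w hw, labC]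
  have : (p : ℝ) * (w.arg + 2 * Real.pi * a.val / p) / (2 * Real.pi) =
      (p : ℝ) * w.arg / (2 * Real.pi) + ((a.val : ℤ) : ℝ) := by
    push_cast; field_simp
  rw [this, Int.floor_add_intCast]; push_cast; simp

/-- Near a nonzero number at most two adjacent labels occur, and for `p = 2`, where only real numbers are
considered, a single one. -/
theorem labC_local [NeZero p] (w₀ : ℂ) (hw : w₀ ≠ 0) (h2 : p = 2 → w₀.im = 0) :
    ∃ δ > 0, ∃ c : ZMod p, ∀ w, dist w w₀ < δ → (p = 2 → w.im = 0) →
      w ≠ 0 ∧ (labC p w = c ∨ (p ≠ 2 ∧ labC p w = c + 1)) := by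
  have hp0 : (0 : ℝ) < p := by exact_mod_cast NeZero.pos p
  by_cases hp : p = 2
  · refine ⟨‖w₀‖, norm_pos_iff.2 hw, labC p w₀, fun w hd him => ?_⟩
    have hw0 : w₀ = (w₀.re : ℂ) := Complex.ext rfl (by simp [h2 hp])
    have hwr : w = (w.re : ℂ) := Complex.ext rfl (by simp [him hp])
    rw [hw0, hwr] at hd ⊢
    generalize w₀.re = a at *
    generalize w.re = b at *
    rw [Complex.dist_eq, ← Complex.ofReal_sub, Complex.norm_real, Complex.norm_real, Real.norm_eq_abs,
      Real.norm_eq_abs] at hd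
    have ha : a ≠ 0 := by rintro rfl; simp at hd; exact absurd hd (not_lt.2 (abs_nonneg b))
    rcases lt_or_gt_of_ne ha with h | h
    · have hb : b < 0 := by
        rw [abs_of_neg h] at hd; have := (abs_lt.1 hd).2; linarith
      refine ⟨by exact_mod_cast hb.ne, Or.inl ?_⟩
      rw [labC, labC, Complex.arg_ofReal_of_neg h, Complex.arg_ofReal_of_neg hb]
    · have hb : 0 < b := by
        rw [abs_of_pos h] at hd; have := (abs_lt.1 hd).1; linarith
      refine ⟨by exact_mod_cast hb.ne', Or.inl ?_⟩
      rw [labC, labC, Complex.arg_ofReal_of_nonneg h.le, Complex.arg_ofReal_of_nonneg hb.le]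
  · -- the argument of `w / w₀` is small for `w` near `w₀`
    have hpi := Real.pi_pos
    have hc : ContinuousAt (fun w : ℂ => (w / w₀).arg) w₀ := by
      have : ContinuousAt Complex.arg (w₀ / w₀) := by
        rw [div_self hw]; exact Complex.continuousAt_arg (by simp [Complex.slitPlane])
      exact ContinuousAt.comp (f := fun w : ℂ => w / w₀) this (by fun_prop)
    obtain ⟨δ, hδ, hδ'⟩ := Metric.continuousAt_iff.1 hc (Real.pi / p) (by positivity)
    set θ := (p : ℝ) * w₀.arg / (2 * Real.pi) with hθ
    refine ⟨min δ ‖w₀‖, lt_min hδ (norm_pos_iff.2 hw), ((⌊θ - 1 / 2⌋ : ℤ) : ZMod p),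
      fun w hd _ => ?_⟩
    have hwne : w ≠ 0 := by
      rintro rfl
      have := hd.trans_le (min_le_right _ _)
      simp at this
    refine ⟨hwne, ?_⟩
    have h3 := hδ' (hd.trans_le (min_le_left _ _))
    simp only [div_self hw, Complex.arg_one, Real.dist_eq, sub_zero] at h3
    set v := w / w₀ with hv
    have hv0 : v ≠ 0 := div_ne_zero hwne hw
    have hwv : w = (‖v‖ : ℝ) * (w₀ * Complex.exp (v.arg * Complex.I)) := by
      have := Complex.norm_mul_exp_arg_mul_I v
      have e : w = w₀ * v := by rw [hv]; field_simp
      rw [e]; conv_lhs => rw [← this]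
      push_cast; ring
    have hl : labC p w = ((⌊θ + p * v.arg / (2 * Real.pi)⌋ : ℤ) : ZMod p) := by
      have : labC p w = labC p (w₀ * Complex.exp (v.arg * Complex.I)) := by
        rw [labC, labC]; conv_lhs => rw [hwv]
        rw [Complex.arg_real_mul _ (norm_pos_iff.2 hv0)]
      rw [this, labC_exp w₀ hw, hθ]; congr 3; ring
    set η := p * v.arg / (2 * Real.pi) with hη
    have hη2 : |η| < 1 / 2 := by
      rw [hη, abs_div, abs_mul, abs_of_pos hp0, abs_of_pos (by positivity : 0 < 2 * Real.pi),
        div_lt_iff₀ (by positivity)]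
      rw [lt_div_iff₀ hp0] at h3
      linarith
    obtain ⟨h4, h5⟩ := abs_lt.1 hη2
    have h6 : ⌊θ + η⌋ = ⌊θ - 1 / 2⌋ ∨ ⌊θ + η⌋ = ⌊θ - 1 / 2⌋ + 1 := by
      have l1 := Int.floor_le (θ - 1 / 2)
      have l2 := Int.lt_floor_add_one (θ - 1 / 2)
      have a1 : ⌊θ - 1 / 2⌋ ≤ ⌊θ + η⌋ := Int.floor_mono (by linarith)
      have a2 : ⌊θ + η⌋ < ⌊θ - 1 / 2⌋ + 2 := by rw [Int.floor_lt]; push_cast; linarith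
      omega
    rw [hl]
    rcases h6 with h | h <;> rw [h]
    · exact Or.inl rfl
    · exact Or.inr ⟨hp, by push_cast; rfl⟩

/-- The Bockstein cocycle vanishes when only two adjacent labels occur. -/
theorem bock_two [Fact p.Prime] (hp : p ≠ 2) (t a b c : ZMod p) (ha : a = t ∨ a = t + 1)
    (hb : b = t ∨ b = t + 1) (hc : c = t ∨ c = t + 1) : bock a b c = 0 := by
  have hodd : 2 * (1 : ZMod p).val ≠ p := by
    have := (Fact.out : p.Prime)
    have : Fact (1 < p) := ⟨this.one_lt⟩
    rw [ZMod.val_one]; omega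
  have h := ZMod.valMinAbs_neg_of_ne_half hodd
  rcases ha with rfl | rfl <;> rcases hb with rfl | rfl <;> rcases hc with rfl | rfl <;>
    simp [bock, bockZ, h]

variable {V : Type*}

/-- The Euler cocycle vanishes on simplices with at most two adjacent labels, or one if `p = 2`. -/
theorem eps_small [Fact p.Prime] (s : V → ZMod p) (c : ZMod p) (t : List V)
    (ht : t.length = qq p + 1) (h : ∀ x ∈ t, s x = c ∨ (p ≠ 2 ∧ s x = c + 1)) : eps s t = 0 := by
  by_cases hp : p = 2
  · have hq : qq p = 1 := if_pos hp
    rw [hq] at ht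
    match t, ht with
    | [x, y], _ =>
      have hx := h x (by simp)
      have hy := h y (by simp)
      simp only [hp, ne_eq, not_true_eq_false, false_and, or_false] at hx hy
      simp [eps, hx, hy]
  · have hq : qq p = 2 := if_neg hp
    rw [hq] at ht
    match t, ht with
    | [x, y, z], _ =>
      simp only [ne_eq, hp, not_false_eq_true, true_and] at h
      exact bock_two hp c _ _ _ (h x (by simp)) (h y (by simp)) (h z (by simp))

theorem cup_supp (k : ℕ) (a b : List V → ZMod p) (l : List V) (h : cup k a b l ≠ 0) :
    (∃ t : List V, t.length = k + 1 ∧ (∀ x ∈ t, x ∈ l) ∧ a t ≠ 0) ∧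
      ∃ t : List V, (∀ x ∈ t, x ∈ l) ∧ b t ≠ 0 := by
  induction k generalizing a l with
  | zero =>
    cases l with
    | nil => exact absurd rfl h
    | cons x l =>
      simp only [cup] at h
      exact ⟨⟨[x], rfl, by simp, left_ne_zero_of_mul h⟩, x :: l, by simp, right_ne_zero_of_mul h⟩
  | succ k ih =>
    cases l with
    | nil => exact absurd rfl h
    | cons x l =>
      simp only [cup] at h
      obtain ⟨⟨t, h1, h2, h3⟩, t', h4, h5⟩ := ih _ _ h
      refine ⟨⟨x :: t, by simp [h1], ?_, h3⟩, t', fun y hy => by simp [h4 y hy], h5⟩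
      intro y hy
      rcases List.mem_cons.1 hy with rfl | hy
      · simp
      · simp [h2 y hy]

theorem pc_supp {J : Type*} (e : J → List V → ZMod p) (js : List J) (ω : List V → ZMod p) (l : List V)
    (h : pc e js ω l ≠ 0) (j : J) (hj : j ∈ js) :
    ∃ t : List V, t.length = qq p + 1 ∧ (∀ x ∈ t, x ∈ l) ∧ e j t ≠ 0 := by
  induction js generalizing l with
  | nil => simp at hj
  | cons j' js ih =>
    rw [pc_cons] at h
    obtain ⟨h1, t, h2, h3⟩ := cup_supp _ _ _ _ h
    rcases List.mem_cons.1 hj with rfl | hj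
    · exact h1
    · obtain ⟨t', h4, h5, h6⟩ := ih t h3 hj
      exact ⟨t', h4, fun x hx => h2 x (h5 x hx), h6⟩

end Lab

section BU
variable {p : ℕ} [Fact p.Prime] {I J : Type*} [Fintype I] [DecidableEq I] [Fintype J]

/-- A Borsuk–Ulam theorem for `(ℤ/p)^I` acting on a product of joins. Functions `h j`, equivariant with
respect to characters that are triangular for the order given by `rank`, have a common zero as soon as
the `i`-th join has enough levels for the functions whose leading variable is `i`. Without a common zero,
the product of the sector cocycles of the `h j` would vanish on all small simplices, whereas the total
operator evaluates it to the nonzero product of the leading coefficients. -/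
theorem borsuk_ulam (M : I → ℕ) (rank : I → ℕ) (α : J → I → ZMod p) (lead : J → I)
    (hlead : ∀ j, α j (lead j) ≠ 0)
    (htri : ∀ j i, i ≠ lead j → rank (lead j) ≤ rank i → α j i = 0)
    (hM : ∀ i, qq p * (Finset.univ.filter (fun j => lead j = i)).card ≤ M i)
    (h : J → VV p M → ℂ) (hc : ∀ j, Continuous (h j))
    (heq : ∀ j i x, h j (gV i x) = ZMod.stdAddChar (α j i) * h j x)
    (hre : p = 2 → ∀ j x, (h j x).im = 0) : ∃ x, ∀ j, h j x = 0 := by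
  classical
  by_contra hcon
  push Not at hcon
  -- where `h j` vanishes its sector is meaningless, and any equivariant label will do
  set s : J → VV p M → ZMod p := fun j x =>
    if h j x = 0 then ∑ i, α j i * uV i x else labC p (h j x) with hs
  have hsg : ∀ j i x, s j (gV i x) = s j x + α j i := by
    intro j i x
    have hne : (ZMod.stdAddChar (α j i) : ℂ) ≠ 0 := by
      rw [ZMod.stdAddChar_apply]; exact Circle.coe_ne_zero _
    simp only [hs, heq, mul_eq_zero, hne, false_or]
    split_ifs with h0
    · have hact := isAct_V (p := p) (M := M)
      rw [← Finset.sum_erase_add _ _ (Finset.mem_univ i),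
        ← Finset.sum_erase_add (a := i) _ (fun k => α j k * uV k x) (Finset.mem_univ i),
        hact.self, mul_add, mul_one, add_assoc]
      congr 1
      refine Finset.sum_congr rfl (fun k hk => ?_)
      rw [hact.other i k x (Finset.ne_of_mem_erase hk).symm]
    · exact labC_char _ h0 _
  -- a Lebesgue number for the local constancy of labels
  have hloc : ∀ x : VV p M, ∃ δ > 0, ∃ j : J, ∃ c : ZMod p, ∀ y, dist y x < δ →
      s j y = c ∨ (p ≠ 2 ∧ s j y = c + 1) := by
    intro x
    obtain ⟨j, hj⟩ := hcon x
    obtain ⟨δ, hδ, c, hδc⟩ := labC_local (h j x) hj (fun h2 => hre h2 j x)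
    obtain ⟨δ', hδ', hh⟩ := Metric.continuous_iff.1 (hc j) x δ hδ
    refine ⟨δ', hδ', j, c, fun y hy => ?_⟩
    obtain ⟨h1, h2⟩ := hδc _ (hh y hy) (fun h2 => hre h2 j y)
    simpa only [hs, if_neg h1] using h2
  choose δ hδ jj cc hjc using hloc
  obtain ⟨ε, hε, hleb⟩ := lebesgue_number_lemma_of_metric (s := (Set.univ : Set (VV p M)))
    (c := fun x => Metric.ball x (δ x)) isCompact_univ (fun x => Metric.isOpen_ball)
    (fun x _ => Set.mem_iUnion.2 ⟨x, Metric.mem_ball_self (hδ x)⟩)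
  -- coordinates of larger rank come first, as required by the triangularity
  set js : I → List J := fun i => (Finset.univ.filter (fun j => lead j = i)).toList with hjs
  set a : I → ℕ := fun i => (Finset.univ.filter (fun j => lead j = i)).card with ha
  set is : List I := (Finset.univ : Finset I).toList.mergeSort (fun i i' => decide (rank i' ≤ rank i))
    with his
  have hperm : is.Perm (Finset.univ : Finset I).toList := List.mergeSort_perm _ _
  have hnd : is.Nodup := hperm.nodup_iff.2 (Finset.nodup_toList _)
  have hmem : ∀ i, i ∈ is := fun i => hperm.mem_iff.2 (by simp)
  have hsorted : is.Pairwise (fun i i' => rank i' ≤ rank i) := by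
    have := List.pairwise_mergeSort (le := fun i i' : I => decide (rank i' ≤ rank i))
      (fun a b c => by simp only [decide_eq_true_eq]; omega)
      (fun a b => by simp only [Bool.or_eq_true, decide_eq_true_eq]; omega) (Finset.univ : Finset I).toList
    simpa using this
  obtain ⟨n, hn⟩ := exists_nat_gt (((is.map a).sum * 2 : ℝ) / ε)
  have hn0 : (0 : ℝ) < n := lt_of_le_of_lt (by positivity) hn
  have hn1 : 1 ≤ n := by exact_mod_cast hn0
  have hρ : ((is.map a).sum : ℝ) * (2 / n) < ε := by
    rw [div_lt_iff₀ hε] at hn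
    rw [← mul_div_assoc, div_lt_iff₀ hn0]; linarith
  let x₀ : VV p M := fun i => apexE 0
  have hval := opDD_real (g := gV (p := p) (M := M)) (u := uV) isAct_V α s hsg
    (fun i => (List.range (a i)).map (opV M n i)) ?_ js ?_ is hnd ?_ x₀
  rotate_left
  · intro i D hD
    obtain ⟨k, _, rfl⟩ := List.mem_map.1 hD
    exact goodOp_opD isAct_V hn1 (isCone_V i _ n hn1) (isCone_V i _ n hn1)
  · intro i; simp [hjs, ha]
  · refine (hsorted.and hnd).imp ?_
    rintro i i' ⟨h1, h2⟩ j hj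
    have hj' : lead j = i' := by simpa [hjs] using hj
    subst hj'
    exact htri j i h2 h1
  have hne : (is.map (fun i => ((js i).map (fun j => α j i)).prod)).prod ≠ 0 := by
    rw [Ne, List.prod_eq_zero_iff]
    intro h0
    obtain ⟨i, _, hi⟩ := List.mem_map.1 h0
    rw [List.prod_eq_zero_iff] at hi
    obtain ⟨j, hj, hj0⟩ := List.mem_map.1 hi
    have hj' : lead j = i := by simpa [hjs] using hj
    subst hj'
    exact hlead j hj0
  rw [← hval] at hne
  apply hne
  refine Tr_DD n a hM is hnd _ ?_ [x₀] ?_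
  · intro l hl
    by_contra hl0
    rcases l with _ | ⟨x, l⟩
    · exact hl0 (pc_nil _ _ _ (by simp [unitC]))
    obtain ⟨y, hy⟩ := hleb x (Set.mem_univ x)
    obtain ⟨t, ht1, ht2, ht3⟩ := pc_supp _ _ _ _ hl0 (jj y)
      (List.mem_flatMap.2 ⟨lead (jj y), hmem _, by simp [hjs]⟩)
    apply ht3
    refine eps_small _ (cc y) t ht1 (fun z hz => hjc y z ?_)
    apply hy
    rw [Metric.mem_ball]
    refine lt_of_le_of_lt ?_ hρ
    have h0 : (0 : ℝ) ≤ ((is.map a).sum : ℝ) * (2 / n) := by positivity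
    rw [dist_pi_le_iff h0]
    intro i
    rw [Subtype.dist_eq, dist_pi_le_iff h0]
    intro lv
    rw [dist_pi_le_iff h0]
    intro g
    rw [Real.dist_eq]
    exact (hl z (ht2 z hz) x (by simp) i).2 lv g
  · intro x hx y hy
    rw [List.mem_singleton] at hx hy
    subst hx; subst hy
    intro i
    refine ⟨fun l hl g => ?_, fun l g => by simp⟩
    have : l ≠ 0 := by rintro rfl; simp at hl
    simp [x₀, apexE, this]

end BU

/-! ### Staircase configurations and homogenization -/

section Stair
variable {p : ℕ} [NeZero p] {B : Type*} [Fintype B] {M : B → ℕ}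

/-- The total weight of the levels below `l`. The levels of `y` partition `[0, 1]` into consecutive
intervals, and this is the left end of the interval of level `l`. -/
def Lpos {M : ℕ} (y : EJ p M) (l : Fin (M + 1)) : ℝ :=
  ∑ l' ∈ Finset.univ.filter (fun l' => l' < l), ∑ g, y.1 l' g

/-- For levels `l` and group elements `g`, the right end of the interval of `(l b, g b)` in the
`b`-th coordinate minus the left end of the interval of `l b'` in the coordinate `b'`. -/
def gapE (x : VV p M) (g : B → ZMod p) (l : ∀ b, Fin (M b + 1)) (b b' : B) : ℝ :=
  Lpos (x b) (l b) + (x b).1 (l b) (g b) - Lpos (x b') (l b')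

open Classical in
/-- A map from a product of joins to weights on the vertices of a simplex, one for each
`g : (ℤ/p)^B`. Vertex `s` gets positive weight in the point of index `g` exactly if, for some tuple of
levels of sum `s`, the intervals carrying the elements `g b` on these levels have a common interior
point. This realizes the staircase triangulation of the product. -/
def stair (N : ℕ) (x : VV p M) (g : B → ZMod p) (s : Fin (N + 1)) : ℝ :=
  ∑ l ∈ Finset.univ.filter (fun l : ∀ b, Fin (M b + 1) => ∑ b, (l b : ℕ) = s),
    ∏ b, ∏ b', max 0 (gapE x g l b b')

theorem Lpos_cont {M : ℕ} (l : Fin (M + 1)) : Continuous (fun y : EJ p M => Lpos y l) := by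
  unfold Lpos
  refine continuous_finsetSum _ fun l _ => continuous_finsetSum _ fun g _ => ?_
  exact (continuous_apply_apply l g).comp continuous_subtype_val

theorem gapE_cont (g : B → ZMod p) (l : ∀ b, Fin (M b + 1)) (b b' : B) :
    Continuous (fun x : VV p M => gapE x g l b b') := by
  unfold gapE
  have h : ∀ b, Continuous (fun x : VV p M => Lpos (x b) (l b)) := fun b =>
    (Lpos_cont (l b)).comp (continuous_apply b)
  have h2 : Continuous (fun x : VV p M => (x b).1 (l b) (g b)) :=
    (continuous_apply_apply (l b) (g b)).comp (continuous_subtype_val.comp (continuous_apply b))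
  exact ((h b).add h2).sub (h b')

theorem stair_cont (N : ℕ) (g : B → ZMod p) :
    Continuous (fun x : VV p M => stair N x g) := by
  unfold stair
  refine continuous_pi fun s => continuous_finsetSum _ fun l _ => continuous_finsetProd _ fun b _ =>
    continuous_finsetProd _ fun b' _ => continuous_const.max (gapE_cont g l b b')

theorem stair_nonneg (N : ℕ) (x : VV p M) (g : B → ZMod p) (s) : 0 ≤ stair N x g s :=
  Finset.sum_nonneg fun _ _ => Finset.prod_nonneg fun _ _ => Finset.prod_nonneg fun _ _ =>
    le_max_left _ _

theorem stair_ne_zero {N : ℕ} {x : VV p M} {g : B → ZMod p} {s} (h : stair N x g s ≠ 0) :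
    ∃ l : ∀ b, Fin (M b + 1), ∑ b, (l b : ℕ) = s ∧ ∀ b b', 0 < gapE x g l b b' := by
  obtain ⟨l, hl, h1⟩ := Finset.exists_ne_zero_of_sum_ne_zero h
  refine ⟨l, (Finset.mem_filter.1 hl).2, fun b b' => ?_⟩
  have h2 := Finset.prod_ne_zero_iff.1 (Finset.prod_ne_zero_iff.1 h1 b (Finset.mem_univ _)) b'
    (Finset.mem_univ _)
  by_contra hc
  exact h2 (max_eq_left (not_lt.1 hc))

theorem Lpos_step {M : ℕ} (y : EJ p M) (l l' : Fin (M + 1)) (h : l < l') (g : ZMod p) :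
    Lpos y l + y.1 l g ≤ Lpos y l' := by
  have h1 : y.1 l g ≤ ∑ g, y.1 l g :=
    Finset.single_le_sum (f := fun g => y.1 l g) (fun g _ => y.2.1 l g) (Finset.mem_univ g)
  have h2 : Lpos y l + ∑ g, y.1 l g =
      ∑ l' ∈ insert l (Finset.univ.filter (fun l' => l' < l)), ∑ g, y.1 l' g := by
    rw [Finset.sum_insert (by simp), Lpos, add_comm]
  refine (add_le_add_right h1 _).trans ?_
  rw [h2, Lpos]
  refine Finset.sum_le_sum_of_subset_of_nonneg ?_
    (fun k _ _ => Finset.sum_nonneg fun g _ => y.2.1 k g)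
  intro k hk
  simp only [Finset.mem_insert, Finset.mem_filter, Finset.mem_univ, true_and] at hk ⊢
  rcases hk with rfl | hk
  · exact h
  · exact hk.trans h

/-- Two tuples of levels whose intervals overlap are comparable. -/
theorem tuple_comparable {x : VV p M} {g g' : B → ZMod p} {l l' : ∀ b, Fin (M b + 1)}
    (h : ∀ b b', 0 < gapE x g l b b') (h' : ∀ b b', 0 < gapE x g' l' b b') {b b' : B}
    (h1 : l b < l' b) (h2 : l' b' < l b') : False := by
  have a1 := Lpos_step (x b) _ _ h1 (g b)
  have a2 := Lpos_step (x b') _ _ h2 (g' b')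
  have a3 := h b b'
  have a4 := h' b' b
  unfold gapE at a3 a4
  linarith

/-- A staircase path passes through at most one tuple of levels of each sum. -/
theorem tuple_eq {x : VV p M} {g g' : B → ZMod p} {l l' : ∀ b, Fin (M b + 1)}
    (h : ∀ b b', 0 < gapE x g l b b') (h' : ∀ b b', 0 < gapE x g' l' b b')
    (hs : ∑ b, (l b : ℕ) = ∑ b, (l' b : ℕ)) : l = l' := by
  by_cases hle : ∃ b, l b < l' b
  · obtain ⟨b, hb⟩ := hle
    exfalso
    have h3 : ∀ b', l b' ≤ l' b' := fun b' => not_lt.1 (fun h2 => tuple_comparable h h' hb h2)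
    have := Finset.sum_lt_sum (s := Finset.univ) (f := fun b => (l b : ℕ)) (g := fun b => (l' b : ℕ))
      (fun b' _ => h3 b') ⟨b, Finset.mem_univ _, hb⟩
    omega
  · push Not at hle
    have h4 := (Finset.sum_eq_sum_iff_of_le (s := Finset.univ) (f := fun b => (l' b : ℕ))
      (g := fun b => (l b : ℕ)) (fun b' _ => hle b')).1 hs.symm
    funext b
    exact Fin.ext (h4 b (Finset.mem_univ b)).symm

/-- The points of different index have disjoint supports. -/
theorem stair_disjoint {N : ℕ} {x : VV p M} {g g' : B → ZMod p} {s} (h : stair N x g s ≠ 0)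
    (h' : stair N x g' s ≠ 0) : g = g' := by
  obtain ⟨l, hl, h1⟩ := stair_ne_zero h
  obtain ⟨l', hl', h1'⟩ := stair_ne_zero h'
  have := tuple_eq h1 h1' (hl.trans hl'.symm)
  subst this
  funext b
  by_contra hc
  have a1 := h1 b b
  have a2 := h1' b b
  unfold gapE at a1 a2
  have := (x b).2.2.2 (l b) _ _ hc
  rcases mul_eq_zero.1 this with h0 | h0 <;> linarith

theorem exists_first {M : ℕ} (y : EJ p M) : ∃ l g, 0 < y.1 l g ∧ Lpos y l = 0 := by
  classical
  have hne : (Finset.univ.filter (fun l => ∃ g, y.1 l g ≠ 0)).Nonempty := by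
    obtain ⟨l, g, h, _⟩ := exists_top y
    exact ⟨l, by simp only [Finset.mem_filter, Finset.mem_univ, true_and]; exact ⟨g, h⟩⟩
  obtain ⟨l, hl, hmin⟩ := Finset.exists_min_image _ id hne
  obtain ⟨g, hg⟩ := (Finset.mem_filter.1 hl).2
  refine ⟨l, g, lt_of_le_of_ne (y.2.1 l g) (Ne.symm hg), ?_⟩
  refine Finset.sum_eq_zero fun l' hl' => Finset.sum_eq_zero fun g' _ => ?_
  by_contra hc
  have := hmin l' (Finset.mem_filter.2 ⟨Finset.mem_univ _, g', hc⟩)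
  exact absurd (Finset.mem_filter.1 hl').2 (not_lt.2 this)

/-- The weights do not all vanish: take the first nonempty intervals in each coordinate. -/
theorem stair_pos (N : ℕ) (hN : ∑ b, M b ≤ N) (x : VV p M) : ∃ g s, 0 < stair N x g s := by
  choose l g h1 h2 using fun b => exists_first (x b)
  have hs : ∑ b, (l b : ℕ) < N + 1 :=
    Nat.lt_succ_of_le ((Finset.sum_le_sum fun b _ => Nat.lt_succ_iff.1 (l b).2).trans hN)
  refine ⟨g, ⟨∑ b, (l b : ℕ), hs⟩, ?_⟩
  refine Finset.sum_pos' (fun _ _ => Finset.prod_nonneg fun _ _ => Finset.prod_nonneg fun _ _ =>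
    le_max_left _ _) ⟨l, by simp, ?_⟩
  refine Finset.prod_pos fun b _ => Finset.prod_pos fun b' _ => ?_
  rw [lt_max_iff]; right
  rw [gapE, h2, h2]; simpa using h1 b

theorem Lpos_shift {M : ℕ} (y : EJ p M) (l : Fin (M + 1)) : Lpos (shiftE y) l = Lpos y l := by
  refine Finset.sum_congr rfl fun l' _ => ?_
  exact Equiv.sum_comp (Equiv.subRight (1 : ZMod p)) (fun g => y.1 l' g)

theorem stair_shift [DecidableEq B] (N : ℕ) (x : VV p M) (b₀ : B) (g : B → ZMod p) :
    stair N (gV b₀ x) g = stair N x (g - Pi.single b₀ 1) := by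
  have hL : ∀ b l, Lpos ((gV b₀ x) b) l = Lpos (x b) l := by
    intro b l
    by_cases hb : b = b₀
    · subst hb; simp [gV, Lpos_shift]
    · simp [gV, Function.update_of_ne hb]
  have hx : ∀ b l, ((gV b₀ x) b).1 l (g b) = (x b).1 l ((g - Pi.single b₀ 1 : B → ZMod p) b) := by
    intro b l
    by_cases hb : b = b₀
    · subst hb; simp [gV, shiftE_apply]
    · simp [gV, Function.update_of_ne hb, Pi.single_eq_of_ne hb]
  funext s
  simp only [stair, gapE, hL, hx]

end Stair

section Homog
variable {N : ℕ}

/-- The point of the simplex with the given weights, normalized to sum one. It is meaningful only when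
the sum of the weights is nonzero. -/
def nrm (y : Fin (N + 1) → ℝ) : EuclideanSpace ℝ (Fin (N + 1)) := WithLp.toLp 2 (fun i => y i / ∑ k, y k)

/-- The homogeneous extension of a function on the simplex to the cone of nonnegative weights. -/
def homog (F : EuclideanSpace ℝ (Fin (N + 1)) → ℝ) (y : Fin (N + 1) → ℝ) : ℝ := (∑ k, y k) * F (nrm y)

theorem nrm_mem {y : Fin (N + 1) → ℝ} (hy : ∀ i, 0 ≤ y i) (hs : ∑ k, y k ≠ 0) : nrm y ∈ stdSimp N := by
  refine ⟨fun i => div_nonneg (hy i) (Finset.sum_nonneg fun k _ => hy k), ?_⟩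
  simp only [nrm, ← Finset.sum_div]
  exact div_self hs

theorem stdSimp_compact (N : ℕ) : IsCompact (stdSimp N) := by
  have h := (isCompact_stdSimplex ℝ (Fin (N + 1))).image
    (f := fun y : Fin (N + 1) → ℝ => (WithLp.toLp 2 y : EuclideanSpace ℝ (Fin (N + 1)))) (by fun_prop)
  convert h using 1
  ext x
  constructor
  · intro hx; exact ⟨x.ofLp, hx, rfl⟩
  · rintro ⟨y, hy, rfl⟩; exact hy

theorem homog_cont {F : EuclideanSpace ℝ (Fin (N + 1)) → ℝ} (hF : ContinuousOn F (stdSimp N)) :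
    ContinuousOn (homog F) {y | ∀ i, 0 ≤ y i} := by
  intro y hy
  by_cases hs : ∑ k, y k = 0
  · obtain ⟨C, hC⟩ := (stdSimp_compact N).exists_bound_of_continuousOn hF
    have h0 : homog F y = 0 := by simp [homog, hs]
    rw [ContinuousWithinAt, h0]
    apply squeeze_zero_norm' (a := fun y : Fin (N + 1) → ℝ => (∑ k, y k) * C)
    · filter_upwards [self_mem_nhdsWithin] with z hz
      by_cases hz0 : ∑ k, z k = 0
      · simp [homog, hz0]
      · rw [homog, norm_mul, Real.norm_of_nonneg (Finset.sum_nonneg fun k _ => hz k)]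
        exact mul_le_mul_of_nonneg_left (hC _ (nrm_mem hz hz0)) (Finset.sum_nonneg fun k _ => hz k)
    · have hc : Continuous (fun y : Fin (N + 1) → ℝ => (∑ k, y k) * C) := by fun_prop
      have := hc.tendsto y
      simp only [hs, zero_mul] at this
      exact this.mono_left nhdsWithin_le_nhds
  · have hne : ∀ᶠ z in nhdsWithin y {y : Fin (N + 1) → ℝ | ∀ i, 0 ≤ y i}, ∑ k, z k ≠ 0 := by
      have hc : Continuous (fun y : Fin (N + 1) → ℝ => ∑ k, y k) := by fun_prop
      exact (hc.continuousAt.eventually_ne hs).filter_mono nhdsWithin_le_nhds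
    have hn : ContinuousAt (nrm : (Fin (N + 1) → ℝ) → _) y := by
      have : ContinuousAt (fun y : Fin (N + 1) → ℝ => fun i => y i / ∑ k, y k) y := by
        refine continuousAt_pi.2 fun i => ?_
        exact ContinuousAt.div (continuous_apply i).continuousAt
          (continuous_finsetSum _ fun k _ => continuous_apply k).continuousAt hs
      exact ContinuousAt.comp (g := fun y : Fin (N + 1) → ℝ =>
        (WithLp.toLp 2 y : EuclideanSpace ℝ (Fin (N + 1)))) (by fun_prop) this
    have h1 : Filter.Tendsto (fun z => F (nrm z)) (nhdsWithin y {y | ∀ i, 0 ≤ y i}) (nhds (F (nrm y))) := by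
      refine (hF _ (nrm_mem hy hs)).tendsto.comp ?_
      rw [tendsto_nhdsWithin_iff]
      refine ⟨hn.tendsto.mono_left nhdsWithin_le_nhds, ?_⟩
      filter_upwards [self_mem_nhdsWithin, hne] with z hz hz0
      exact nrm_mem hz hz0
    have h2 : Continuous (fun y : Fin (N + 1) → ℝ => ∑ k, y k) := by fun_prop
    exact (h2.continuousWithinAt (s := {y : Fin (N + 1) → ℝ | ∀ i, 0 ≤ y i}) (x := y)).mul h1

end Homog

/-! ### The map from a join to `ℂ^d`, and Fourier inversion -/

section Zc
variable {p : ℕ} [NeZero p]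

/-- The point of `ℂ` determined by level `l`: a nonnegative multiple of a `p`-th root of unity. -/
def lev {M : ℕ} (y : EJ p M) (l : Fin (M + 1)) : ℂ := ∑ g, ZMod.stdAddChar g * (y.1 l g : ℂ)

/-- The `b`-th coordinate of an equivariant map from the join to a complex vector space, which adds up
the points of one level for `p = 2` and of two consecutive levels for odd `p`. -/
def zc {M : ℕ} (y : EJ p M) (b : ℕ) : ℂ :=
  ∑ l ∈ Finset.univ.filter (fun l : Fin (M + 1) => (l : ℕ) / qq p = b), lev y l

theorem zc_cont {M : ℕ} (b : ℕ) : Continuous (fun y : EJ p M => zc y b) := by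
  unfold zc lev
  refine continuous_finsetSum _ fun l _ => continuous_finsetSum _ fun g _ => ?_
  exact continuous_const.mul (Complex.continuous_ofReal.comp
    ((continuous_apply_apply l g).comp continuous_subtype_val))

theorem zc_shift {M : ℕ} (y : EJ p M) (b : ℕ) :
    zc (shiftE y) b = ZMod.stdAddChar (1 : ZMod p) * zc y b := by
  unfold zc lev
  simp only [Finset.mul_sum]
  refine Finset.sum_congr rfl fun l _ => ?_
  rw [← Equiv.sum_comp (Equiv.addRight (1 : ZMod p))]
  refine Finset.sum_congr rfl fun g _ => ?_
  simp only [Equiv.coe_addRight, shiftE_apply, add_sub_cancel_right, AddChar.map_add_eq_mul]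
  ring

theorem std_im (h2 : p = 2) (a : ZMod p) : (ZMod.stdAddChar a : ℂ).im = 0 := by
  have h : (ZMod.stdAddChar a : ℂ) ^ 2 = 1 := by
    rw [← AddChar.map_nsmul_eq_pow]
    have : 2 • a = 0 := by rw [nsmul_eq_mul, ← h2]; simp
    rw [this, AddChar.map_zero_eq_one]
  rcases sq_eq_one_iff.1 h with h | h <;> rw [h] <;> simp

theorem zc_im {M : ℕ} (h2 : p = 2) (y : EJ p M) (b : ℕ) : (zc y b).im = 0 := by
  simp [zc, lev, Complex.im_sum, std_im h2]

theorem lev_pow {M : ℕ} (y : EJ p M) (l) : (lev y l) ^ p = (((∑ g, y.1 l g) ^ p : ℝ) : ℂ) := by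
  have hp : p ≠ 0 := NeZero.ne p
  by_cases h : ∃ g, y.1 l g ≠ 0
  · obtain ⟨g, hg⟩ := h
    have h0 : ∀ g', g' ≠ g → y.1 l g' = 0 := fun g' h' =>
      (mul_eq_zero.1 (y.2.2.2 l _ _ h')).resolve_right hg
    rw [lev, Finset.sum_eq_single g (fun g' _ h' => by rw [h0 g' h']; simp) (by simp),
      Finset.sum_eq_single g (fun g' _ h' => h0 g' h') (by simp), mul_pow, ← AddChar.map_nsmul_eq_pow]
    have : p • g = 0 := by simp
    rw [this, AddChar.map_zero_eq_one, one_mul]; push_cast; rfl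
  · push Not at h
    simp [lev, h, hp]

/-- The equivariant map has no zero: for odd `p` two positive multiples of `p`-th roots of unity
cannot cancel, as `-1` is not a `p`-th root of unity. -/
theorem zc_ne {M : ℕ} [Fact p.Prime] (y : EJ p M) : ∃ b ≤ M / qq p, zc y b ≠ 0 := by
  have hp : p ≠ 0 := NeZero.ne p
  obtain ⟨l, g, hg, -⟩ := exists_top y
  have hpos : ∀ l, 0 ≤ ∑ g, y.1 l g := fun l => Finset.sum_nonneg fun g _ => y.2.1 l g
  have hl : 0 < ∑ g, y.1 l g :=
    Finset.sum_pos' (fun g _ => y.2.1 l g) ⟨g, Finset.mem_univ _, lt_of_le_of_ne (y.2.1 l g) hg.symm⟩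
  have hlev : lev y l ≠ 0 := by
    intro h0
    have := lev_pow y l
    rw [h0, zero_pow hp] at this
    have h1 : (∑ g, y.1 l g) ^ p = 0 := by exact_mod_cast this.symm
    exact (pow_pos hl p).ne' h1
  refine ⟨(l : ℕ) / qq p, Nat.div_le_div_right (Nat.lt_succ_iff.1 l.2), fun h0 => ?_⟩
  by_cases h2 : p = 2
  · have hq : qq p = 1 := if_pos h2
    apply hlev
    rw [← h0, zc, Finset.sum_eq_single l]
    · intro l' hl' hne
      simp only [hq, Nat.div_one, Finset.mem_filter, Finset.mem_univ, true_and] at hl'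
      exact absurd (Fin.ext hl') hne
    · simp
  · have hq : qq p = 2 := if_neg h2
    have hodd : Odd p := (Fact.out : p.Prime).odd_of_ne_two h2
    rw [zc, ← Finset.add_sum_erase _ _ (a := l) (by simp)] at h0
    set S := (Finset.univ.filter (fun l' : Fin (M + 1) => (l' : ℕ) / qq p = l / qq p)).erase l with hS
    rcases Finset.eq_empty_or_nonempty S with hE | ⟨l', hl'⟩
    · rw [hE] at h0; simp at h0; exact hlev h0
    · have hS1 : S = {l'} := by
        refine Finset.eq_singleton_iff_unique_mem.2 ⟨hl', fun l'' hl'' => ?_⟩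
        simp only [hS, Finset.mem_erase, Finset.mem_filter, Finset.mem_univ, true_and, hq] at hl' hl''
        apply Fin.ext
        have a1 := hl'.1
        have a2 := hl''.1
        rw [Ne, Fin.ext_iff] at a1 a2
        omega
      rw [hS1, Finset.sum_singleton] at h0
      have e1 := lev_pow y l
      have e2 := lev_pow y l'
      rw [eq_neg_of_add_eq_zero_left h0, hodd.neg_pow, e2] at e1
      have e3 : -(∑ g, y.1 l' g) ^ p = (∑ g, y.1 l g) ^ p := by exact_mod_cast e1
      have := pow_pos hl p
      have := pow_nonneg (hpos l') p
      linarith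

end Zc

section Four
variable {p : ℕ} [NeZero p] {B : Type*} [Fintype B] [DecidableEq B]

/-- The pairing of `(ℤ/p)^B` with its characters. -/
def psi (χ g : B → ZMod p) : ℂ := ZMod.stdAddChar (∑ b, χ b * g b)

theorem psi_add (χ g g' : B → ZMod p) : psi χ (g + g') = psi χ g * psi χ g' := by
  simp [psi, mul_add, Finset.sum_add_distrib, AddChar.map_add_eq_mul]

theorem psi_single (χ : B → ZMod p) (b : B) :
    psi χ (Pi.single b 1) = ZMod.stdAddChar (χ b) := by
  unfold psi
  rw [Finset.sum_eq_single b] <;> simp +contextual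

theorem psi_im (h2 : p = 2) (χ g : B → ZMod p) : (psi χ g).im = 0 := std_im h2 _

theorem psi_neg (χ g : B → ZMod p) : psi (-χ) g = (starRingEnd ℂ) (psi χ g) := by
  unfold psi
  have : ∑ b, (-χ) b * g b = -∑ b, χ b * g b := by simp
  rw [this, AddChar.map_neg_eq_conj]

theorem psi_orth (v : B → ZMod p) (hv : v ≠ 0) : ∑ χ : B → ZMod p, psi χ v = 0 := by
  let φ : (B → ZMod p) →+ ZMod p :=
    { toFun := fun χ => ∑ b, χ b * v b
      map_zero' := by simp
      map_add' := fun a b => by simp [add_mul, Finset.sum_add_distrib] }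
  have h := AddChar.sum_eq_zero_of_ne_one (ψ := (ZMod.stdAddChar (N := p)).compAddMonoidHom φ) ?_
  · exact h
  · intro h1
    obtain ⟨b, hb⟩ := Function.ne_iff.1 hv
    have h2 := DFunLike.congr_fun h1 (Pi.single b 1)
    rw [AddChar.one_apply, AddChar.compAddMonoidHom_apply, ← AddChar.map_zero_eq_one (ZMod.stdAddChar (N := p))] at h2
    have h3 := ZMod.injective_stdAddChar h2
    apply hb
    have h4 : φ (Pi.single b 1) = v b := by
      show ∑ b', (Pi.single b 1 : B → ZMod p) b' * v b' = v b
      rw [Finset.sum_eq_single b] <;> simp +contextual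
    rw [h4] at h3
    simpa using h3

/-- A function on `(ℤ/p)^B` all of whose nontrivial Fourier coefficients vanish is constant. -/
theorem fourier_const (φ : (B → ZMod p) → ℂ) (h : ∀ χ, χ ≠ 0 → ∑ g, psi χ g * φ g = 0) (a a') :
    φ a = φ a' := by
  have key : ∀ a, (Fintype.card (B → ZMod p) : ℂ) * φ a = ∑ g, φ g := by
    intro a
    have h1 : ∑ χ, psi χ (-a) * ∑ g, psi χ g * φ g = ∑ g, φ g := by
      rw [Finset.sum_eq_single 0 (fun χ _ hχ => by rw [h χ hχ, mul_zero]) (by simp)]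
      simp [psi]
    have h2 : ∑ χ, psi χ (-a) * ∑ g, psi χ g * φ g = (Fintype.card (B → ZMod p) : ℂ) * φ a := by
      simp only [Finset.mul_sum]
      rw [Finset.sum_comm, Finset.sum_eq_single a]
      · simp only [← mul_assoc, ← psi_add, neg_add_cancel]
        simp [psi]
      · intro g _ hg
        simp only [← mul_assoc, ← psi_add, ← Finset.sum_mul]
        rw [psi_orth (-a + g) (fun h0 => hg (neg_add_eq_zero.1 h0).symm), zero_mul]
      · simp
    rw [← h2, h1]
  have hne : (Fintype.card (B → ZMod p) : ℂ) ≠ 0 := by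
    exact_mod_cast Fintype.card_ne_zero
  exact mul_left_cancel₀ hne ((key a).trans (key a').symm)

/-- A set of nonzero characters containing one of `χ` and `-χ` for each `χ ≠ 0`. For real-valued
functions the Fourier coefficients at these characters determine the others. For `p = 2` it consists of
all nonzero characters. -/
theorem exists_half (p : ℕ) [Fact p.Prime] (B : Type*) [Fintype B] :
    ∃ H : Finset (B → ZMod p), 0 ∉ H ∧
      qq p * H.card ≤ p ^ Fintype.card B - 1 ∧ ∀ χ, χ ≠ 0 → χ ∈ H ∨ -χ ∈ H := by
  classical
  have hc : ((Finset.univ : Finset (B → ZMod p)).erase 0).card = p ^ Fintype.card B - 1 := by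
    rw [Finset.card_erase_of_mem (Finset.mem_univ _)]; simp
  by_cases h2 : p = 2
  · have hq : qq p = 1 := if_pos h2
    exact ⟨Finset.univ.erase 0, by simp, by rw [hc, hq, one_mul], fun χ h => Or.inl (by simp [h])⟩
  · have hq : qq p = 2 := if_neg h2
    let o := Fintype.equivFin (B → ZMod p)
    let H := Finset.univ.filter (fun χ : B → ZMod p => o χ < o (-χ))
    have h0 : (0 : B → ZMod p) ∉ H := by simp [H]
    refine ⟨H, h0, ?_, fun χ hχ => ?_⟩
    · have hd : Disjoint H (H.image Neg.neg) := by
        rw [Finset.disjoint_left]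
        intro χ h1 h3
        obtain ⟨χ', h4, rfl⟩ := Finset.mem_image.1 h3
        simp only [H, Finset.mem_filter, Finset.mem_univ, true_and, neg_neg] at h1 h4
        exact absurd h1 (not_lt.2 h4.le)
      have hi : (H.image Neg.neg).card = H.card := Finset.card_image_of_injective _ neg_injective
      rw [hq, two_mul, ← hc]
      nth_rewrite 2 [← hi]
      rw [← Finset.card_union_of_disjoint hd]
      apply Finset.card_le_card
      intro χ hχ
      rw [Finset.mem_erase]
      refine ⟨?_, Finset.mem_univ _⟩
      rintro rfl
      rcases Finset.mem_union.1 hχ with h | h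
      · exact h0 h
      · obtain ⟨χ', h4, h5⟩ := Finset.mem_image.1 h
        rw [neg_eq_zero] at h5; subst h5; exact h0 h4
    · simp only [H, Finset.mem_filter, Finset.mem_univ, true_and, neg_neg]
      apply lt_or_gt_of_ne
      intro h
      have h := o.injective h
      apply hχ
      funext b
      have hb : χ b = - χ b := congrFun h b
      have h3 : (2 : ZMod p) * χ b = 0 := by linear_combination hb
      refine (mul_eq_zero.1 h3).resolve_left (fun h4 => h2 ?_)
      have : ((2 : ℕ) : ZMod p) = 0 := by exact_mod_cast h4
      rw [ZMod.natCast_eq_zero_iff] at this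
      exact (Nat.prime_dvd_prime_iff_eq Fact.out Nat.prime_two).1 this

/-- The last coordinate in which a nonzero character is nontrivial. -/
theorem exists_lead {e : ℕ} (χ : Fin e → ZMod p) (h : χ ≠ 0) :
    ∃ ι, χ ι ≠ 0 ∧ ∀ ι', ι < ι' → χ ι' = 0 := by
  classical
  obtain ⟨i, hi⟩ := Function.ne_iff.1 h
  obtain ⟨ι, h1, h2⟩ := Finset.exists_max_image (Finset.univ.filter (fun i => χ i ≠ 0)) id
    ⟨i, by simpa using hi⟩
  refine ⟨ι, (Finset.mem_filter.1 h1).2, fun ι' h' => ?_⟩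
  by_contra hc
  exact absurd h' (not_lt.2 (h2 ι' (by simp [hc])))

end Four

/-! ### The system of equations -/

section Eqv
variable {p : ℕ} [NeZero p] {I : Type*} [DecidableEq I] {M : I → ℕ}

/-- Continuous functions on the product of joins that are equivariant with character `α`, and
real-valued if `p = 2`. -/
structure Eqv (α : I → ZMod p) (h : VV p M → ℂ) : Prop where
  cont : Continuous h
  eqv : ∀ i x, h (gV i x) = ZMod.stdAddChar (α i) * h x
  real : p = 2 → ∀ x, (h x).im = 0

theorem Eqv.mul {α β : I → ZMod p} {h k : VV p M → ℂ} (hh : Eqv α h) (hk : Eqv β k) :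
    Eqv (α + β) (fun x => h x * k x) where
  cont := hh.cont.mul hk.cont
  eqv i x := by
    rw [hh.eqv, hk.eqv, Pi.add_apply, AddChar.map_add_eq_mul]; ring
  real h2 x := by simp [hh.real h2 x, hk.real h2 x]

theorem Eqv.sum {ι : Type*} {s : Finset ι} {α : I → ZMod p} {h : ι → VV p M → ℂ}
    (hh : ∀ a ∈ s, Eqv α (h a)) : Eqv α (fun x => ∑ a ∈ s, h a x) where
  cont := continuous_finsetSum _ fun a ha => (hh a ha).cont
  eqv i x := by
    rw [Finset.mul_sum]; exact Finset.sum_congr rfl fun a ha => (hh a ha).eqv i x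
  real h2 x := by
    rw [Complex.im_sum]; exact Finset.sum_eq_zero fun a ha => (hh a ha).real h2 x

theorem Eqv.conj {α : I → ZMod p} {h : VV p M → ℂ} (hh : Eqv α h) :
    Eqv (-α) (fun x => (starRingEnd ℂ) (h x)) where
  cont := Complex.continuous_conj.comp hh.cont
  eqv i x := by
    rw [hh.eqv, map_mul, Pi.neg_apply, AddChar.map_neg_eq_conj]
  real h2 x := by simp [hh.real h2 x]

theorem Eqv.sub {α : I → ZMod p} {h k : VV p M → ℂ} (hh : Eqv α h) (hk : Eqv α k) :
    Eqv α (fun x => h x - k x) where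
  cont := hh.cont.sub hk.cont
  eqv i x := by rw [hh.eqv, hk.eqv]; ring
  real h2 x := by simp [hh.real h2 x, hk.real h2 x]

theorem Eqv_zc (i : I) (b : ℕ) :
    Eqv (Pi.single i 1) (fun x : VV p M => zc (x i) b) where
  cont := (zc_cont b).comp (continuous_apply i)
  eqv j x := by
    by_cases h : j = i
    · subst h; simp [gV, zc_shift]
    · simp [gV, Function.update_of_ne (Ne.symm h), Pi.single_eq_of_ne h]
  real h2 x := zc_im h2 _ _

end Eqv

section Sys
variable {p k m : ℕ} {e ρ : Fin (m + 1) → ℕ}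

/-- The index set of the group: one coordinate for each direction `z i`, and `e ℓ` coordinates for
the `ℓ`-th simplex. -/
abbrev IX (k m : ℕ) (e : Fin (m + 1) → ℕ) := Fin k ⊕ (Σ ℓ : Fin (m + 1), Fin (e ℓ))

/-- The equations led by a direction `z j`: Hermitian orthogonality to `z i` for `i < j`, for odd `p`
also bilinear orthogonality to `z i` for `i ≤ j`, and the equality of the averages of `z j ∘ f ℓ` for
`ℓ = 0` and `ℓ ≠ 0`. -/
abbrev JX (p k m : ℕ) := Σ j : Fin k, (Fin (j : ℕ) ⊕ ((Fin (j + 1 : ℕ) × Fin (qq p - 1)) ⊕ Fin m))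

/-- The equations led by a coordinate of the `ℓ`-th simplex: the vanishing of the nontrivial Fourier
coefficients of the complex functions `z i ∘ f ℓ`, and of those in `H ℓ` of `ρ ℓ + 1` real functions. -/
abbrev JB (p k : ℕ) {m : ℕ} (e ρ : Fin (m + 1) → ℕ) (H : ∀ ℓ, Finset (Fin (e ℓ) → ZMod p)) :=
  Σ ℓ : Fin (m + 1), (({χ : Fin (e ℓ) → ZMod p // χ ≠ 0} × Fin k) ⊕ ({χ // χ ∈ H ℓ} × Fin (ρ ℓ + 1)))

/-- The character `χ` of the `ℓ`-th factor as a character of the whole group. -/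
def blk (k : ℕ) (ℓ : Fin (m + 1)) (χ : Fin (e ℓ) → ZMod p) : IX k m e → ZMod p :=
  Sum.elim 0 (fun s => (Pi.single ℓ χ : ∀ ℓ, Fin (e ℓ) → ZMod p) s.1 s.2)

/-- The characters of the equations of `JX`. -/
def alX (e : Fin (m + 1) → ℕ) : JX p k m → IX k m e → ZMod p
  | ⟨j, Sum.inl i⟩ => Pi.single (Sum.inl j) 1 + -Pi.single (Sum.inl ⟨i, i.2.trans j.2⟩) 1
  | ⟨j, Sum.inr (Sum.inl i)⟩ =>
      Pi.single (Sum.inl j) 1 + Pi.single (Sum.inl ⟨i.1, (Nat.lt_succ_iff.1 i.1.2).trans_lt j.2⟩) 1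
  | ⟨j, Sum.inr (Sum.inr _)⟩ => Pi.single (Sum.inl j) 1

/-- The characters of the equations of `JB`. -/
def alB (H : ∀ ℓ, Finset (Fin (e ℓ) → ZMod p)) : JB p k e ρ H → IX k m e → ZMod p
  | ⟨ℓ, Sum.inl χ⟩ => blk k ℓ χ.1.1 + Pi.single (Sum.inl χ.2) 1
  | ⟨ℓ, Sum.inr χ⟩ => blk k ℓ χ.1.1

/-- The order for triangularity: directions in their given order, then the positions within the simplex
factors, which are independent of each other. -/
def rkX : IX k m e → ℕ := Sum.elim (fun i => i) (fun s => k + s.2)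

variable [Fact p.Prime]

theorem alX_lead (a : JX p k m) : alX e a (Sum.inl a.1) ≠ 0 := by
  rcases a with ⟨j, i | i | i⟩
  · have : j ≠ ⟨i, i.2.trans j.2⟩ := by
      intro h; have := congrArg Fin.val h; have := i.2; simp at *; omega
    simp [alX, this]
  · have hp : p ≠ 2 := by
      intro h
      have h1 := i.2.2
      have hq : qq p = 1 := if_pos h
      omega
    have h2 : (1 + 1 : ZMod p) ≠ 0 := by
      intro h
      have : ((2 : ℕ) : ZMod p) = 0 := by push_cast; linear_combination h
      rw [ZMod.natCast_eq_zero_iff] at this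
      exact hp ((Nat.prime_dvd_prime_iff_eq Fact.out Nat.prime_two).1 this)
    simp only [alX, Pi.add_apply, Pi.single_apply, if_true, Sum.inl.injEq]
    split_ifs
    · exact h2
    · simp
  · simp [alX]

theorem alX_tri (a : JX p k m) (i : IX k m e) (hi : i ≠ Sum.inl a.1)
    (hr : rkX (Sum.inl a.1 : IX k m e) ≤ rkX i) : alX e a i = 0 := by
  rcases i with i | i
  · have h1 : i ≠ a.1 := fun h => hi (congrArg _ h)
    have h2 : (a.1 : ℕ) ≤ i := hr
    have h3 : (i : ℕ) ≠ a.1 := fun h => h1 (Fin.ext h)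
    rcases a with ⟨j, b | b | b⟩
    · have : i ≠ ⟨b, b.2.trans j.2⟩ := by
        intro h; have := congrArg Fin.val h; have := b.2; simp at *; omega
      simp_all [alX]
    · have : i ≠ ⟨b.1, (Nat.lt_succ_iff.1 b.1.2).trans_lt j.2⟩ := by
        intro h; have := congrArg Fin.val h; have := b.1.2; simp at *; omega
      simp_all [alX]
    · simp_all [alX]
  · rcases a with ⟨j, b | b | b⟩ <;> simp [alX]

/-- The component of the character of an equation of `JB` in its simplex factor. -/
def chiB (H : ∀ ℓ, Finset (Fin (e ℓ) → ZMod p)) : (a : JB p k e ρ H) → Fin (e a.1) → ZMod p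
  | ⟨_, Sum.inl χ⟩ => χ.1.1
  | ⟨_, Sum.inr χ⟩ => χ.1.1

theorem alB_inr (H : ∀ ℓ, Finset (Fin (e ℓ) → ZMod p)) (a : JB p k e ρ H)
    (s : Σ ℓ : Fin (m + 1), Fin (e ℓ)) :
    alB H a (Sum.inr s) = (Pi.single a.1 (chiB H a) : ∀ ℓ, Fin (e ℓ) → ZMod p) s.1 s.2 := by
  rcases a with ⟨ℓ, χ | χ⟩ <;> simp [alB, chiB, blk]

/-- Equivariant systems of the shape needed have a common zero on a product of joins that is small enough:
the joins of the directions map to `ℂ^d` (`ℝ^d` if `p = 2`), and the dimensions of those of the `ℓ`-th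
factor add up to at most `N ℓ`, so that their product maps to configurations in `Δ_{N ℓ}`. -/
theorem system_zero (d : ℕ) (N : Fin (m + 1) → ℕ) (H : ∀ ℓ, Finset (Fin (e ℓ) → ZMod p))
    (H0 : ∀ ℓ, 0 ∉ H ℓ) (Hc : ∀ ℓ, qq p * (H ℓ).card ≤ p ^ e ℓ - 1) (hk : m + qq p * k ≤ d)
    (hN : ∀ ℓ, (p ^ e ℓ - 1) * (qq p * k + ρ ℓ + 1) ≤ N ℓ) :
    ∃ M : IX k m e → ℕ, (∀ i : Fin k, M (Sum.inl i) / qq p < d) ∧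
      (∀ ℓ, ∑ ι, M (Sum.inr ⟨ℓ, ι⟩) ≤ N ℓ) ∧
      ∀ (hX : JX p k m → VV p M → ℂ) (hB : JB p k e ρ H → VV p M → ℂ),
        (∀ a, Eqv (alX e a) (hX a)) → (∀ a, Eqv (alB H a) (hB a)) →
        ∃ x, (∀ a, hX a x = 0) ∧ ∀ a, hB a x = 0 := by
  classical
  have hq : 1 ≤ qq p := by unfold qq; split_ifs <;> omega
  have htop : ∀ a : JB p k e ρ H, ∃ ι, chiB H a ι ≠ 0 ∧ ∀ ι', ι < ι' → chiB H a ι' = 0 := by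
    rintro ⟨ℓ, χ | χ⟩
    · exact exists_lead _ χ.1.2
    · refine exists_lead _ (fun h => ?_)
      have h3 : χ.1.1 = 0 := h
      have := χ.1.2
      rw [h3] at this
      exact H0 ℓ this
  choose tp htp1 htp2 using htop
  let lead : JX p k m ⊕ JB p k e ρ H → IX k m e :=
    Sum.elim (fun a => Sum.inl a.1) (fun a => Sum.inr ⟨a.1, tp a⟩)
  let M : IX k m e → ℕ := fun i => qq p * (Finset.univ.filter (fun j => lead j = i)).card
  refine ⟨M, fun i => ?_, fun ℓ => ?_, fun hX hB hhX hhB => ?_⟩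
  · have h1 : M (Sum.inl i) / qq p = (Finset.univ.filter (fun j => lead j = Sum.inl i)).card :=
      Nat.mul_div_cancel_left _ hq
    have h2 : (Finset.univ.filter (fun j => lead j = Sum.inl i)) ⊆
        (Finset.univ : Finset (Fin (i : ℕ) ⊕ ((Fin (i + 1 : ℕ) × Fin (qq p - 1)) ⊕ Fin m))).image
          (fun b => (Sum.inl ⟨i, b⟩ : JX p k m ⊕ JB p k e ρ H)) := by
      rintro (⟨j, b⟩ | b) hj
      · simp only [lead, Finset.mem_filter, Finset.mem_univ, true_and, Sum.elim_inl,
          Sum.inl.injEq] at hj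
        subst hj
        exact Finset.mem_image_of_mem _ (Finset.mem_univ b)
      · simp [lead] at hj
    have h3 := (Finset.card_le_card h2).trans Finset.card_image_le
    rw [h1]
    refine lt_of_le_of_lt h3 ?_
    rw [Finset.card_univ]
    simp only [Fintype.card_sum, Fintype.card_prod, Fintype.card_fin]
    have hi := i.2
    have h4 : (i + 1 : ℕ) * qq p ≤ k * qq p := Nat.mul_le_mul_right _ hi
    obtain ⟨q, hq'⟩ : ∃ q, qq p = q + 1 := ⟨qq p - 1, by omega⟩
    rw [hq'] at h4 hk ⊢
    simp only [Nat.add_sub_cancel]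
    nlinarith
  · have h1 : ∑ ι, M (Sum.inr ⟨ℓ, ι⟩) =
        qq p * ∑ ι, (Finset.univ.filter (fun j => lead j = Sum.inr ⟨ℓ, ι⟩)).card := by
      rw [Finset.mul_sum]
    have h2 : ∑ ι, (Finset.univ.filter (fun j => lead j = Sum.inr ⟨ℓ, ι⟩)).card =
        (Finset.univ.biUnion (fun ι => Finset.univ.filter (fun j => lead j = Sum.inr ⟨ℓ, ι⟩))).card := by
      rw [Finset.card_biUnion]
      intro ι _ ι' _ hne
      rw [Function.onFun, Finset.disjoint_left]
      intro j hj hj'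
      simp only [Finset.mem_filter, Finset.mem_univ, true_and] at hj hj'
      rw [hj] at hj'
      simp at hj'
      exact hne hj'
    have h3 : (Finset.univ.biUnion (fun ι => Finset.univ.filter (fun j => lead j = Sum.inr ⟨ℓ, ι⟩))) ⊆
        (Finset.univ : Finset (({χ : Fin (e ℓ) → ZMod p // χ ≠ 0} × Fin k) ⊕
          ({χ // χ ∈ H ℓ} × Fin (ρ ℓ + 1)))).image
          (fun b => (Sum.inr ⟨ℓ, b⟩ : JX p k m ⊕ JB p k e ρ H)) := by
      intro j hj
      obtain ⟨ι, -, hj⟩ := Finset.mem_biUnion.1 hj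
      rcases j with j | ⟨ℓ', b⟩
      · simp [lead] at hj
      · simp only [lead, Finset.mem_filter, Finset.mem_univ, true_and, Sum.elim_inr,
          Sum.inr.injEq, Sigma.mk.injEq] at hj
        obtain ⟨rfl, -⟩ := hj
        exact Finset.mem_image_of_mem _ (Finset.mem_univ b)
    have h4 := (Finset.card_le_card h3).trans Finset.card_image_le
    rw [Finset.card_univ] at h4
    have h5 : Fintype.card {χ : Fin (e ℓ) → ZMod p // χ ≠ 0} = p ^ e ℓ - 1 := by
      rw [Fintype.card_subtype_compl]; simp
    simp only [Fintype.card_sum, Fintype.card_prod, Fintype.card_fin, h5, Fintype.card_coe] at h4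
    rw [h1, h2]
    refine le_trans ?_ (hN ℓ)
    refine (Nat.mul_le_mul_left _ h4).trans ?_
    have h6 := Nat.mul_le_mul_right (ρ ℓ + 1) (Hc ℓ)
    nlinarith
  · suffices hbu : ∃ x, ∀ j, Sum.elim hX hB j x = 0 by
      obtain ⟨x, hx⟩ := hbu
      exact ⟨x, fun a => hx (Sum.inl a), fun a => hx (Sum.inr a)⟩
    refine borsuk_ulam M rkX (Sum.elim (alX e) (alB H)) lead ?_ ?_ (fun i => le_rfl)
      (Sum.elim hX hB) ?_ ?_ ?_
    · rintro (a | a)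
      · exact alX_lead a
      · have := htp1 a
        simpa [lead, alB_inr] using this
    · rintro (a | a) i hi hr
      · exact alX_tri a i hi hr
      · rcases i with i | ⟨ℓ, ι⟩
        · have h1 : k + (tp a : ℕ) ≤ i := hr
          have := i.2
          omega
        · simp only [Sum.elim_inr, alB_inr]
          by_cases hl : ℓ = a.1
          · subst hl
            rw [Pi.single_eq_same]
            apply htp2
            have h1 : k + (tp a : ℕ) ≤ k + ι := hr
            refine lt_of_le_of_ne (by rw [Fin.le_def]; omega) (fun h => hi ?_)
            simp [lead, h]
          · rw [Pi.single_eq_of_ne hl]; rfl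
    · rintro (a | a)
      · exact (hhX a).cont
      · exact (hhB a).cont
    · rintro (a | a) i x
      · exact (hhX a).eqv i x
      · exact (hhB a).eqv i x
    · rintro h2 (a | a) x
      · exact (hhX a).real h2 x
      · exact (hhB a).real h2 x

end Sys

/-! ### The zero of the system -/

section Core
variable {p k m : ℕ} [NeZero p] {e : Fin (m + 1) → ℕ} {M : IX k m e → ℕ}

/-- The coordinates of the `ℓ`-th simplex factor. -/
def xb (ℓ : Fin (m + 1)) (x : VV p M) : VV p (fun ι : Fin (e ℓ) => M (Sum.inr ⟨ℓ, ι⟩)) :=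
  fun ι => x (Sum.inr ⟨ℓ, ι⟩)

theorem xb_self (ℓ : Fin (m + 1)) (ι : Fin (e ℓ)) (x : VV p M) :
    xb ℓ (gV (Sum.inr ⟨ℓ, ι⟩) x) = gV ι (xb ℓ x) := by
  funext ι'
  by_cases h : ι' = ι
  · subst h; simp [xb, gV]
  · have : (Sum.inr ⟨ℓ, ι'⟩ : IX k m e) ≠ Sum.inr ⟨ℓ, ι⟩ := by simpa using h
    simp [xb, gV, Function.update_of_ne h, Function.update_of_ne this]

theorem xb_other (ℓ : Fin (m + 1)) (i : IX k m e) (hi : ∀ ι, i ≠ Sum.inr ⟨ℓ, ι⟩) (x : VV p M) :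
    xb ℓ (gV i x) = xb ℓ x := by
  funext ι'
  simp [xb, gV, Function.update_of_ne (hi ι').symm]

/-- The Fourier coefficient at `χ` of the homogenized values of `F` on the staircase configuration. -/
def AA {N : ℕ} (ℓ : Fin (m + 1)) (χ : Fin (e ℓ) → ZMod p) (F : EuclideanSpace ℝ (Fin (N + 1)) → ℝ)
    (x : VV p M) : ℂ :=
  ∑ g, psi χ g * ((homog F (stair N (xb ℓ x) g) : ℝ) : ℂ)

theorem Eqv_AA {N : ℕ} (ℓ : Fin (m + 1)) (χ : Fin (e ℓ) → ZMod p)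
    {F : EuclideanSpace ℝ (Fin (N + 1)) → ℝ} (hF : ContinuousOn F (stdSimp N)) :
    Eqv (blk k ℓ χ) (AA (M := M) ℓ χ F) where
  cont := by
    have hxb : Continuous (fun x : VV p M => xb ℓ x) :=
      continuous_pi fun ι => by
        show Continuous fun x : VV p M => x (Sum.inr ⟨ℓ, ι⟩)
        exact continuous_apply (Sum.inr ⟨ℓ, ι⟩ : IX k m e)
    refine continuous_finsetSum _ fun g _ => continuous_const.mul (Complex.continuous_ofReal.comp ?_)
    exact (homog_cont hF).comp_continuous ((stair_cont N g).comp hxb)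
      (fun x => stair_nonneg N (xb ℓ x) g)
  eqv i x := by
    by_cases h : ∃ ι, i = Sum.inr ⟨ℓ, ι⟩
    · obtain ⟨ι, rfl⟩ := h
      have h1 : blk (p := p) k ℓ χ (Sum.inr ⟨ℓ, ι⟩) = χ ι := by simp [blk]
      rw [h1, AA, AA, xb_self, ← Equiv.sum_comp (Equiv.addRight (Pi.single ι 1 : Fin (e ℓ) → ZMod p)),
        Finset.mul_sum]
      refine Finset.sum_congr rfl fun g _ => ?_
      simp only [Equiv.coe_addRight, stair_shift, add_sub_cancel_right, psi_add, psi_single]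
      ring
    · push Not at h
      have h1 : blk (p := p) k ℓ χ i = 0 := by
        rcases i with i | ⟨ℓ', ι⟩
        · rfl
        · have : ℓ' ≠ ℓ := by rintro rfl; exact h ι rfl
          simp [blk, Pi.single_eq_of_ne this]
      rw [h1, AddChar.map_zero_eq_one, one_mul, AA, AA, xb_other ℓ i h]
  real h2 x := by
    simp [AA, Complex.im_sum, psi_im h2]

theorem AA_neg {N : ℕ} (ℓ : Fin (m + 1)) (χ : Fin (e ℓ) → ZMod p)
    (F : EuclideanSpace ℝ (Fin (N + 1)) → ℝ) (x : VV p M) :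
    AA ℓ (-χ) F x = (starRingEnd ℂ) (AA ℓ χ F x) := by
  simp [AA, psi_neg]

theorem Eqv_div {α : IX k m e → ZMod p} {h h' : VV p M → ℂ} (hh : Eqv α h) (hh' : Eqv 0 h')
    (hne : ∀ x, h' x ≠ 0) : Eqv α (fun x => h x / h' x) where
  cont := hh.cont.div hh'.cont hne
  eqv i x := by rw [hh.eqv, hh'.eqv]; simp [mul_div_assoc]
  real h2 x := by
    rw [Complex.div_im]; simp [hh.real h2 x, hh'.real h2 x]

theorem homog_one {N : ℕ} (y : Fin (N + 1) → ℝ) : homog (fun _ => 1) y = ∑ s, y s := by simp [homog]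

theorem AA_one_ne {N : ℕ} (ℓ : Fin (m + 1)) (hN : ∑ ι, M (Sum.inr ⟨ℓ, ι⟩) ≤ N) (x : VV p M) :
    AA (N := N) ℓ 0 (fun _ => 1) x ≠ 0 := by
  obtain ⟨g, s, h⟩ := stair_pos N hN (xb ℓ x)
  have h1 : AA (N := N) ℓ 0 (fun _ => 1) x =
      ((∑ g, ∑ s, stair N (xb ℓ x) g s : ℝ) : ℂ) := by
    simp [AA, homog_one, psi]
  rw [h1]
  norm_cast
  have h2 : ∀ g, 0 ≤ ∑ s, stair N (xb ℓ x) g s := fun g => Finset.sum_nonneg fun s _ => stair_nonneg _ _ _ _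
  refine (Finset.sum_pos' (fun g _ => h2 g) ⟨g, Finset.mem_univ _, ?_⟩).ne'
  exact Finset.sum_pos' (fun s _ => stair_nonneg _ _ _ _) ⟨s, Finset.mem_univ _, h⟩

end Core

/-- There are functionals `z i`, nonzero, orthogonal and (for odd `p`) isotropic, and configurations
`X ℓ` of points with pairwise disjoint supports in the `ℓ`-th simplex, indexed by `(ℤ/p)^{e ℓ}`, such that
the given real functions are constant on each configuration and all `z i ∘ f ℓ` take a common value on all
configurations. Besides the given `ρ ℓ` functions, the constant function `1` is included, so that
all points of a configuration have equal mass before normalization. -/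
theorem core (p k m d : ℕ) [Fact p.Prime] (e ρ N : Fin (m + 1) → ℕ) (hk : m + qq p * k ≤ d)
    (hN : ∀ ℓ, (p ^ e ℓ - 1) * (qq p * k + ρ ℓ + 1) ≤ N ℓ)
    (f : ∀ ℓ, EuclideanSpace ℝ (Fin (N ℓ + 1)) → EuclideanSpace ℝ (Fin d))
    (hf : ∀ ℓ, ContinuousOn (f ℓ) (stdSimp (N ℓ)))
    (F : ∀ ℓ, Fin (ρ ℓ) → EuclideanSpace ℝ (Fin (N ℓ + 1)) → ℝ)
    (hF : ∀ ℓ u, ContinuousOn (F ℓ u) (stdSimp (N ℓ))) :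
    ∃ (z : Fin k → Fin d → ℂ)
      (X : ∀ ℓ, (Fin (e ℓ) → ZMod p) → EuclideanSpace ℝ (Fin (N ℓ + 1))),
      (∀ i, z i ≠ 0) ∧ (p = 2 → ∀ i b, (z i b).im = 0) ∧
      (∀ i j, i ≠ j → ∑ b, z i b * (starRingEnd ℂ) (z j b) = 0) ∧
      (p ≠ 2 → ∀ i j, ∑ b, z i b * z j b = 0) ∧
      (∀ ℓ g, X ℓ g ∈ stdSimp (N ℓ)) ∧
      (∀ ℓ g g' s, X ℓ g s ≠ 0 → X ℓ g' s ≠ 0 → g = g') ∧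
      (∀ ℓ u g g', F ℓ u (X ℓ g) = F ℓ u (X ℓ g')) ∧
      (∀ i ℓ ℓ' g g', ∑ b, z i b * (f ℓ (X ℓ g) b : ℂ) = ∑ b, z i b * (f ℓ' (X ℓ' g') b : ℂ)) := by
  choose H H0 Hc Hcov using fun ℓ => exists_half p (Fin (e ℓ))
  simp only [Fintype.card_fin] at Hc
  obtain ⟨M, hMx, hMb, hsys⟩ := system_zero (k := k) (ρ := ρ) d N H H0 Hc hk hN
  have hfb : ∀ ℓ b, ContinuousOn (fun y => f ℓ y b) (stdSimp (N ℓ)) := fun ℓ b =>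
    ContinuousOn.comp (t := Set.univ) (g := fun v : EuclideanSpace ℝ (Fin d) => v b)
      (by fun_prop) (hf ℓ) (fun _ _ => Set.mem_univ _)
  let FF : ∀ ℓ, Fin (ρ ℓ + 1) → EuclideanSpace ℝ (Fin (N ℓ + 1)) → ℝ :=
    fun ℓ => Fin.cons (fun _ => 1) (F ℓ)
  have hFF : ∀ ℓ u, ContinuousOn (FF ℓ u) (stdSimp (N ℓ)) := by
    intro ℓ u
    refine Fin.cases ?_ (fun u => ?_) u
    · exact continuousOn_const
    · exact hF ℓ u
  let av : ∀ ℓ : Fin (m + 1), Fin d → VV p M → ℂ := fun ℓ b x =>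
    AA ℓ 0 (fun y => f ℓ y b) x / AA (N := N ℓ) ℓ 0 (fun _ => 1) x
  have hblk0 : ∀ ℓ, blk (p := p) (e := e) k ℓ 0 = 0 := by
    intro ℓ; funext i; rcases i with i | i <;> simp [blk]
  have hav : ∀ ℓ b, Eqv 0 (av ℓ b) := by
    intro ℓ b
    have h1 := Eqv_AA (p := p) (M := M) ℓ 0 (hfb ℓ b)
    have h2 := Eqv_AA (p := p) (M := M) (N := N ℓ) ℓ 0 (F := fun _ => 1) continuousOn_const
    rw [hblk0] at h1 h2
    exact Eqv_div h1 h2 (AA_one_ne ℓ (hMb ℓ))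
  let hX : JX p k m → VV p M → ℂ := fun a => match a with
    | ⟨j, Sum.inl i⟩ => fun x => ∑ b : Fin d, zc (x (Sum.inl j)) b *
        (starRingEnd ℂ) (zc (x (Sum.inl ⟨i, i.2.trans j.2⟩)) b)
    | ⟨j, Sum.inr (Sum.inl i)⟩ => fun x => ∑ b : Fin d, zc (x (Sum.inl j)) b *
        zc (x (Sum.inl ⟨i.1, (Nat.lt_succ_iff.1 i.1.2).trans_lt j.2⟩)) b
    | ⟨j, Sum.inr (Sum.inr l)⟩ => fun x => ∑ b : Fin d, zc (x (Sum.inl j)) b *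
        (av 0 b x - av l.succ b x)
  let hB : JB p k e ρ H → VV p M → ℂ := fun a => match a with
    | ⟨ℓ, Sum.inl χ⟩ => fun x => ∑ b : Fin d, AA ℓ χ.1.1 (fun y => f ℓ y b) x * zc (x (Sum.inl χ.2)) b
    | ⟨ℓ, Sum.inr χ⟩ => fun x => AA ℓ χ.1.1 (FF ℓ χ.2) x
  obtain ⟨x, hxX, hxB⟩ := hsys hX hB (by
    rintro ⟨j, i | i | i⟩
    · exact Eqv.sum fun b _ => (Eqv_zc _ _).mul (Eqv_zc _ _).conj
    · exact Eqv.sum fun b _ => (Eqv_zc _ _).mul (Eqv_zc _ _)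
    · refine Eqv.sum fun b _ => ?_
      have := (Eqv_zc (M := M) (p := p) (Sum.inl j) b).mul ((hav 0 b).sub (hav i.succ b))
      rw [add_zero] at this
      exact this) (by
    rintro ⟨ℓ, χ | χ⟩
    · exact Eqv.sum fun b _ => (Eqv_AA ℓ _ (hfb ℓ b)).mul (Eqv_zc _ _)
    · exact Eqv_AA ℓ _ (hFF ℓ χ.2))
  let z : Fin k → Fin d → ℂ := fun i b => zc (x (Sum.inl i)) b
  let Y : ∀ ℓ, (Fin (e ℓ) → ZMod p) → Fin (N ℓ + 1) → ℝ := fun ℓ g => stair (N ℓ) (xb ℓ x) g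
  have hY0 : ∀ ℓ g s, 0 ≤ Y ℓ g s := fun ℓ g s => stair_nonneg _ _ _ _
  have hreal : ∀ ℓ u g g', homog (FF ℓ u) (Y ℓ g) = homog (FF ℓ u) (Y ℓ g') := by
    intro ℓ u g g'
    have := fourier_const (fun g => ((homog (FF ℓ u) (Y ℓ g) : ℝ) : ℂ)) (fun χ hχ => ?_) g g'
    · exact_mod_cast this
    · show AA ℓ χ (FF ℓ u) x = 0
      rcases Hcov ℓ χ hχ with h | h
      · exact hxB ⟨ℓ, Sum.inr (⟨χ, h⟩, u)⟩
      · have h1 : AA ℓ (-χ) (FF ℓ u) x = 0 := hxB ⟨ℓ, Sum.inr (⟨-χ, h⟩, u)⟩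
        rw [← neg_neg χ, AA_neg, h1, map_zero]
  have ht : ∀ ℓ g g', ∑ s, Y ℓ g s = ∑ s, Y ℓ g' s := by
    intro ℓ g g'
    have := hreal ℓ 0 g g'
    simpa [FF, homog_one] using this
  have htpos : ∀ ℓ g, 0 < ∑ s, Y ℓ g s := by
    intro ℓ g
    obtain ⟨g', s, h⟩ := stair_pos (N ℓ) (hMb ℓ) (xb ℓ x)
    rw [ht ℓ g g']
    exact Finset.sum_pos' (fun s _ => hY0 ℓ g' s) ⟨s, Finset.mem_univ _, h⟩
  let X : ∀ ℓ, (Fin (e ℓ) → ZMod p) → EuclideanSpace ℝ (Fin (N ℓ + 1)) := fun ℓ g => nrm (Y ℓ g)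
  let φ : Fin k → ∀ ℓ, (Fin (e ℓ) → ZMod p) → ℂ := fun i ℓ g =>
    ∑ b, z i b * ((homog (fun y => f ℓ y b) (Y ℓ g) : ℝ) : ℂ)
  have hφ : ∀ i ℓ g, φ i ℓ g = ((∑ s, Y ℓ g s : ℝ) : ℂ) * ∑ b, z i b * (f ℓ (X ℓ g) b : ℂ) := by
    intro i ℓ g
    simp only [φ, homog, Finset.mul_sum (Finset.univ : Finset (Fin d))]
    refine Finset.sum_congr rfl fun b _ => ?_
    push_cast
    simp only [X]
    ring
  have hφc : ∀ i ℓ g g', φ i ℓ g = φ i ℓ g' := by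
    intro i ℓ g g'
    refine fourier_const _ (fun χ hχ => ?_) g g'
    have h1 : ∑ b : Fin d, AA ℓ χ (fun y => f ℓ y b) x * zc (x (Sum.inl i)) b = 0 :=
      hxB ⟨ℓ, Sum.inl (⟨χ, hχ⟩, i)⟩
    rw [← h1]
    simp only [AA, φ, Finset.mul_sum, Finset.sum_mul]
    rw [Finset.sum_comm]
    refine Finset.sum_congr rfl fun b _ => Finset.sum_congr rfl fun g _ => ?_
    simp only [z, Y]; ring
  have hVav : ∀ i ℓ g, ∑ b, z i b * av ℓ b x = ∑ b, z i b * (f ℓ (X ℓ g) b : ℂ) := by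
    intro i ℓ g
    have htne : ((∑ s, Y ℓ g s : ℝ) : ℂ) ≠ 0 := by exact_mod_cast (htpos ℓ g).ne'
    have hcard : (Fintype.card (Fin (e ℓ) → ZMod p) : ℂ) ≠ 0 := by exact_mod_cast Fintype.card_ne_zero
    have h1 : AA (N := N ℓ) ℓ 0 (fun _ => 1) x =
        (Fintype.card (Fin (e ℓ) → ZMod p) : ℂ) * ((∑ s, Y ℓ g s : ℝ) : ℂ) := by
      have : ∀ g', psi 0 g' * ((homog (fun _ => 1) (stair (N ℓ) (xb ℓ x) g') : ℝ) : ℂ) =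
          ((∑ s, Y ℓ g s : ℝ) : ℂ) := by
        intro g'
        rw [homog_one, ← ht ℓ g' g]
        simp [psi, Y]
      rw [AA, Finset.sum_congr rfl fun g' _ => this g']
      simp
    have h2 : ∑ b, z i b * AA ℓ 0 (fun y => f ℓ y b) x =
        (Fintype.card (Fin (e ℓ) → ZMod p) : ℂ) * φ i ℓ g := by
      have : ∑ g', φ i ℓ g' = (Fintype.card (Fin (e ℓ) → ZMod p) : ℂ) * φ i ℓ g := by
        rw [Finset.sum_congr rfl fun g' _ => hφc i ℓ g' g]; simp
      rw [← this]
      simp only [AA, φ, Finset.mul_sum]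
      rw [Finset.sum_comm]
      refine Finset.sum_congr rfl fun b _ => Finset.sum_congr rfl fun g _ => ?_
      simp [psi, Y]
    simp only [av, h1, ← mul_div_assoc, ← Finset.sum_div]
    rw [h2, hφ]
    field_simp
  have hV0 : ∀ i ℓ g, ∑ b, z i b * (f ℓ (X ℓ g) b : ℂ) = ∑ b, z i b * av 0 b x := by
    intro i ℓ g
    rw [← hVav]
    refine Fin.cases rfl (fun l => ?_) ℓ
    have h1 : ∑ b : Fin d, zc (x (Sum.inl i)) b * (av 0 b x - av l.succ b x) = 0 :=
      hxX ⟨i, Sum.inr (Sum.inr l)⟩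
    simp only [mul_sub, Finset.sum_sub_distrib] at h1
    exact (sub_eq_zero.1 h1).symm
  have hsupp : ∀ ℓ g s, X ℓ g s ≠ 0 → Y ℓ g s ≠ 0 := by
    intro ℓ g s h h0
    apply h
    simp [X, nrm, h0]
  refine ⟨z, X, ?_, ?_, ?_, ?_, ?_, ?_, ?_, ?_⟩
  · intro i h0
    obtain ⟨b, hb, hne⟩ := zc_ne (x (Sum.inl i))
    exact hne (congrFun h0 ⟨b, hb.trans_lt (hMx i)⟩)
  · exact fun h2 i b => zc_im h2 _ _
  · intro i j hij
    rcases lt_or_gt_of_ne hij with h | h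
    · have h1 : ∑ b, z j b * (starRingEnd ℂ) (z i b) = 0 := hxX ⟨j, Sum.inl ⟨i, h⟩⟩
      have h2 := congrArg (starRingEnd ℂ) h1
      rw [map_sum, map_zero] at h2
      rw [← h2]
      refine Finset.sum_congr rfl fun b _ => ?_
      rw [map_mul, Complex.conj_conj, mul_comm]
    · exact hxX ⟨i, Sum.inl ⟨j, h⟩⟩
  · intro h2
    have hq : 0 < qq p - 1 := by simp [qq, h2]
    have h3 : ∀ i j : Fin k, i ≤ j → ∑ b, z j b * z i b = 0 := fun i j hij =>
      hxX ⟨j, Sum.inr (Sum.inl (⟨i, Nat.lt_succ_of_le hij⟩, ⟨0, hq⟩))⟩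
    intro i j
    rcases le_total i j with h | h
    · rw [← h3 i j h]; exact Finset.sum_congr rfl fun b _ => mul_comm _ _
    · exact h3 j i h
  · exact fun ℓ g => nrm_mem (hY0 ℓ g) (htpos ℓ g).ne'
  · exact fun ℓ g g' s h h' => stair_disjoint (hsupp ℓ g s h) (hsupp ℓ g' s h')
  · intro ℓ u g g'
    have h1 := hreal ℓ u.succ g g'
    have h2 : FF ℓ u.succ = F ℓ u := rfl
    rw [h2, homog, homog, ht ℓ g g'] at h1
    exact mul_left_cancel₀ (htpos ℓ g').ne' h1
  · intro i ℓ ℓ' g g'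
    rw [hV0, hV0]

/-! ### Constraint functions and the transversal -/

/-- The vertex set of the smallest face containing a point. -/
def supp {N : ℕ} (x : EuclideanSpace ℝ (Fin (N + 1))) : Finset (Fin (N + 1)) :=
  Finset.univ.filter fun s => x s ≠ 0

open Classical in
/-- The sum of the monomials of the nonempty non-faces of `K`. It plays the role of the distance to
`K`: on the simplex it is continuous, nonnegative, and vanishes exactly on the faces in `K`. -/
def consF {N : ℕ} (K : Set (Finset (Fin (N + 1)))) (x : EuclideanSpace ℝ (Fin (N + 1))) : ℝ :=
  ∑ T ∈ Finset.univ.filter (fun T : Finset (Fin (N + 1)) => T.Nonempty ∧ T ∉ K), ∏ i ∈ T, x i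

theorem consF_cont {N : ℕ} (K : Set (Finset (Fin (N + 1)))) : Continuous (consF K) := by
  classical
  unfold consF
  refine continuous_finsetSum _ fun T _ => continuous_finsetProd _ fun i _ => ?_
  fun_prop

theorem supp_nonempty {N : ℕ} {x : EuclideanSpace ℝ (Fin (N + 1))} (hx : x ∈ stdSimp N) :
    (supp x).Nonempty := by
  by_contra h
  rw [Finset.not_nonempty_iff_eq_empty, supp, Finset.filter_eq_empty_iff] at h
  have h1 : ∑ i, x i = 0 := Finset.sum_eq_zero fun i hi => by simpa using h hi
  rw [hx.2] at h1
  exact one_ne_zero h1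

theorem mem_face_supp {N : ℕ} {x : EuclideanSpace ℝ (Fin (N + 1))} (hx : x ∈ stdSimp N) :
    x ∈ simpFace N (supp x) := ⟨hx, fun i hi => by simpa [supp] using hi⟩

theorem consF_eq_zero_iff {N : ℕ} {K : Set (Finset (Fin (N + 1)))} (hK : IsSubcomplex N K)
    {x : EuclideanSpace ℝ (Fin (N + 1))} (hx : x ∈ stdSimp N) : consF K x = 0 ↔ supp x ∈ K := by
  classical
  constructor
  · intro h
    by_contra hn
    have h1 := (Finset.sum_eq_zero_iff_of_nonneg (fun T _ => Finset.prod_nonneg fun i _ => hx.1 i)).1 h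
      (supp x) (by simp [supp_nonempty hx, hn])
    rw [Finset.prod_eq_zero_iff] at h1
    obtain ⟨i, hi, h0⟩ := h1
    simp [supp] at hi
    exact hi h0
  · intro h
    refine Finset.sum_eq_zero fun T hT => ?_
    simp only [Finset.mem_filter, Finset.mem_univ, true_and] at hT
    by_contra hne
    rw [← ne_eq, Finset.prod_ne_zero_iff] at hne
    exact hT.2 (hK.2 _ h T (fun i hi => by simp [supp, hne i hi]) hT.1)

/-- Points with disjoint supports at which the constraint function of an unavoidable subcomplex
takes a common value have all their supports in that subcomplex: the supports are a Tverberg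
partition of a constant map, so one of them lies in the subcomplex and the common value is `0`. -/
theorem supp_mem_of_const {N d r : ℕ} {G : Type*} (eq : Fin r ≃ G)
    {K : Set (Finset (Fin (N + 1)))} (hK : IsSubcomplex N K)
    (hu : ∀ g : EuclideanSpace ℝ (Fin (N + 1)) → EuclideanSpace ℝ (Fin d),
        ContinuousOn g (stdSimp N) → TverbergUnavoidable g r K)
    (X : G → EuclideanSpace ℝ (Fin (N + 1))) (hX : ∀ g, X g ∈ stdSimp N)
    (hd : ∀ g g', g ≠ g' → Disjoint (supp (X g)) (supp (X g')))
    (hc : ∀ g g', consF K (X g) = consF K (X g')) (g : G) : supp (X g) ∈ K := by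
  obtain ⟨j, hj⟩ := hu (fun _ => 0) continuousOn_const (fun j => supp (X (eq j)))
    ⟨fun j => supp_nonempty (hX _), fun j j' h => hd _ _ (eq.injective.ne h),
      ⟨0, Set.mem_iInter.2 fun j => ⟨X (eq j), mem_face_supp (hX _), rfl⟩⟩⟩
  rw [← consF_eq_zero_iff hK (hX _)] at hj ⊢
  rw [← hj]
  exact hc _ _

/-- If all points `f ℓ (X ℓ g)` lie on `L`, the supports of the points `X ℓ g` are the required
faces. -/
theorem faces_of_points {m d p : ℕ} [Fact p.Prime] {e c N : Fin (m + 1) → ℕ}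
    {K : ∀ ℓ : Fin (m + 1), Fin (c ℓ + 1) → Set (Finset (Fin (N ℓ + 1)))}
    (hKzero : ∀ ℓ, K ℓ 0 = {S : Finset (Fin (N ℓ + 1)) | S.Nonempty})
    (hKsub : ∀ ℓ j, IsSubcomplex (N ℓ) (K ℓ j))
    (hKunavoid : ∀ ℓ j,
      ∀ g : EuclideanSpace ℝ (Fin (N ℓ + 1)) → EuclideanSpace ℝ (Fin d),
        ContinuousOn g (stdSimp (N ℓ)) → TverbergUnavoidable g (p ^ e ℓ) (K ℓ j))
    {f : ∀ ℓ : Fin (m + 1), EuclideanSpace ℝ (Fin (N ℓ + 1)) → EuclideanSpace ℝ (Fin d)}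
    (X : ∀ ℓ, (Fin (e ℓ) → ZMod p) → EuclideanSpace ℝ (Fin (N ℓ + 1)))
    (hX : ∀ ℓ g, X ℓ g ∈ stdSimp (N ℓ))
    (hd : ∀ ℓ g g' s, X ℓ g s ≠ 0 → X ℓ g' s ≠ 0 → g = g')
    (hc : ∀ ℓ (u : Fin (c ℓ)) g g', consF (K ℓ u.succ) (X ℓ g) = consF (K ℓ u.succ) (X ℓ g'))
    (L : AffineSubspace ℝ (EuclideanSpace ℝ (Fin d)))
    (hL : ∀ ℓ g, f ℓ (X ℓ g) ∈ L) (ℓ : Fin (m + 1)) :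
    ∃ σ : Fin (p ^ e ℓ) → Finset (Fin (N ℓ + 1)),
        (∀ j, (σ j).Nonempty) ∧
        (∀ j j', j ≠ j' → Disjoint (σ j) (σ j')) ∧
        (∀ j, ∀ i : Fin (c ℓ + 1), σ j ∈ K ℓ i) ∧
        (∀ j, (f ℓ '' simpFace (N ℓ) (σ j) ∩
          (L : Set (EuclideanSpace ℝ (Fin d)))).Nonempty) := by
  have hcard : Fintype.card (Fin (e ℓ) → ZMod p) = p ^ e ℓ := by simp [ZMod.card]
  let eq : Fin (p ^ e ℓ) ≃ (Fin (e ℓ) → ZMod p) := (Fintype.equivFinOfCardEq hcard).symm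
  have hdis : ∀ g g', g ≠ g' → Disjoint (supp (X ℓ g)) (supp (X ℓ g')) := by
    intro g g' h
    rw [Finset.disjoint_left]
    intro s hs hs'
    simp only [supp, Finset.mem_filter, Finset.mem_univ, true_and] at hs hs'
    exact h (hd ℓ g g' s hs hs')
  refine ⟨fun j => supp (X ℓ (eq j)), fun j => supp_nonempty (hX _ _),
    fun j j' h => hdis _ _ (eq.injective.ne h), fun j i => ?_, fun j =>
    ⟨f ℓ (X ℓ (eq j)), ⟨_, mem_face_supp (hX _ _), rfl⟩, hL _ _⟩⟩
  refine Fin.cases ?_ (fun u => ?_) i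
  · rw [hKzero]; exact supp_nonempty (hX _ _)
  · exact supp_mem_of_const eq (hKsub ℓ _) (hKunavoid ℓ _) (X ℓ) (hX ℓ) hdis (hc ℓ u) _

/-- Real vectors dual to the complex functionals `z i`: the real parts and, for odd `p`, also the
imaginary parts. -/
def dualVec {k d : ℕ} (q : ℕ) (z : Fin k → Fin d → ℂ) (a : Fin k × Fin q) :
    EuclideanSpace ℝ (Fin d) :=
  WithLp.toLp 2 fun b => if (a.2 : ℕ) = 0 then (z a.1 b).re else (z a.1 b).im

theorem dualVec_orth {k d p : ℕ} {z : Fin k → Fin d → ℂ} (h0 : ∀ i, z i ≠ 0)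
    (h2 : p = 2 → ∀ i b, (z i b).im = 0)
    (hc : ∀ i j, i ≠ j → ∑ b, z i b * (starRingEnd ℂ) (z j b) = 0)
    (hz : p ≠ 2 → ∀ i j, ∑ b, z i b * z j b = 0) :
    (∀ a, dualVec (qq p) z a ≠ 0) ∧
      ∀ a a', a ≠ a' → inner ℝ (dualVec (qq p) z a) (dualVec (qq p) z a') = 0 := by
  have hin : ∀ a a' : Fin k × Fin (qq p), inner ℝ (dualVec (qq p) z a) (dualVec (qq p) z a') =
      ∑ b, (if (a.2 : ℕ) = 0 then (z a.1 b).re else (z a.1 b).im) *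
        (if (a'.2 : ℕ) = 0 then (z a'.1 b).re else (z a'.1 b).im) := by
    intro a a'
    simp only [PiLp.inner_apply, dualVec, RCLike.inner_apply, conj_trivial]
    exact Finset.sum_congr rfl fun b _ => mul_comm _ _
  -- real and imaginary parts of the two families of orthogonality relations
  have c1 : ∀ i j, i ≠ j → (∑ b, (z i b).re * (z j b).re) + ∑ b, (z i b).im * (z j b).im = 0 := by
    intro i j h
    have := congrArg Complex.re (hc i j h)
    simpa [Complex.re_sum, Finset.sum_add_distrib] using this
  have c2 : ∀ i j, i ≠ j → (∑ b, (z i b).im * (z j b).re) - ∑ b, (z i b).re * (z j b).im = 0 := by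
    intro i j h
    have := congrArg Complex.im (hc i j h)
    simp only [Complex.im_sum, Complex.mul_im, Complex.conj_re, Complex.conj_im,
      Finset.sum_add_distrib, Complex.zero_im, mul_neg, Finset.sum_neg_distrib] at this
    linarith
  have s1 : p ≠ 2 → ∀ i j,
      (∑ b, (z i b).re * (z j b).re) - ∑ b, (z i b).im * (z j b).im = 0 := by
    intro h i j
    have := congrArg Complex.re (hz h i j)
    simpa [Complex.re_sum, Finset.sum_sub_distrib] using this
  have s2 : p ≠ 2 → ∀ i j,
      (∑ b, (z i b).re * (z j b).im) + ∑ b, (z i b).im * (z j b).re = 0 := by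
    intro h i j
    have := congrArg Complex.im (hz h i j)
    simpa [Complex.im_sum, Finset.sum_add_distrib] using this
  have hq2 : p = 2 → ∀ u : Fin (qq p), (u : ℕ) = 0 := by
    intro h u
    have := u.2
    simp only [qq, h, if_true] at this
    omega
  have hq : ∀ u : Fin (qq p), (u : ℕ) = 0 ∨ (u : ℕ) = 1 := by
    intro u
    have := u.2
    unfold qq at this
    split_ifs at this <;> omega
  constructor
  · intro a ha
    have hn := hin a a
    rw [ha, inner_zero_left] at hn
    -- both squared norms vanish, as they agree when `p` is odd
    have hre : ∑ b, (z a.1 b).re * (z a.1 b).re = 0 ∧ ∑ b, (z a.1 b).im * (z a.1 b).im = 0 := by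
      by_cases hp : p = 2
      · simp only [hq2 hp, if_true] at hn
        exact ⟨hn.symm, by simp [h2 hp]⟩
      · have := s1 hp a.1 a.1
        rcases hq a.2 with h | h <;> simp only [h, if_true, one_ne_zero, if_false] at hn
        · constructor <;> linarith
        · constructor <;> linarith
    apply h0 a.1
    funext b
    have h3 := (Finset.sum_eq_zero_iff_of_nonneg fun b _ => mul_self_nonneg _).1 hre.1 b
      (Finset.mem_univ _)
    have h4 := (Finset.sum_eq_zero_iff_of_nonneg fun b _ => mul_self_nonneg _).1 hre.2 b
      (Finset.mem_univ _)
    exact Complex.ext (mul_self_eq_zero.1 h3) (mul_self_eq_zero.1 h4)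
  · rintro ⟨i, u⟩ ⟨j, v⟩ hne
    rw [hin]
    by_cases hp : p = 2
    · have hij : i ≠ j := by
        rintro rfl
        exact hne (by rw [Fin.ext ((hq2 hp u).trans (hq2 hp v).symm)])
      have := c1 i j hij
      simp only [h2 hp, mul_zero, Finset.sum_const_zero, add_zero] at this
      simpa [hq2 hp] using this
    · have e1 := s1 hp i j
      have e2 := s2 hp i j
      by_cases hij : i = j
      · subst hij
        have huv : u ≠ v := fun h => hne (by rw [h])
        have e3 : ∑ b, (z i b).re * (z i b).im = ∑ b, (z i b).im * (z i b).re :=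
          Finset.sum_congr rfl fun b _ => mul_comm _ _
        rcases hq u with h | h <;> rcases hq v with h' | h' <;>
          simp only [h, h', if_true, one_ne_zero, if_false]
        · exact absurd (Fin.ext (h.trans h'.symm)) huv
        · linarith
        · linarith
        · exact absurd (Fin.ext (h.trans h'.symm)) huv
      · have e3 := c1 i j hij
        have e4 := c2 i j hij
        rcases hq u with h | h <;> rcases hq v with h' | h' <;>
          simp only [h, h', if_true, one_ne_zero, if_false] <;> linarith

/-- A point agreeing with `y₀` on all functionals `z i` lies in the affine subspace through `y₀`
orthogonal to all the vectors `dualVec`. -/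
theorem mem_transversal {k d q : ℕ} {z : Fin k → Fin d → ℂ} {y y₀ : EuclideanSpace ℝ (Fin d)}
    (h : ∀ i, ∑ b, z i b * (y b : ℂ) = ∑ b, z i b * (y₀ b : ℂ)) :
    y ∈ AffineSubspace.mk' y₀ (Submodule.span ℝ (Set.range (dualVec q z)))ᗮ := by
  rw [AffineSubspace.mem_mk', vsub_eq_sub, Submodule.mem_orthogonal]
  intro w hw
  refine Submodule.span_induction ?_ (by simp) (fun a b _ _ ha hb => by rw [inner_add_left, ha, hb, add_zero])
    (fun t a _ ha => by rw [inner_smul_left, ha, mul_zero]) hw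
  rintro _ ⟨⟨i, u⟩, rfl⟩
  have hi := h i
  have hre := congrArg Complex.re hi
  have him := congrArg Complex.im hi
  simp only [Complex.re_sum, Complex.im_sum, Complex.re_mul_ofReal, Complex.im_mul_ofReal] at hre him
  simp only [PiLp.inner_apply, dualVec, RCLike.inner_apply, conj_trivial, PiLp.sub_apply, sub_mul,
    Finset.sum_sub_distrib]
  rw [sub_eq_zero]
  split_ifs
  · simpa only [mul_comm] using hre
  · simpa only [mul_comm] using him

end TT

/-- A constraint topological transversal Tverberg theorem. -/
theorem constraint_topological_transversal_tverberg
    (m d p : ℕ) (hp : p.Prime) (hmd : m < d)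
    (e : Fin (m + 1) → ℕ) (c : Fin (m + 1) → ℕ)
    (heven : Even (p * (d - m)) ∨ m = 0)
    (N : Fin (m + 1) → ℕ) (hN : ∀ ℓ, N ℓ = (p ^ e ℓ - 1) * (d + 1 + c ℓ - m))
    (K : ∀ ℓ : Fin (m + 1), Fin (c ℓ + 1) → Set (Finset (Fin (N ℓ + 1))))
    (hKzero : ∀ ℓ, K ℓ 0 = {S : Finset (Fin (N ℓ + 1)) | S.Nonempty})
    (hKsub : ∀ ℓ j, IsSubcomplex (N ℓ) (K ℓ j))
    (hKunavoid : ∀ ℓ j,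
      ∀ g : EuclideanSpace ℝ (Fin (N ℓ + 1)) → EuclideanSpace ℝ (Fin d),
        ContinuousOn g (stdSimp (N ℓ)) → TverbergUnavoidable g (p ^ e ℓ) (K ℓ j))
    (f : ∀ ℓ : Fin (m + 1), EuclideanSpace ℝ (Fin (N ℓ + 1)) → EuclideanSpace ℝ (Fin d))
    (hf : ∀ ℓ, ContinuousOn (f ℓ) (stdSimp (N ℓ))) :
    ∃ L : AffineSubspace ℝ (EuclideanSpace ℝ (Fin d)),
      (L : Set (EuclideanSpace ℝ (Fin d))).Nonempty ∧
      Module.finrank ℝ L.direction = m ∧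
      ∀ ℓ : Fin (m + 1), ∃ σ : Fin (p ^ e ℓ) → Finset (Fin (N ℓ + 1)),
        (∀ j, (σ j).Nonempty) ∧
        (∀ j j', j ≠ j' → Disjoint (σ j) (σ j')) ∧
        (∀ j, ∀ i : Fin (c ℓ + 1), σ j ∈ K ℓ i) ∧
        (∀ j, (f ℓ '' simpFace (N ℓ) (σ j) ∩ (L : Set (EuclideanSpace ℝ (Fin d)))).Nonempty) := by
  have : Fact p.Prime := ⟨hp⟩
  rcases Nat.eq_zero_or_pos m with rfl | hm
  · -- no directions are needed: the coordinates of `f` are treated as further real functions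
    have hfb : ∀ ℓ b, ContinuousOn (fun y => f ℓ y b) (stdSimp (N ℓ)) := fun ℓ b =>
      ContinuousOn.comp (t := Set.univ) (g := fun v : EuclideanSpace ℝ (Fin d) => v b)
        (by fun_prop) (hf ℓ) (fun _ _ => Set.mem_univ _)
    let F : ∀ ℓ, Fin (d + c ℓ) → EuclideanSpace ℝ (Fin (N ℓ + 1)) → ℝ := fun ℓ =>
      Fin.append (fun b y => f ℓ y b) (fun u => TT.consF (K ℓ u.succ))
    obtain ⟨-, X, -, -, -, -, hX, hd, hc, -⟩ := TT.core p 0 0 d e (fun ℓ => d + c ℓ) N (by omega)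
      (fun ℓ => by rw [hN ℓ]; exact Nat.mul_le_mul_left _ (by omega)) f hf F (by
        intro ℓ u
        refine Fin.addCases (fun b => ?_) (fun u => ?_) u
        · simpa [F] using hfb ℓ b
        · simpa [F] using (TT.consF_cont (K ℓ u.succ)).continuousOn)
    refine ⟨AffineSubspace.mk' (f 0 (X 0 0)) ⊥, ⟨_, AffineSubspace.self_mem_mk' _ _⟩, by simp,
      TT.faces_of_points hKzero hKsub hKunavoid X hX hd (fun ℓ u g g' => ?_) _ (fun ℓ g => ?_)⟩
    · simpa [F] using hc ℓ (Fin.natAdd d u) g g'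
    · obtain rfl : ℓ = 0 := Fin.ext (by have := ℓ.2; omega)
      have : f 0 (X 0 g) = f 0 (X 0 0) := by
        ext b
        simpa [F] using hc 0 (Fin.castAdd (c 0) b) g 0
      rw [this]
      exact AffineSubspace.self_mem_mk' _ _
  · obtain ⟨k, hk⟩ : ∃ k, d - m = TT.qq p * k := by
      rcases heven with h | h
      · by_cases h2 : p = 2
        · exact ⟨d - m, by simp [TT.qq, h2]⟩
        · have hodd : ¬ Even p := fun h' => h2 ((Nat.Prime.even_iff hp).1 h')
          obtain ⟨k, hk⟩ := ((Nat.even_mul.1 h).resolve_left hodd).two_dvd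
          exact ⟨k, by simpa [TT.qq, h2] using hk⟩
      · omega
    obtain ⟨z, X, h0, h2, hzc, hzz, hX, hd, hc, hL⟩ := TT.core p k m d e c N (by omega)
      (fun ℓ => by rw [hN ℓ]; exact Nat.mul_le_mul_left _ (by omega)) f hf
      (fun ℓ u => TT.consF (K ℓ u.succ)) (fun ℓ u => (TT.consF_cont _).continuousOn)
    obtain ⟨hne, horth⟩ := TT.dualVec_orth h0 h2 hzc hzz
    have hli : LinearIndependent ℝ (TT.dualVec (TT.qq p) z) :=
      linearIndependent_of_ne_zero_of_inner_eq_zero hne fun a a' h => horth a a' h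
    have hfin := finrank_span_eq_card hli
    refine ⟨AffineSubspace.mk' (f 0 (X 0 0)) (Submodule.span ℝ (Set.range (TT.dualVec (TT.qq p) z)))ᗮ,
      ⟨_, AffineSubspace.self_mem_mk' _ _⟩, ?_,
      TT.faces_of_points hKzero hKsub hKunavoid X hX hd hc _
        (fun ℓ g => TT.mem_transversal fun i => hL i ℓ 0 g 0)⟩
    rw [AffineSubspace.direction_mk']
    have hsum := Submodule.finrank_add_finrank_orthogonal
      (Submodule.span ℝ (Set.range (TT.dualVec (TT.qq p) z)))
    rw [hfin, finrank_euclideanSpace_fin] at hsum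
    simp only [Fintype.card_prod, Fintype.card_fin] at hsum
    rw [mul_comm, ← hk] at hsum
    omega
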